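/- arXiv:0707.1108 — 5 statements merged into one kernel-verified Lean document; each statement's English description precedes it below -/
import Mathlib

section
/- Let q be a prime power, let k, n > 0 be integers with k dividing q−1 and gcd(n, k) = 1, put r := (q−1)/k, and fix a map ν : μ_r → F_q^* with ν(ζ)^k = ζ for every ζ ∈ μ_r. For a ∈ F_q, the polynomial f(x) = x^n (x^k + a) permutes F_q if and only if there exists a permutation π of μ_r such that for each ζ ∈ μ_r there is y_ζ ∈ F_q^* with ζ + a = y_ζ^r · ν(π(ζ)/ζ^n). Moreover, for any fixed a ∈ F_q there is at most one such permutation π. -/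
/-!
Write `r = (q - 1) / k` and `g(ζ) = ζ ^ n * (ζ + a) ^ k`, so that `f(x) ^ k = g(x ^ k)` for
`f(x) = x ^ n * (x ^ k + a)`.

Since `F^*` is cyclic of order `k * r`, the `k`-th roots of unity are exactly the nonzero
`r`-th powers (`exists_pow_eq_of_pow_eq_one`). Hence the condition on `π` at `ζ` just says
`π ζ = g(ζ)` (`root_condition_iff`): two nonzero elements with the same `k`-th power differ by a
nonzero `r`-th power. This gives the uniqueness of `π`, and `π` exists if and only if `g` permutes
`μ_r`.

As `x ↦ x ^ k` maps `F^*` onto `μ_r`, a bijection `f` makes `g` a surjective self-map of `μ_r`.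
Conversely, if `g` permutes `μ_r` then `ζ + a ≠ 0` on `μ_r`, so `0` is the only zero of `f`, and
`f(x) = f(y)` with `x, y ≠ 0` forces `x ^ k = y ^ k`, then `x ^ n = y ^ n`, and finally `x = y`
because `gcd(n, k) = 1`.
-/

theorem exists_pow_eq_of_pow_eq_one {F : Type} [Field F] [Fintype F] {k r : ℕ} (hk : 0 < k)
    (hkr : k * r = Fintype.card F - 1) {u : F} (hu : u ^ k = 1) :
    ∃ y : F, y ≠ 0 ∧ u = y ^ r := by
  have hu0 : u ≠ 0 := by
    rintro rfl
    simp [zero_pow hk.ne'] at hu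
  obtain ⟨g, hg⟩ := IsCyclic.exists_generator (α := Fˣ)
  obtain ⟨m, hm⟩ := (mem_powers_iff_mem_zpowers).2 (hg (Units.mk0 u hu0))
  have hm' : g ^ m = Units.mk0 u hu0 := hm
  have h1 : g ^ (k * m) = 1 := by
    rw [mul_comm, pow_mul, hm']
    ext
    simpa using hu
  have h2 : k * r ∣ k * m := by
    rw [hkr, ← Nat.card_eq_fintype_card, ← Nat.card_units, ← orderOf_eq_card_of_forall_mem_zpowers hg]
    exact orderOf_dvd_of_pow_eq_one h1
  obtain ⟨c, rfl⟩ := Nat.dvd_of_mul_dvd_mul_left hk h2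
  refine ⟨(g ^ c : Fˣ), Units.ne_zero _, ?_⟩
  have h3 := congrArg Units.val hm'
  rw [mul_comm, pow_mul] at h3
  simpa using h3.symm

/-- The condition imposed on `w = π ζ` amounts to `w = ζ ^ n * (ζ + a) ^ k`. -/
theorem root_condition_iff {F : Type} [Field F] [Fintype F] {k r : ℕ} (n : ℕ) (hk : 0 < k)
    (hr : 0 < r) (hkr : k * r = Fintype.card F - 1) {ν : F → F}
    (hν : ∀ ζ : F, ζ ^ r = 1 → ν ζ ≠ 0 ∧ (ν ζ) ^ k = ζ) (a : F) {z w : F}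
    (hz : z ^ r = 1) (hw : w ^ r = 1) :
    (∃ y : F, y ≠ 0 ∧ z + a = y ^ r * ν (w / z ^ n)) ↔ w = z ^ n * (z + a) ^ k := by
  have hz0 : z ≠ 0 := by
    rintro rfl
    simp [zero_pow hr.ne'] at hz
  have hv : (w / z ^ n) ^ r = 1 := by
    rw [div_pow, hw, ← pow_mul, mul_comm, pow_mul, hz, one_pow, div_one]
  obtain ⟨h0, h1⟩ := hν _ hv
  constructor
  · rintro ⟨y, hy, h⟩
    rw [h, mul_pow, h1, ← pow_mul, mul_comm r k, hkr, FiniteField.pow_card_sub_one_eq_one y hy,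
      one_mul]
    field_simp
  · intro h
    have h2 : (z + a) ^ k = w / z ^ n := by
      rw [h]
      field_simp
    have hw0 : w / z ^ n ≠ 0 := by
      intro h3
      rw [h3, zero_pow hr.ne'] at hv
      exact zero_ne_one hv
    obtain ⟨y, hy, h3⟩ := exists_pow_eq_of_pow_eq_one hk hkr
      (u := (z + a) / ν (w / z ^ n)) (by rw [div_pow, h1, h2, div_self hw0])
    exact ⟨y, hy, by rw [← h3, div_mul_cancel₀ _ h0]⟩


/-- Let `k ∣ q-1`, `gcd(n, k) = 1`, `r := (q-1)/k`, and let `ν` be a map assigning to each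
`r`-th root of unity `ζ` a nonzero `k`-th root of `ζ`. For `a ∈ F_q`, the polynomial
`x^n (x^k + a)` permutes `F_q` if and only if there is a permutation `π` of `μ_r` such that
for each `ζ ∈ μ_r` there is `y_ζ ∈ F_q^*` with `ζ + a = y_ζ^r · ν(π(ζ)/ζ^n)`.
Moreover, for fixed `a` there is at most one such permutation `π`. -/
theorem permutation_binomial_iff_perm_with_roots (F : Type) [Field F] [Fintype F]
    (k n : ℕ) (hk : 0 < k) (hn : 0 < n) (hkdvd : k ∣ Fintype.card F - 1)
    (hgcd : Nat.gcd n k = 1) (ν : F → F)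
    (hν : ∀ ζ : F, ζ ^ ((Fintype.card F - 1) / k) = 1 → ν ζ ≠ 0 ∧ (ν ζ) ^ k = ζ)
    (a : F) :
    (Function.Bijective (fun x : F => x ^ n * (x ^ k + a)) ↔
      ∃ π : Equiv.Perm {x : F // x ^ ((Fintype.card F - 1) / k) = 1},
        ∀ ζ : {x : F // x ^ ((Fintype.card F - 1) / k) = 1},
          ∃ y : F, y ≠ 0 ∧
            (ζ : F) + a = y ^ ((Fintype.card F - 1) / k) * ν ((π ζ : F) / (ζ : F) ^ n)) ∧
    (∀ π₁ π₂ : Equiv.Perm {x : F // x ^ ((Fintype.card F - 1) / k) = 1},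
      (∀ ζ : {x : F // x ^ ((Fintype.card F - 1) / k) = 1},
        ∃ y : F, y ≠ 0 ∧
          (ζ : F) + a = y ^ ((Fintype.card F - 1) / k) * ν ((π₁ ζ : F) / (ζ : F) ^ n)) →
      (∀ ζ : {x : F // x ^ ((Fintype.card F - 1) / k) = 1},
        ∃ y : F, y ≠ 0 ∧
          (ζ : F) + a = y ^ ((Fintype.card F - 1) / k) * ν ((π₂ ζ : F) / (ζ : F) ^ n)) →
      π₁ = π₂) := by
  have hkr : k * ((Fintype.card F - 1) / k) = Fintype.card F - 1 := Nat.mul_div_cancel' hkdvd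
  have hN : 0 < Fintype.card F - 1 := Nat.sub_pos_of_lt Fintype.one_lt_card
  generalize (Fintype.card F - 1) / k = r at *
  have hr : 0 < r := by
    rcases Nat.eq_zero_or_pos r with rfl | h
    · omega
    · exact h
  have key : ∀ (π : Equiv.Perm {x : F // x ^ r = 1}) (ζ : {x : F // x ^ r = 1}),
      (∃ y : F, y ≠ 0 ∧ (ζ : F) + a = y ^ r * ν ((π ζ : F) / (ζ : F) ^ n)) ↔
        (π ζ : F) = (ζ : F) ^ n * ((ζ : F) + a) ^ k :=
    fun π ζ => root_condition_iff n hk hr hkr hν a ζ.2 (π ζ).2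
  simp only [key]
  have ne0 : ∀ {z : F}, z ^ r = 1 → z ≠ 0 := by
    rintro z hz rfl
    simp [zero_pow hr.ne'] at hz
  have hpow : ∀ x : F, x ≠ 0 → (x ^ k) ^ r = 1 := fun x hx => by
    rw [← pow_mul, hkr, FiniteField.pow_card_sub_one_eq_one x hx]
  have hfg : ∀ x : F, (x ^ n * (x ^ k + a)) ^ k = (x ^ k) ^ n * (x ^ k + a) ^ k := fun x => by
    rw [mul_pow, ← pow_mul, ← pow_mul, mul_comm n k]
  refine ⟨⟨fun hf => ?_, ?_⟩, fun π₁ π₂ h₁ h₂ => ?_⟩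
  · have hf0 : ∀ x : F, x ≠ 0 → x ^ n * (x ^ k + a) ≠ 0 := by
      intro x hx h
      exact hx (hf.1 (by simpa [zero_pow hn.ne'] using h))
    have hmem : ∀ ζ : {x : F // x ^ r = 1}, ((ζ : F) ^ n * ((ζ : F) + a) ^ k) ^ r = 1 := by
      intro ζ
      obtain ⟨h0, h1⟩ := hν ζ ζ.2
      have h2 := hpow _ (hf0 _ h0)
      rwa [hfg, h1] at h2
    let g : {x : F // x ^ r = 1} → {x : F // x ^ r = 1} := fun ζ => ⟨_, hmem ζ⟩
    have hg : Function.Surjective g := by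
      rintro ⟨w, hw⟩
      obtain ⟨h0, h1⟩ := hν w hw
      obtain ⟨x, hx⟩ := hf.2 (ν w)
      have hx' : x ^ n * (x ^ k + a) = ν w := hx
      have hx0 : x ≠ 0 := by
        rintro rfl
        rw [zero_pow hn.ne', zero_mul] at hx'
        exact h0 hx'.symm
      refine ⟨⟨x ^ k, hpow x hx0⟩, Subtype.ext ?_⟩
      change (x ^ k) ^ n * (x ^ k + a) ^ k = w
      rw [← hfg, hx', h1]
    exact ⟨Equiv.ofBijective g (Finite.injective_iff_bijective.1
      (Finite.injective_iff_surjective.2 hg)), fun ζ => rfl⟩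
  · rintro ⟨π, hπ⟩
    have hadd : ∀ x : F, x ≠ 0 → x ^ k + a ≠ 0 := by
      intro x hx h
      have h1 := hπ ⟨x ^ k, hpow x hx⟩
      simp only [h, zero_pow hk.ne', mul_zero] at h1
      exact ne0 (π _).2 h1
    have hf0 : ∀ x : F, x ^ n * (x ^ k + a) = 0 → x = 0 := by
      intro x h
      by_contra hx
      exact mul_ne_zero (pow_ne_zero n hx) (hadd x hx) h
    refine Finite.injective_iff_bijective.1 fun x y hxy => ?_
    have hxy' : x ^ n * (x ^ k + a) = y ^ n * (y ^ k + a) := hxy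
    by_cases hx : x = 0
    · rw [hx, zero_pow hn.ne', zero_mul] at hxy'
      rw [hx, hf0 y hxy'.symm]
    by_cases hy : y = 0
    · rw [hy, zero_pow hn.ne', zero_mul] at hxy'
      exact absurd (hf0 x hxy') hx
    have hπxy : π ⟨x ^ k, hpow x hx⟩ = π ⟨y ^ k, hpow y hy⟩ := by
      apply Subtype.ext
      rw [hπ, hπ]
      change (x ^ k) ^ n * (x ^ k + a) ^ k = (y ^ k) ^ n * (y ^ k + a) ^ k
      rw [← hfg, ← hfg, hxy']
    have hkk : x ^ k = y ^ k := congrArg Subtype.val (π.injective hπxy)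
    rw [hkk] at hxy'
    have hnn : x ^ n = y ^ n := mul_right_cancel₀ (hadd y hy) hxy'
    have h1 : (x / y) ^ Nat.gcd n k = 1 := pow_gcd_eq_one.2
      ⟨by rw [div_pow, hnn, div_self (pow_ne_zero _ hy)],
        by rw [div_pow, hkk, div_self (pow_ne_zero _ hy)]⟩
    rw [hgcd, pow_one] at h1
    exact (div_eq_one_iff_eq hy).1 h1
  · exact Equiv.ext fun ζ => Subtype.ext ((h₁ ζ).trans (h₂ ζ).symm)
end

section
/- Let q be a prime power, let k, n > 0 be integers with k dividing q−1 and gcd(n, k) = 1, put r := (q−1)/k, and let a ∈ F_q. Then the polynomial x^n (x^k + a) permutes F_q if and only if the polynomial g(x) = x^n (x + a)^k maps the set μ_r of k-th powers in F_q^* bijectively onto itself. -/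
/-!
Write `f x = x ^ n * (x ^ k + a)` and `g x = x ^ n * (x + a) ^ k`. Everything rests on the identity
`f y ^ k = g (y ^ k)`: the power map `y ↦ y ^ k`, from the nonzero elements onto the nonzero `k`-th
powers, intertwines `f` with `g`. If `f` is bijective, then `g` is surjective on the finite set of
`k`-th powers, hence bijective. If `g` is bijective there, then `f` does not vanish off `0`, and
`f x = f y` forces `x ^ k = y ^ k`, so `x ^ n = y ^ n` after cancelling `x ^ k + a`; since
`gcd(n, k) = 1`, this gives `x = y`.
-/

/-- Let `k ∣ q-1`, `gcd(n, k) = 1`, `r := (q-1)/k`, and `a ∈ F_q`. Then `x^n (x^k + a)`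
permutes `F_q` if and only if `g(x) = x^n (x + a)^k` maps the set `μ_r` of `k`-th powers
in `F_q^*` bijectively onto itself. -/
theorem permutation_binomial_iff_bijOn_kth_powers (F : Type) [Field F] [Fintype F]
    (k n : ℕ) (hk : 0 < k) (hn : 0 < n) (hkdvd : k ∣ Fintype.card F - 1)
    (hgcd : Nat.gcd n k = 1) (a : F) :
    Function.Bijective (fun x : F => x ^ n * (x ^ k + a)) ↔
      Set.BijOn (fun x : F => x ^ n * (x + a) ^ k)
        {x : F | ∃ y : F, y ≠ 0 ∧ y ^ k = x} {x : F | ∃ y : F, y ≠ 0 ∧ y ^ k = x} := by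
  have key : ∀ y : F, (y ^ n * (y ^ k + a)) ^ k = (y ^ k) ^ n * (y ^ k + a) ^ k := by
    intro y
    rw [mul_pow, pow_right_comm]
  have f_zero : (0 : F) ^ n * (0 ^ k + a) = 0 := by
    rw [zero_pow hn.ne', zero_mul]
  constructor
  · intro hf
    have ne_zero : ∀ y : F, y ≠ 0 → y ^ n * (y ^ k + a) ≠ 0 := fun y hy h =>
      hy (hf.1 (h.trans f_zero.symm))
    refine ((Set.toFinite _).surjOn_iff_bijOn_of_mapsTo ?_).1 ?_
    · rintro _ ⟨y, hy, rfl⟩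
      exact ⟨_, ne_zero y hy, key y⟩
    · rintro _ ⟨w, hw, rfl⟩
      obtain ⟨y, rfl⟩ := hf.2 w
      refine ⟨y ^ k, ⟨y, ?_, rfl⟩, (key y).symm⟩
      rintro rfl
      exact hw f_zero
  · intro hg
    have ne_zero : ∀ y : F, y ≠ 0 → y ^ n * (y ^ k + a) ≠ 0 := by
      intro y hy h
      obtain ⟨z, hz, hzk⟩ := hg.mapsTo ⟨y, hy, rfl⟩
      have hzero : z ^ k = 0 := by
        rw [hzk]
        change (y ^ k) ^ n * (y ^ k + a) ^ k = 0
        rw [← key, h, zero_pow hk.ne']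
      exact pow_ne_zero k hz hzero
    refine Finite.injective_iff_bijective.1 fun x y hxy => ?_
    change x ^ n * (x ^ k + a) = y ^ n * (y ^ k + a) at hxy
    by_cases hx : x = 0
    · by_contra hne
      have hy : y ≠ 0 := fun hy => hne (hx.trans hy.symm)
      rw [hx, f_zero] at hxy
      exact ne_zero y hy hxy.symm
    · have hy : y ≠ 0 := by
        rintro rfl
        exact ne_zero x hx (hxy.trans f_zero)
      have hpk : x ^ k = y ^ k := by
        refine hg.injOn ⟨x, hx, rfl⟩ ⟨y, hy, rfl⟩ ?_
        change (x ^ k) ^ n * (x ^ k + a) ^ k = (y ^ k) ^ n * (y ^ k + a) ^ k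
        rw [← key, ← key, hxy]
      have hpn : x ^ n = y ^ n := by
        rw [hpk] at hxy
        exact mul_right_cancel₀ (right_ne_zero_of_mul (ne_zero y hy)) hxy
      have h1 : (x / y) ^ Nat.gcd n k = 1 := by
        refine pow_gcd_eq_one.2 ⟨?_, ?_⟩
        · rw [div_pow, hpn, div_self (pow_ne_zero n hy)]
        · rw [div_pow, hpk, div_self (pow_ne_zero k hy)]
      rw [hgcd, pow_one] at h1
      exact (div_eq_one_iff_eq hy).1 h1
end

section
/- Let q > 2 be a prime power, let n, k > 0 be integers with gcd(n, k, q−1) = 1, and put r := (q−1)/gcd(k, q−1). If q > r^{2r+2}, then there exists a nonzero element a of F_q such that x^n (x^k + a) permutes F_q. -/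
/-!
Write `q` for the order of `F`, `s = gcd(k, q - 1)`, `q - 1 = r s`, `e = k / s`, and let `H` be the
group of `s`-th powers in `Fˣ`, which is cyclic of order `r`. Taking `s`-th powers shows that
`x ^ n * (x ^ k + a)` permutes `F` as soon as `a + z ^ e ≠ 0` on `H` and
`z ↦ z ^ n * (z ^ e + a) ^ s` is injective on `H`: the value determines `x ^ s`, hence `x ^ k` and
then `x ^ n`, and `gcd(n, s) = 1`. Put `a = (1 - b) / b`, so that
`b * (a + z ^ e) = 1 + (z ^ e - 1) * b`. Up to the constant `b ^ s` the map on `H` becomes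
`z ↦ z ^ n * t z`, where `t 1 = 1` and `t z = (1 + d z * b) ^ s` for `z ≠ 1`, with `d z = z ^ e - 1`;
these `d z` are nonzero and distinct because `gcd(e, r) = 1`. Among the `r ^ (r - 1)` tuples
`t` of elements of `H`, exactly `(r - 1)!` give an injective map (`card_not_injective_le`), so it
suffices to find `b` whose tuple avoids a set `T` of at most `r ^ (r - 1) - (r - 1)!` bad tuples.
This is `exists_avoiding`.

The bound `q > r ^ (2 r + 2)` is too weak to count, by Weil's theorem, the `b` with one prescribed
tuple. Instead Stepanov's method is applied to all tuples of `T` at once. With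
`f_i = 1 + d_i X` and `m = r - 1` such factors, consider
`R = ∑ v_{j,e,c} X ^ c * X ^ (q j) * ∏ f_i ^ (s e_i)` for `0 ≤ e_i < r`, `c < A`, `j < J`. At a point
`a` with tuple `t`, expand in the variable `(X - a) / ∏ f_i(a)`: since `a ^ q = a` and
`f_i(a) ^ s = t_i`, each Taylor coefficient of order below `q` is the value at `a` of a polynomial of
small degree depending only on `t` (`stepanovTerm_comp`, `weightLE_taylorTerm`). Asking these
polynomials to vanish for all `t ∈ T` is a linear system in `v` which has a nonzero solution
precisely because `T` is a little smaller than the set of all tuples (`exists_stepanov`,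
`stepanov_count`). The resulting `R` vanishes to order `M` at every `a` whose tuple is in `T`, and
comparing with its degree shows that these `a` do not exhaust the field (`stepanov_bound`).

The crux is `R ≠ 0`. It reduces to `zero_estimate`: a nontrivial combination
`∑ A_e ∏ f_i ^ (s e_i)` with the `A_e` of small degree is not divisible by `X ^ q`. Modulo `X ^ q` one
has `f_i ^ q = 1`, so `f_i ^ s` is the inverse of an `r`-th root `y_i` of `f_i`, and after reversing
exponents the combination is an element `∑ B_e y ^ e` of the algebra generated by the `y_i`. Its
norm is a polynomial of degree less than `q`, divisible by `X ^ q` if the element vanishes; and the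
norm is nonzero because, by Kummer theory, the monomials in the `r`-th roots of the `f_i` are
linearly independent over `F(X)` (`kummer_independence`).
-/

namespace PermutationBinomial

open Polynomial

/-! ### Kummer independence of the roots of linear polynomials -/

/-- The linear polynomial `1 + d X`. -/
noncomputable def linPoly {F : Type*} [Field F] (d : F) : F[X] := 1 + C d * X

section Independence

variable {F : Type*} [Field F] {ι : Type*} [Fintype ι] [DecidableEq ι] {r : ℕ}

theorem linPoly_ne_zero (d : F) : linPoly d ≠ 0 := by
  intro h
  simpa [linPoly] using congrArg (eval 0) h

theorem natDegree_linPoly_le (d : F) : (linPoly d).natDegree ≤ 1 := by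
  unfold linPoly; compute_degree

theorem roots_linPoly {d : F} (hd : d ≠ 0) : (linPoly d).roots = {-d⁻¹} := by
  have : linPoly d = C d * X + C 1 := by simp [linPoly, add_comm]
  rw [this, roots_C_mul_X_add_C 1 hd]; simp

/-- The exponents `e i < r` can be read off modulo `r` from the multiplicity of the root
`-(d i)⁻¹`, to which an `r`-th power contributes a multiple of `r`. -/
theorem pow_mul_prod_inj {d : ι → F} (hd : ∀ i, d i ≠ 0) (hinj : Function.Injective d)
    {P Q : F[X]} (hP : P ≠ 0) (hQ : Q ≠ 0) (e e' : ι → Fin r)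
    (h : P ^ r * ∏ i, linPoly (d i) ^ (e i : ℕ) = Q ^ r * ∏ i, linPoly (d i) ^ (e' i : ℕ)) :
    e = e' := by
  classical
  have key : ∀ (P : F[X]) (_ : P ≠ 0) (e : ι → Fin r) (i : ι),
      (P ^ r * ∏ i, linPoly (d i) ^ (e i : ℕ)).roots.count (-(d i)⁻¹)
        = r * P.roots.count (-(d i)⁻¹) + e i := by
    intro P hP e i
    have h0 : ∏ i, linPoly (d i) ^ (e i : ℕ) ≠ 0 :=
      Finset.prod_ne_zero_iff.mpr fun i _ => pow_ne_zero _ (linPoly_ne_zero _)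
    rw [roots_mul (mul_ne_zero (pow_ne_zero _ hP) h0), Multiset.count_add, roots_pow,
      Multiset.count_nsmul, roots_prod _ _ h0, Multiset.count_bind]
    congr 1
    have : ∀ j, Multiset.count (-(d i)⁻¹) (linPoly (d j) ^ (e j : ℕ)).roots
        = if j = i then (e i : ℕ) else 0 := by
      intro j
      rw [roots_pow, Multiset.count_nsmul, roots_linPoly (hd j), Multiset.count_singleton]
      by_cases hji : j = i
      · simp [hji]
      · have : (d i) ≠ d j := fun h => hji (hinj h.symm)
        simp [hji, this]
    change (Finset.univ.val.map _).sum = _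
    simp only [this]
    change ∑ j, (if j = i then (e i : ℕ) else 0) = _
    simp
  funext i
  have h1 := key P hP e i
  rw [h, key Q hQ e' i] at h1
  have h2 := congrArg (· % r) h1
  simp only [Nat.mul_add_mod, Nat.mod_eq_of_lt (e i).isLt, Nat.mod_eq_of_lt (e' i).isLt] at h2
  exact Fin.ext h2.symm

/-- The `(q - 1)`-th roots of unity in any extension field lie in `F`. -/
theorem mem_range_of_pow_card_sub_one [Fintype F] {L : Type*} [Field L] [Algebra F L] {z : L}
    (hz : z ^ (Fintype.card F - 1) = 1) : ∃ c : F, algebraMap F L c = z := by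
  classical
  have h1 : (X ^ Fintype.card F - X : F[X]) = ∏ a : F, (X - C a) := by
    have h := FiniteField.roots_X_pow_card_sub_X F
    have hdeg := FiniteField.X_pow_card_sub_X_natDegree_eq F (Fintype.one_lt_card (α := F))
    have hm : (X ^ Fintype.card F - X : F[X]).Monic :=
      monic_X_pow_sub (by simpa using Fintype.one_lt_card (α := F))
    have := prod_multiset_X_sub_C_of_monic_of_roots_card_eq hm (by rw [h, hdeg]; rfl)
    rw [← this, h]; rfl
  have h2 := congrArg (aeval z) h1
  have hc : Fintype.card F = Fintype.card F - 1 + 1 := by have := Fintype.card_pos (α := F); omega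
  have h3 : z ^ Fintype.card F = z := by rw [hc, pow_succ, hz, one_mul]
  simp only [map_sub, map_pow, aeval_X, map_prod, aeval_C, h3, sub_self] at h2
  obtain ⟨c, -, hc⟩ := Finset.prod_eq_zero_iff.mp h2.symm
  exact ⟨c, (sub_eq_zero.mp hc).symm⟩

/-- If `y i` is an `r`-th root of `1 + d i X` with the `d i` nonzero and distinct, and `r` divides
`q - 1`, the monomials `∏ y i ^ e i` with `e i < r` are linearly independent over `F[X]`. The Galois
group over `F(X)` acts on them through distinct characters with values in `F`. -/
theorem kummer_independence [Fintype F] {s : ℕ} (hrs : r * s = Fintype.card F - 1)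
    {d : ι → F} (hd : ∀ i, d i ≠ 0) (hinj : Function.Injective d)
    {L : Type*} [Field L] [Algebra (RatFunc F) L] [Algebra F L] [Algebra F[X] L]
    [IsScalarTower F[X] (RatFunc F) L] [IsScalarTower F F[X] L]
    [IsGalois (RatFunc F) L]
    {y : ι → L} (hy : ∀ i, y i ^ r = algebraMap F[X] L (linPoly (d i))) (A : (ι → Fin r) → F[X])
    (hA : ∑ e, algebraMap F[X] L (A e) * ∏ i, y i ^ (e i : ℕ) = 0) : A = 0 := by
  classical
  have hinjL : Function.Injective (algebraMap F[X] L) := by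
    rw [IsScalarTower.algebraMap_eq F[X] (RatFunc F) L]
    exact (algebraMap (RatFunc F) L).injective.comp (RatFunc.algebraMap_injective F)
  have hcard := Fintype.one_lt_card (α := F)
  have hr : r ≠ 0 := by rintro rfl; omega
  have hy0 : ∀ i, y i ≠ 0 := by
    intro i h
    have := hy i
    rw [h, zero_pow hr, eq_comm, map_eq_zero_iff _ hinjL] at this
    exact linPoly_ne_zero _ this
  have hmon0 : ∀ e : ι → Fin r, ∏ i, y i ^ (e i : ℕ) ≠ 0 := fun e =>
    Finset.prod_ne_zero_iff.mpr fun i _ => pow_ne_zero _ (hy0 i)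
  have hσalg : ∀ (σ : Gal(L/RatFunc F)) (p : F[X]), σ (algebraMap F[X] L p) = algebraMap F[X] L p := by
    intro σ p
    rw [IsScalarTower.algebraMap_apply F[X] (RatFunc F) L, σ.commutes]
  -- each automorphism multiplies a monomial in the `y i` by a root of unity, which lies in `F`
  have hchar : ∀ (σ : Gal(L/RatFunc F)) (e : ι → Fin r), ∃ c : F,
      σ (∏ i, y i ^ (e i : ℕ)) = algebraMap F L c * ∏ i, y i ^ (e i : ℕ) := by
    intro σ e
    obtain ⟨c, hc⟩ := mem_range_of_pow_card_sub_one (F := F)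
      (z := σ (∏ i, y i ^ (e i : ℕ)) / ∏ i, y i ^ (e i : ℕ)) (by
        have : (σ (∏ i, y i ^ (e i : ℕ))) ^ r = (∏ i, y i ^ (e i : ℕ)) ^ r := by
          rw [← map_pow, ← Finset.prod_pow]
          have : ∀ i, (y i ^ (e i : ℕ)) ^ r = algebraMap F[X] L (linPoly (d i) ^ (e i : ℕ)) := by
            intro i; rw [← pow_mul, mul_comm, pow_mul, hy, map_pow]
          simp only [this, ← map_prod, hσalg]
        rw [← hrs, pow_mul, div_pow, this, div_self (pow_ne_zero _ (hmon0 e)), one_pow])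
    exact ⟨c, by rw [hc, div_mul_cancel₀ _ (hmon0 e)]⟩
  choose χ hχ using hchar
  -- distinct monomials have distinct characters
  have hsep : ∀ e e' : ι → Fin r, (∀ σ, χ σ e = χ σ e') → e = e' := by
    intro e e' h
    have hfix : (∏ i, y i ^ (e i : ℕ)) / (∏ i, y i ^ (e' i : ℕ))
        ∈ (⊥ : IntermediateField (RatFunc F) L) := by
      rw [InfiniteGalois.mem_bot_iff_fixed]
      intro σ
      have hne : algebraMap F L (χ σ e') ≠ 0 := by
        intro h0
        have := hχ σ e'
        rw [h0, zero_mul] at this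
        exact hmon0 e' ((map_eq_zero σ).mp this)
      rw [map_div₀, hχ, hχ, h σ, mul_div_mul_left _ _ hne]
    obtain ⟨g, hg⟩ := IntermediateField.mem_bot.mp hfix
    obtain ⟨P, Q, hQ, rfl⟩ := IsFractionRing.div_surjective (A := F[X]) g
    have hQ0 : Q ≠ 0 := nonZeroDivisors.ne_zero hQ
    rw [map_div₀, ← IsScalarTower.algebraMap_apply, ← IsScalarTower.algebraMap_apply,
      div_eq_div_iff ((map_ne_zero_iff _ hinjL).mpr hQ0) (hmon0 e')] at hg
    have hpow := congrArg (· ^ r) hg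
    have hm : ∀ e : ι → Fin r, (∏ i, y i ^ (e i : ℕ)) ^ r
        = algebraMap F[X] L (∏ i, linPoly (d i) ^ (e i : ℕ)) := by
      intro e
      rw [← Finset.prod_pow, map_prod]
      refine Finset.prod_congr rfl fun i _ => ?_
      rw [← pow_mul, mul_comm, pow_mul, hy, map_pow]
    simp only [mul_pow, hm, ← map_pow, ← map_mul] at hpow
    have hpoly := hinjL hpow
    have hP0 : P ≠ 0 := by
      rintro rfl
      rw [map_zero, zero_mul] at hg
      exact mul_ne_zero (hmon0 e) ((map_ne_zero_iff _ hinjL).mpr hQ0) hg.symm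
    rw [mul_comm _ (Q ^ r)] at hpoly
    exact (pow_mul_prod_inj hd hinj hP0 hQ0 _ _ hpoly).symm
  -- the argument of Artin: induction on the number of nonzero coefficients of a relation
  suffices H : ∀ (N : ℕ) (A : (ι → Fin r) → F[X]),
      (Finset.univ.filter fun e => A e ≠ 0).card ≤ N →
      ∑ e, algebraMap F[X] L (A e) * ∏ i, y i ^ (e i : ℕ) = 0 → A = 0 from H _ A le_rfl hA
  intro N
  induction N with
  | zero =>
    intro A hc _
    funext e
    by_contra hne
    have := Finset.card_eq_zero.mp (Nat.le_zero.mp hc)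
    have h' : e ∈ Finset.univ.filter fun e => A e ≠ 0 := by simpa using hne
    simp [this] at h'
  | succ N ih =>
    intro A hc hA
    by_contra hAne
    obtain ⟨e₁, he₁⟩ := Function.ne_iff.mp hAne
    by_cases hex : ∃ e₂, e₂ ≠ e₁ ∧ A e₂ ≠ 0
    · obtain ⟨e₂, h21, he₂⟩ := hex
      have : ∃ σ, χ σ e₂ ≠ χ σ e₁ := by
        by_contra! hcon
        exact h21 (hsep _ _ hcon)
      obtain ⟨σ, hσ⟩ := this
      have hrel : ∑ e, algebraMap F[X] L (C (χ σ e - χ σ e₁) * A e) * ∏ i, y i ^ (e i : ℕ) = 0 := by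
        have h1 := congrArg σ hA
        rw [map_sum, map_zero] at h1
        have h2 := congrArg (algebraMap F L (χ σ e₁) * ·) hA
        simp only [mul_zero, Finset.mul_sum] at h2
        rw [← sub_eq_zero.mpr (h1.trans h2.symm), ← Finset.sum_sub_distrib]
        refine Finset.sum_congr rfl fun e _ => ?_
        rw [map_mul σ, hσalg, hχ, map_mul, ← algebraMap_eq,
          ← IsScalarTower.algebraMap_apply F F[X] L, map_sub]
        ring
      have h0 := ih _ (by
        refine Nat.le_of_lt_succ (lt_of_lt_of_le (Finset.card_lt_card ?_) hc)
        refine Finset.ssubset_iff_subset_ne.mpr ⟨?_, ?_⟩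
        · intro e he
          simp only [Finset.mem_filter, Finset.mem_univ, true_and] at he ⊢
          exact right_ne_zero_of_mul he
        · intro heq
          have : e₁ ∈ Finset.univ.filter fun e => A e ≠ 0 := by simpa using he₁
          rw [← heq] at this
          simp at this) hrel
      have := congrFun h0 e₂
      simp only [Pi.zero_apply, mul_eq_zero, C_eq_zero, sub_eq_zero] at this
      exact this.elim hσ he₂
    · push Not at hex
      rw [Finset.sum_eq_single e₁ (fun e _ he => by rw [hex e he]; simp) (by simp)] at hA
      exact mul_ne_zero ((map_ne_zero_iff _ hinjL).mpr he₁) (hmon0 e₁) hA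

end Independence


/-! ### The zero estimate modulo `X ^ q` -/

section ZeroEstimate

open Matrix

variable {F : Type*} [Field F] {ι : Type*} [Fintype ι] [DecidableEq ι] {r : ℕ}

/-- Subtraction in `Fin n` with its carry made explicit. -/
theorem fin_val_add_val_sub {n : ℕ} (a b : Fin n) :
    a.val + (b - a).val = b.val + if b < a then n else 0 := by
  rw [Fin.sub_def]
  have ha := a.isLt
  have hb := b.isLt
  split_ifs with h
  · have h' : b.val < a.val := h
    have : (n - a.val + b.val) % n = n - a.val + b.val := Nat.mod_eq_of_lt (by omega)
    simp only [this]; omega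
  · have h' : a.val ≤ b.val := not_lt.mp h
    have : (n - a.val + b.val) % n = b.val - a.val := by
      rw [show n - a.val + b.val = n + (b.val - a.val) by omega, Nat.add_mod_left,
        Nat.mod_eq_of_lt (by omega)]
    simp only [this]; omega

/-- The matrix of multiplication by `∑ A_e y ^ e` in terms of the monomials `y ^ b`, `b i < r`, where
`y i` is an `r`-th root of `1 + d i X`. The difference `b - a` is taken modulo `r` in each
coordinate, and a factor `1 + d i X` appears for every coordinate in which the exponents of
`y ^ a` and `y ^ (b - a)` add up to at least `r`. -/
noncomputable def mulMatrix (d : ι → F) (A : (ι → Fin r) → F[X]) :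
    Matrix (ι → Fin r) (ι → Fin r) F[X] :=
  fun a b => A (b - a) * ∏ i, if b i < a i then linPoly (d i) else 1

/-- The defining property of `mulMatrix`, valid in any ring where `1 + d i X` acquires an `r`-th
root `y i`. It is used both in a field extension of `F(X)` and in `F[X] / (X ^ q)`. -/
theorem mulMatrix_sum [NeZero r] {R : Type*} [CommRing R] (θ : F[X] →+* R) (d : ι → F) (y : ι → R)
    (hy : ∀ i, y i ^ r = θ (linPoly (d i))) (A : (ι → Fin r) → F[X]) (a : ι → Fin r) :
    ∑ b, θ (mulMatrix d A a b) * ∏ i, y i ^ (b i : ℕ)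
      = (∏ i, y i ^ (a i : ℕ)) * ∑ e, θ (A e) * ∏ i, y i ^ (e i : ℕ) := by
  rw [Finset.mul_sum]
  refine Fintype.sum_equiv (Equiv.subRight a) _ _ fun b => ?_
  simp only [Equiv.subRight_apply, mulMatrix, map_mul, map_prod]
  rw [mul_left_comm, mul_assoc, ← Finset.prod_mul_distrib, ← Finset.prod_mul_distrib]
  congr 1
  refine Finset.prod_congr rfl fun i _ => ?_
  rw [← pow_add, Pi.sub_apply, fin_val_add_val_sub, pow_add, mul_comm]
  split_ifs
  · rw [hy]
  · simp

theorem natDegree_det_mulMatrix_le (d : ι → F) (A : (ι → Fin r) → F[X]) {D : ℕ}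
    (hA : ∀ e, (A e).natDegree ≤ D) :
    (mulMatrix d A).det.natDegree ≤ r ^ Fintype.card ι * (D + Fintype.card ι) := by
  have hentry : ∀ a b, (mulMatrix d A a b).natDegree ≤ D + Fintype.card ι := by
    intro a b
    refine natDegree_mul_le.trans (add_le_add (hA _) ?_)
    refine (natDegree_prod_le _ _).trans ?_
    refine (Finset.sum_le_card_nsmul _ _ 1 fun i _ => ?_).trans (by simp)
    split_ifs
    · exact natDegree_linPoly_le _
    · simp
  rw [Matrix.det_apply]
  refine natDegree_sum_le_of_forall_le _ _ fun σ _ => ?_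
  refine (natDegree_smul_le _ _).trans ((natDegree_prod_le _ _).trans ?_)
  refine (Finset.sum_le_card_nsmul _ _ _ fun i _ => hentry _ _).trans ?_
  simp

/-- The norm of a nonzero element is nonzero. A left kernel vector of the matrix would give, in a
separable closure of `F(X)`, two nonzero elements in the span of the monomials with product zero. -/
theorem mulMatrix_det_ne_zero [Fintype F] {s : ℕ} (hrs : r * s = Fintype.card F - 1)
    {d : ι → F} (hd : ∀ i, d i ≠ 0) (hinj : Function.Injective d)
    {A : (ι → Fin r) → F[X]} (hA : A ≠ 0) : (mulMatrix d A).det ≠ 0 := by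
  have hcard := Fintype.one_lt_card (α := F)
  have hr : r ≠ 0 := by rintro rfl; omega
  have : NeZero r := ⟨hr⟩
  let L := SeparableClosure (RatFunc F)
  let _ : Algebra F L := ((algebraMap F[X] L).comp C).toAlgebra
  have : IsScalarTower F F[X] L := IsScalarTower.of_algebraMap_eq fun _ => rfl
  -- `r` divides `q - 1`, so it is prime to the characteristic and `r`-th roots are separable
  have hrF : (r : F) ≠ 0 := by
    intro h
    have h1 : ((r * s : ℕ) : F) + 1 = 0 := by
      rw [hrs]
      have := FiniteField.cast_card_eq_zero F
      rw [show Fintype.card F = Fintype.card F - 1 + 1 by omega] at this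
      simpa using this
    rw [Nat.cast_mul, h, zero_mul, zero_add] at h1
    exact one_ne_zero h1
  have : NeZero (r : L) := ⟨by
    rw [← map_natCast (algebraMap F L)]
    exact (_root_.map_ne_zero _).mpr hrF⟩
  have hroot : ∀ i, ∃ z : L, z ^ r = algebraMap F[X] L (linPoly (d i)) := fun i =>
    IsSepClosed.exists_pow_nat_eq _ r
  choose y hy using hroot
  have hind := kummer_independence hrs hd hinj (L := L) hy
  intro hdet
  obtain ⟨v, hv0, hv⟩ := Matrix.exists_vecMul_eq_zero_iff.mpr hdet
  have hprod : (∑ a, algebraMap F[X] L (v a) * ∏ i, y i ^ (a i : ℕ)) *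
      (∑ e, algebraMap F[X] L (A e) * ∏ i, y i ^ (e i : ℕ)) = 0 := by
    rw [Finset.sum_mul]
    have hrow : ∀ a, algebraMap F[X] L (v a) * (∏ i, y i ^ (a i : ℕ)) *
        (∑ e, algebraMap F[X] L (A e) * ∏ i, y i ^ (e i : ℕ)) =
        ∑ b, algebraMap F[X] L (v a) *
          (algebraMap F[X] L (mulMatrix d A a b) * ∏ i, y i ^ (b i : ℕ)) := fun a => by
      rw [mul_assoc, ← mulMatrix_sum (algebraMap F[X] L) d y hy A, Finset.mul_sum]
    simp only [hrow]
    rw [Finset.sum_comm]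
    refine Finset.sum_eq_zero fun b _ => ?_
    have := congrArg (algebraMap F[X] L) (congrFun hv b)
    simp only [Matrix.vecMul, dotProduct, map_sum, map_mul, Pi.zero_apply, map_zero] at this
    simp only [← mul_assoc, ← Finset.sum_mul, this, zero_mul]
  rcases mul_eq_zero.mp hprod with h | h
  · exact hv0 (hind v h)
  · exact hA (hind A h)

/-- The combination modulo `X ^ q` is, up to a unit, an element of the algebra generated by the
`r`-th roots `y i = (1 + d i X) ^ (-s)`. If it vanishes then `X ^ q` divides its norm, whose degree is
less than `q`. -/
theorem zero_estimate [Fintype F] {s : ℕ} (hrs : r * s = Fintype.card F - 1)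
    {d : ι → F} (hd : ∀ i, d i ≠ 0) (hinj : Function.Injective d)
    {A : (ι → Fin r) → F[X]} {D : ℕ} (hdeg : ∀ e, (A e).natDegree ≤ D)
    (hD : r ^ Fintype.card ι * (D + Fintype.card ι) < Fintype.card F)
    (hdvd : X ^ Fintype.card F ∣ ∑ e, A e * ∏ i, linPoly (d i) ^ (s * (e i : ℕ))) : A = 0 := by
  have hcard := Fintype.one_lt_card (α := F)
  have hr : r ≠ 0 := by rintro rfl; omega
  have : NeZero r := ⟨hr⟩
  set q := Fintype.card F with hq
  let I : Ideal F[X] := Ideal.span {X ^ q}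
  let θ : F[X] →+* F[X] ⧸ I := Ideal.Quotient.mk I
  have hθ : ∀ p, θ p = 0 ↔ X ^ q ∣ p := fun p => by
    rw [Ideal.Quotient.eq_zero_iff_mem, Ideal.mem_span_singleton]
  have hfq : ∀ i, θ (linPoly (d i)) ^ q = 1 := by
    intro i
    rw [← map_pow, ← sub_eq_zero, ← map_one θ, ← map_sub, hθ]
    obtain ⟨p, hp⟩ := CharP.exists F
    have := hp
    have hpp : Fact p.Prime := ⟨CharP.char_is_prime F p⟩
    obtain ⟨n, -, hn⟩ := FiniteField.card F p
    have : linPoly (d i) ^ q = 1 + C (d i ^ q) * X ^ q := by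
      rw [hq, hn, linPoly, add_pow_char_pow, one_pow, mul_pow, C_pow]
    rw [this, add_sub_cancel_left]
    exact dvd_mul_left _ _
  let y : ι → F[X] ⧸ I := fun i => θ (linPoly (d i)) ^ (s * (r - 1) + 1)
  have hrr : r - 1 + 1 = r := by omega
  have hsr : s * r + 1 = q := by rw [mul_comm, hrs]; omega
  have hys : ∀ i, y i * θ (linPoly (d i)) ^ s = 1 := by
    intro i
    rw [← pow_add, ← hfq i, ← hsr]; congr 1
    conv_rhs => rw [← hrr]
    ring
  have hy : ∀ i, y i ^ r = θ (linPoly (d i)) := by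
    intro i
    have h1 : y i ^ r * θ (linPoly (d i)) ^ (s * r) = 1 := by
      rw [pow_mul, ← mul_pow, hys, one_pow]
    calc y i ^ r = y i ^ r * θ (linPoly (d i)) ^ q := by rw [hfq, mul_one]
      _ = (y i ^ r * θ (linPoly (d i)) ^ (s * r)) * θ (linPoly (d i)) := by
          rw [← hsr, pow_succ, mul_assoc]
      _ = _ := by rw [h1, one_mul]
  -- reversing the exponents turns the powers of `f ^ s` into powers of the root `y`
  let B : (ι → Fin r) → F[X] := fun e => A fun i => (e i).rev
  have hB : ∑ e, θ (B e) * ∏ i, y i ^ (e i : ℕ) = 0 := by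
    have h1 : (∏ i, y i ^ (r - 1)) * θ (∑ e, A e * ∏ i, linPoly (d i) ^ (s * (e i : ℕ))) = 0 := by
      rw [(hθ _).mpr hdvd, mul_zero]
    rw [← h1, map_sum, Finset.mul_sum]
    refine Fintype.sum_equiv (Equiv.piCongrRight fun _ => Fin.revPerm) _ _ fun e => ?_
    simp only [B, map_mul, map_prod, map_pow, Equiv.piCongrRight_apply, Pi.map_apply,
      Fin.revPerm_apply]
    rw [mul_left_comm, ← Finset.prod_mul_distrib]
    change _ * _ = θ (A fun i => (e i).rev) * _
    congr 1
    refine Finset.prod_congr rfl fun i _ => ?_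
    rw [pow_mul]
    have hlt := (e i).isLt
    have : r - 1 = (e i : ℕ) + ((e i).rev : ℕ) := by rw [Fin.val_rev]; omega
    rw [this, pow_add, mul_assoc, ← mul_pow, hys, one_pow, mul_one]
  have hdet0 : θ (mulMatrix d B).det = 0 := by
    have hmv : (mulMatrix d B).map θ *ᵥ (fun b => ∏ i, y i ^ (b i : ℕ)) = 0 := by
      funext a
      simp only [Matrix.mulVec, dotProduct, Matrix.map_apply, mulMatrix_sum θ d y hy, hB, mul_zero,
        Pi.zero_apply]
    have h2 : ((mulMatrix d B).map θ).adjugate *ᵥ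
        ((mulMatrix d B).map θ *ᵥ (fun b => ∏ i, y i ^ (b i : ℕ))) = 0 := by
      rw [hmv, Matrix.mulVec_zero]
    rw [Matrix.mulVec_mulVec, Matrix.adjugate_mul, Matrix.smul_mulVec, Matrix.one_mulVec] at h2
    -- the coordinate at the monomial `1` isolates the determinant
    have h3 := congrFun h2 0
    simp only [Pi.smul_apply, Pi.zero_apply, Fin.val_zero, pow_zero, Finset.prod_const_one,
      smul_eq_mul, mul_one] at h3
    rw [RingHom.map_det]
    exact h3
  have hBzero : B = 0 := by
    by_contra hB0
    have hne := mulMatrix_det_ne_zero hrs hd hinj hB0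
    have hle := natDegree_le_of_dvd ((hθ _).mp hdet0) hne
    rw [natDegree_X_pow] at hle
    have := natDegree_det_mulMatrix_le d B (D := D) fun e => hdeg _
    omega
  funext e
  have := congrFun hBzero fun i => (e i).rev
  simpa [B] using this

end ZeroEstimate


/-! ### Stepanov's auxiliary polynomial -/

section Stepanov

variable {F : Type*} [Field F] {ι : Type*} [Fintype ι] [DecidableEq ι] {r : ℕ}

/-- The coefficient of `X ^ l` in `g`, itself a polynomial, has degree at most `D + l * w`.
Unlike a bound on the total degree, this one is additive under multiplication with the slope `w`
held fixed. -/
def WeightLE (w D : ℕ) (g : F[X][X]) : Prop := ∀ l, (g.coeff l).natDegree ≤ D + l * w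

theorem WeightLE.mul {w D D' : ℕ} {g g' : F[X][X]} (h : WeightLE w D g) (h' : WeightLE w D' g') :
    WeightLE w (D + D') (g * g') := by
  intro l
  rw [coeff_mul]
  refine natDegree_sum_le_of_forall_le _ _ fun x hx => ?_
  refine natDegree_mul_le.trans ((add_le_add (h x.1) (h' x.2)).trans ?_)
  rw [← Finset.HasAntidiagonal.mem_antidiagonal.mp hx]
  apply le_of_eq; ring

theorem WeightLE.const {w D : ℕ} {p : F[X]} (h : p.natDegree ≤ D) : WeightLE w D (C p) := by
  intro l
  rw [coeff_C]
  split_ifs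
  · exact h.trans (Nat.le_add_right _ _)
  · simp

theorem WeightLE.one {w : ℕ} : WeightLE w 0 (1 : F[X][X]) :=
  WeightLE.const (p := 1) (by simp)

theorem WeightLE.pow {w D : ℕ} {g : F[X][X]} (h : WeightLE w D g) (n : ℕ) :
    WeightLE w (n * D) (g ^ n) := by
  induction n with
  | zero => simpa using WeightLE.one
  | succ n ih => rw [pow_succ, Nat.succ_mul]; exact ih.mul h

theorem WeightLE.prod_zero {w : ℕ} {κ : Type*} (S : Finset κ) {g : κ → F[X][X]}
    (h : ∀ i, WeightLE w 0 (g i)) : WeightLE w 0 (∏ i ∈ S, g i) := by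
  classical
  induction S using Finset.induction_on with
  | empty => simpa using WeightLE.one
  | insert a S ha ih => rw [Finset.prod_insert ha]; exact (h a).mul ih

theorem WeightLE.linear {w D : ℕ} {p p' : F[X]} (h : p.natDegree ≤ D) (hp : p'.natDegree ≤ D + w) :
    WeightLE w D (C p + C p' * X) := by
  intro l
  rw [coeff_add, coeff_C_mul_X, coeff_C]
  rcases l with _ | _ | l
  · simpa using h
  · simpa using hp
  · simp

/-- The product of all `1 + d i X`. -/
noncomputable def linProd (d : ι → F) : F[X] := ∏ i, linPoly (d i)

/-- The product of all `1 + d k X` with `k ≠ i`. -/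
noncomputable def linCofactor (d : ι → F) (i : ι) : F[X] :=
  ∏ k ∈ Finset.univ.erase i, linPoly (d k)

theorem linPoly_mul_linCofactor (d : ι → F) (i : ι) :
    linPoly (d i) * linCofactor d i = linProd d :=
  Finset.mul_prod_erase _ _ (Finset.mem_univ i)

theorem natDegree_linProd_le (d : ι → F) : (linProd d).natDegree ≤ Fintype.card ι := by
  refine (natDegree_prod_le _ _).trans ?_
  refine (Finset.sum_le_card_nsmul _ _ 1 fun i _ => natDegree_linPoly_le _).trans (by simp)

theorem natDegree_linCofactor_le (d : ι → F) (i : ι) :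
    (linCofactor d i).natDegree ≤ Fintype.card ι - 1 := by
  refine (natDegree_prod_le _ _).trans ?_
  refine (Finset.sum_le_card_nsmul _ _ 1 fun i _ => natDegree_linPoly_le _).trans (by simp)

/-- The building block `X ^ c * X ^ (q j) * ∏ (1 + d i X) ^ (s e_i)` of Stepanov's auxiliary
polynomial. -/
noncomputable def stepanovTerm (q s : ℕ) (d : ι → F) (j : ℕ) (e : ι → Fin r) (c : ℕ) : F[X] :=
  X ^ c * X ^ (q * j) * ∏ i, linPoly (d i) ^ (s * (e i : ℕ))

/-- The expansion of `stepanovTerm` around an unspecified point of tuple `t`. The point is the inner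
variable `a`. The outer variable `Y` is the displacement divided by `linProd d` at the point, which
makes the substituted factors `1 + d i X` equal to `(1 + d i a) * (1 + d i * linCofactor d i * Y)`.
Here `(1 + d i a) ^ s` has been replaced by `t i`, and `X ^ (q j)` by `a ^ j`. -/
noncomputable def taylorTerm (s : ℕ) (d : ι → F) (t : ι → F) (j : ℕ) (e : ι → Fin r) (c : ℕ) :
    F[X][X] :=
  C (C (∏ i, t i ^ (e i : ℕ)) * X ^ j) * (C X + C (linProd d) * X) ^ c *
    ∏ i, (C 1 + C (C (d i) * linCofactor d i) * X) ^ (s * (e i : ℕ))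

theorem weightLE_taylorTerm [Nonempty ι] (s : ℕ) (d t : ι → F) (j : ℕ) (e : ι → Fin r) (c : ℕ) :
    WeightLE (Fintype.card ι - 1) (j + c) (taylorTerm s d t j e c) := by
  have hcard := Fintype.card_pos (α := ι)
  have h1 : WeightLE (Fintype.card ι - 1) j
      (C (C (∏ i, t i ^ (e i : ℕ)) * X ^ j) : F[X][X]) :=
    WeightLE.const (natDegree_C_mul_X_pow_le _ _)
  have h2 : WeightLE (Fintype.card ι - 1) (c * 1) ((C X + C (linProd d) * X : F[X][X]) ^ c) :=
    (WeightLE.linear natDegree_X_le ((natDegree_linProd_le d).trans (by omega))).pow c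
  have h3 : WeightLE (Fintype.card ι - 1) 0
      (∏ i, (C 1 + C (C (d i) * linCofactor d i) * X : F[X][X]) ^ (s * (e i : ℕ))) := by
    refine WeightLE.prod_zero _ fun i => ?_
    have := (WeightLE.linear (w := Fintype.card ι - 1) (D := 0) (p := (1 : F[X]))
      (p' := C (d i) * linCofactor d i) (by simp)
      ((natDegree_C_mul_le _ _).trans ((natDegree_linCofactor_le d i).trans (by omega)))).pow
        (s * (e i : ℕ))
    simpa using this
  simpa [taylorTerm] using (h1.mul h2).mul h3

/-- At every point `a` of `F`, the polynomial `taylorTerm` gives the correct Taylor expansion up to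
order `q`. The only discrepancy is `(a + b X) ^ q = a + b X ^ q`, replaced by `a`. -/
theorem stepanovTerm_comp [Fintype F] {s M : ℕ} (hM : M ≤ Fintype.card F) (d : ι → F) (a : F)
    (j : ℕ) (e : ι → Fin r) (c : ℕ) :
    X ^ M ∣ (stepanovTerm (Fintype.card F) s d j e c).comp (C a + C ((linProd d).eval a) * X) -
      (taylorTerm s d (fun i => (1 + d i * a) ^ s) j e c).map (evalRingHom a) := by
  set q := Fintype.card F
  set b := (linProd d).eval a with hb
  have hlin : ∀ i, (linPoly (d i)).comp (C a + C b * X) =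
      C (1 + d i * a) * (C 1 + C (d i * (linCofactor d i).eval a) * X) := by
    intro i
    have : b = (1 + d i * a) * (linCofactor d i).eval a := by
      rw [hb, ← linPoly_mul_linCofactor d i, eval_mul]; simp [linPoly]
    rw [this]
    simp only [linPoly, add_comp, one_comp, mul_comp, C_comp, X_comp, map_add, map_mul, map_one]
    ring
  have hq : (C a + C b * X : F[X]) ^ q = C a + C b * X ^ q := by
    obtain ⟨p, hp⟩ := CharP.exists F
    have := hp
    have hpp : Fact p.Prime := ⟨CharP.char_is_prime F p⟩
    obtain ⟨n, -, hn⟩ := FiniteField.card F p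
    have ha := FiniteField.pow_card a
    have hb := FiniteField.pow_card b
    change a ^ q = a at ha
    change b ^ q = b at hb
    change q = _ at hn
    conv_lhs => rw [hn, add_pow_char_pow, ← hn, mul_pow, ← C_pow, ← C_pow, ha, hb]
  have hpow : X ^ M ∣ ((C a + C b * X : F[X]) ^ (q * j) - C (a ^ j)) := by
    rw [pow_mul, hq, C_pow]
    refine dvd_trans ?_ (sub_dvd_pow_sub_pow _ _ j)
    rw [add_sub_cancel_left]
    exact (pow_dvd_pow X hM).trans (dvd_mul_left _ _)
  have heq : (stepanovTerm q s d j e c).comp (C a + C b * X) -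
      (taylorTerm s d (fun i => (1 + d i * a) ^ s) j e c).map (evalRingHom a) =
      ((C a + C b * X : F[X]) ^ (q * j) - C (a ^ j)) *
        ((C a + C b * X) ^ c * (C (∏ i, ((1 + d i * a) ^ s) ^ (e i : ℕ)) *
          ∏ i, (C 1 + C (d i * (linCofactor d i).eval a) * X) ^ (s * (e i : ℕ)))) := by
    simp only [stepanovTerm, taylorTerm, mul_comp, pow_comp, X_comp, prod_comp, hlin, mul_pow,
      Finset.prod_mul_distrib, Polynomial.map_mul, Polynomial.map_pow, Polynomial.map_add,
      Polynomial.map_prod, map_C, map_X, coe_evalRingHom, eval_C, eval_X,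
      eval_one, map_mul, map_prod, map_pow, ← hb, pow_mul]
    ring
  rw [heq]
  exact dvd_mul_of_dvd_left hpow _

theorem natDegree_stepanovTerm_le {q s A J : ℕ} (d : ι → F) (j : Fin J) (e : ι → Fin r)
    (c : Fin A) : (stepanovTerm q s d j e c).natDegree ≤
      (A - 1) + q * (J - 1) + Fintype.card ι * (s * (r - 1)) := by
  unfold stepanovTerm
  refine natDegree_mul_le.trans (add_le_add (natDegree_mul_le.trans (add_le_add ?_ ?_)) ?_)
  · rw [natDegree_X_pow]; have := c.isLt; omega
  · rw [natDegree_X_pow]; exact Nat.mul_le_mul_left _ (by have := j.isLt; omega)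
  · refine (natDegree_prod_le _ _).trans ?_
    refine (Finset.sum_le_card_nsmul _ _ (s * (r - 1)) fun i _ => ?_).trans (by simp)
    refine natDegree_pow_le.trans ?_
    have h1 : (e i : ℕ) ≤ r - 1 := by have := (e i).isLt; omega
    calc _ ≤ s * (r - 1) * 1 := Nat.mul_le_mul (Nat.mul_le_mul_left _ h1) (natDegree_linPoly_le _)
      _ = _ := mul_one _

/-- Order of vanishing at `a` is invariant under rescaling the displacement. -/
theorem pow_dvd_of_comp {M : ℕ} {R : F[X]} {a b : F} (hb : b ≠ 0)
    (h : X ^ M ∣ R.comp (C a + C b * X)) : (X - C a) ^ M ∣ R := by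
  obtain ⟨Q, hQ⟩ := h
  have h1 := congrArg (fun p => p.comp (C b⁻¹ * (X - C a))) hQ
  have h2 : (C a + C b * X : F[X]).comp (C b⁻¹ * (X - C a)) = X := by
    simp only [add_comp, C_comp, mul_comp, X_comp]
    rw [← mul_assoc, ← C_mul, mul_inv_cancel₀ hb]; simp
  simp only [comp_assoc, h2, comp_X, mul_comp, pow_comp, X_comp, mul_pow] at h1
  rw [h1]
  exact dvd_mul_of_dvd_left (dvd_mul_left _ _) _

/-- The building blocks are linearly independent. In a relation whose coefficients of index less
than `j` vanish, the terms of index `j` form a combination divisible by `X ^ q` after division by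
`X ^ (q j)`, and `zero_estimate` applies. -/
theorem stepanov_ne_zero [Fintype F] {s : ℕ} (hrs : r * s = Fintype.card F - 1)
    {d : ι → F} (hd : ∀ i, d i ≠ 0) (hinj : Function.Injective d) {A J : ℕ}
    (hA : r ^ Fintype.card ι * ((A - 1) + Fintype.card ι) < Fintype.card F)
    {v : Fin J × (ι → Fin r) × Fin A → F}
    (hR : ∑ k, C (v k) * stepanovTerm (Fintype.card F) s d k.1 k.2.1 k.2.2 = 0) : v = 0 := by
  set q := Fintype.card F
  let P : Fin J → (ι → Fin r) → F[X] := fun j e => ∑ c : Fin A, C (v (j, e, c)) * X ^ (c : ℕ)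
  let Q : Fin J → F[X] := fun j => ∑ e, P j e * ∏ i, linPoly (d i) ^ (s * (e i : ℕ))
  have hPdeg : ∀ j e, (P j e).natDegree ≤ A - 1 := fun j e =>
    natDegree_sum_le_of_forall_le _ _ fun c _ =>
      (natDegree_C_mul_X_pow_le _ _).trans (by have := c.isLt; omega)
  have hRQ : ∑ j : Fin J, X ^ (q * (j : ℕ)) * Q j = 0 := by
    rw [← hR, Fintype.sum_prod_type]
    refine Finset.sum_congr rfl fun j _ => ?_
    rw [Fintype.sum_prod_type, Finset.mul_sum]
    refine Finset.sum_congr rfl fun e _ => ?_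
    simp only [P, stepanovTerm, Finset.sum_mul, Finset.mul_sum]
    refine Finset.sum_congr rfl fun c _ => ?_
    ring
  have hP : ∀ (n : ℕ) (hn : n < J), P ⟨n, hn⟩ = 0 := by
    intro n
    induction n using Nat.strong_induction_on with
    | _ n ih =>
      intro hn
      refine zero_estimate hrs hd hinj (hPdeg _) hA ?_
      -- terms of smaller index vanish by induction, those of larger index are divisible by
      -- `X ^ (q * (n + 1))`
      have hdvd : X ^ (q * n) * X ^ q ∣ X ^ (q * n) * Q ⟨n, hn⟩ := by
        rw [← Finset.add_sum_erase _ _ (Finset.mem_univ (⟨n, hn⟩ : Fin J))] at hRQ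
        rw [eq_neg_of_add_eq_zero_left hRQ]
        refine (Finset.dvd_sum fun j hj => ?_).neg_right
        have hjn : (j : ℕ) ≠ n := fun h => (Finset.ne_of_mem_erase hj) (Fin.ext h)
        rcases lt_or_gt_of_ne hjn with h | h
        · have : Q j = 0 := by
            have := ih j h j.isLt
            simp only [Q]
            refine Finset.sum_eq_zero fun e _ => ?_
            rw [show P j e = 0 from congrFun this e, zero_mul]
          rw [this, mul_zero]; exact dvd_zero _
        · rw [← pow_add]
          refine dvd_mul_of_dvd_left (pow_dvd_pow X ?_) _
          calc q * n + q = q * (n + 1) := by ring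
            _ ≤ q * j := Nat.mul_le_mul_left _ h
      exact (mul_dvd_mul_iff_left (pow_ne_zero _ X_ne_zero)).mp hdvd
  funext k
  obtain ⟨j, e, c⟩ := k
  have h0 := congrArg (coeff · (c : ℕ)) (congrFun (hP j j.isLt) e)
  simp only [Fin.eta, P, finsetSum_coeff, coeff_C_mul, coeff_X_pow, Pi.zero_apply, coeff_zero,
    Fin.val_inj, mul_ite, mul_one, mul_zero, Finset.sum_ite_eq, Finset.mem_univ, if_true] at h0
  exact h0

/-- The unknowns are the `J * r ^ m * A` coefficients `v`, with `m = card ι`. For each order `l < M`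
and each tuple of `T`, one polynomial of degree less than `A + J + M * (m - 1)` has to vanish, so
`hcount` says that there are more unknowns than equations. -/
theorem exists_stepanov [Fintype F] [Nonempty ι] {s : ℕ} (hrs : r * s = Fintype.card F - 1)
    {d : ι → F} (hd : ∀ i, d i ≠ 0) (hinj : Function.Injective d) (T : Finset (ι → F)) {A J M : ℕ}
    (hA : r ^ Fintype.card ι * ((A - 1) + Fintype.card ι) < Fintype.card F)
    (hM : M ≤ Fintype.card F)
    (hcount : M * (T.card * (A + J + M * (Fintype.card ι - 1)))
      < J * (r ^ Fintype.card ι * A)) :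
    ∃ R : F[X], R ≠ 0 ∧
      R.natDegree ≤ (A - 1) + Fintype.card F * (J - 1) + Fintype.card ι * (s * (r - 1)) ∧
      ∀ a : F, (∀ i, 1 + d i * a ≠ 0) → (fun i => (1 + d i * a) ^ s) ∈ T → (X - C a) ^ M ∣ R := by
  set D := A + J + M * (Fintype.card ι - 1) with hDdef
  let G : (ι → F) → Fin J × (ι → Fin r) × Fin A → F[X][X] := fun t k =>
    taylorTerm s d t k.1 k.2.1 k.2.2
  let N : Matrix (Fin M × T × Fin D) (Fin J × (ι → Fin r) × Fin A) F := fun z k =>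
    ((G z.2.1 k).coeff z.1).coeff z.2.2
  have hker : LinearMap.ker N.mulVecLin ≠ ⊥ := by
    apply LinearMap.ker_ne_bot_of_finrank_lt
    simpa using hcount
  obtain ⟨v, hv, hv0⟩ := (Submodule.ne_bot_iff _).mp hker
  refine ⟨∑ k, C (v k) * stepanovTerm (Fintype.card F) s d k.1 k.2.1 k.2.2,
    fun h => hv0 (stepanov_ne_zero hrs hd hinj hA h), ?_, ?_⟩
  · exact natDegree_sum_le_of_forall_le _ _ fun k _ =>
      (natDegree_C_mul_le _ _).trans (natDegree_stepanovTerm_le d _ _ _)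
  · intro a ha hT
    set t : ι → F := fun i => (1 + d i * a) ^ s with ht
    have hb : (linProd d).eval a ≠ 0 := by
      rw [linProd, eval_prod]
      exact Finset.prod_ne_zero_iff.mpr fun i _ => by simpa [linPoly] using ha i
    refine pow_dvd_of_comp hb ?_
    have hcoef : ∀ l < M, ∑ k, C (v k) * (G t k).coeff l = 0 := by
      intro l hl
      ext c
      rw [finsetSum_coeff, coeff_zero]
      simp only [coeff_C_mul]
      by_cases hc : c < D
      · have := congrFun (LinearMap.mem_ker.mp hv) (⟨l, hl⟩, ⟨t, hT⟩, ⟨c, hc⟩)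
        simp only [N, Pi.zero_apply] at this
        rw [← this]
        exact Finset.sum_congr rfl fun k _ => mul_comm _ _
      · refine Finset.sum_eq_zero fun k _ => ?_
        rw [coeff_eq_zero_of_natDegree_lt, mul_zero]
        refine lt_of_le_of_lt (weightLE_taylorTerm s d t k.1 k.2.1 k.2.2 l) ?_
        have h1 := k.1.isLt
        have h2 := k.2.2.isLt
        have h3 : l * (Fintype.card ι - 1) ≤ M * (Fintype.card ι - 1) :=
          Nat.mul_le_mul_right _ hl.le
        omega
    have h1 : X ^ M ∣ ∑ k, C (v k) * (G t k).map (evalRingHom a) := by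
      rw [X_pow_dvd_iff]
      intro l hl
      have := congrArg (eval a) (hcoef l hl)
      simp only [eval_finsetSum, eval_mul, eval_C, eval_zero] at this
      simpa [finsetSum_coeff, coeff_C_mul, coeff_map] using this
    have h2 : X ^ M ∣ ∑ k, C (v k) * ((stepanovTerm (Fintype.card F) s d k.1 k.2.1 k.2.2).comp
        (C a + C ((linProd d).eval a) * X) - (G t k).map (evalRingHom a)) :=
      Finset.dvd_sum fun k _ => dvd_mul_of_dvd_right (stepanovTerm_comp hM d a _ _ _) _
    have h3 := dvd_add h2 h1
    rw [← Finset.sum_add_distrib] at h3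
    simp only [← mul_add, sub_add_cancel] at h3
    rw [Polynomial.sum_comp]
    simpa only [mul_comp, C_comp] using h3

theorem stepanov_bound [Fintype F] [Nonempty ι] {s : ℕ} (hrs : r * s = Fintype.card F - 1)
    {d : ι → F} (hd : ∀ i, d i ≠ 0) (hinj : Function.Injective d) (T : Finset (ι → F)) {A J M : ℕ}
    (hA : r ^ Fintype.card ι * ((A - 1) + Fintype.card ι) < Fintype.card F)
    (hM : M ≤ Fintype.card F)
    (hcount : M * (T.card * (A + J + M * (Fintype.card ι - 1)))
      < J * (r ^ Fintype.card ι * A)) (S : Finset F)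
    (hS : ∀ a ∈ S, (∀ i, 1 + d i * a ≠ 0) ∧ (fun i => (1 + d i * a) ^ s) ∈ T) :
    M * S.card ≤ (A - 1) + Fintype.card F * (J - 1) + Fintype.card ι * (s * (r - 1)) := by
  obtain ⟨R, hR0, hdeg, hR⟩ := exists_stepanov hrs hd hinj T hA hM hcount
  have hdvd : ∏ a ∈ S, (X - C a) ^ M ∣ R := by
    refine Finset.prod_dvd_of_coprime ?_ fun a ha => hR a (hS a ha).1 (hS a ha).2
    intro a _ b _ hab
    exact (isCoprime_X_sub_C_of_isUnit_sub (sub_ne_zero.mpr hab).isUnit).pow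
  have h := natDegree_le_of_dvd hdvd hR0
  rw [natDegree_prod_of_monic _ _ fun a _ => (monic_X_sub_C a).pow M] at h
  simp only [natDegree_pow, natDegree_X_sub_C, Finset.sum_const, smul_eq_mul, mul_one] at h
  rw [mul_comm]
  exact h.trans hdeg

end Stepanov


/-! ### Choice of parameters and existence of a good point -/

section Existence

open Nat in
/-- Pair the factors `i + 1` and `r - i` of `r ! ^ 2`; each product is at least `r`. -/
theorem pow_self_le_factorial_sq (r : ℕ) : r ^ r ≤ r ! ^ 2 := by
  have h1 : ∏ i ∈ Finset.range r, (i + 1) = r ! := Finset.prod_range_add_one_eq_factorial r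
  have h2 : ∏ i ∈ Finset.range r, (r - 1 - i + 1) = r ! := by
    rw [Finset.prod_range_reflect (fun i => i + 1) r, h1]
  calc r ^ r = ∏ _i ∈ Finset.range r, r := by simp
    _ ≤ ∏ i ∈ Finset.range r, (i + 1) * (r - 1 - i + 1) := Finset.prod_le_prod' fun i hi => by
      have hi : i < r := Finset.mem_range.mp hi
      obtain ⟨j, rfl⟩ := Nat.exists_eq_add_of_lt hi
      rw [show i + j + 1 - 1 - i + 1 = j + 1 by omega]
      nlinarith [Nat.zero_le (i * j)]
    _ = r ! ^ 2 := by rw [Finset.prod_mul_distrib, h1, h2, sq]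

/-- The counting condition of `exists_stepanov` for `r = k + 2`, `N = r ^ (r - 1)` tuples,
`P = (r - 1)!` good ones, and the parameters `w = r !`, `M = 2 * k * w`, `J = M - k`. The bound
`r ^ r ≤ w ^ 2` is what makes the saving `P` in the number of tuples outweigh the loss of `k` in
`J` against `M`, provided `A` is large. -/
theorem stepanov_count {k A w N P T R₀ : ℕ} (hk : 1 ≤ k) (hN : (k + 2) * N = R₀) (hN0 : 0 < N)
    (hP : (k + 2) * P = w) (hw : R₀ ≤ w ^ 2) (hw0 : 0 < w)
    (hA : 4 * k * (k + 1) * R₀ < A) (hT : T + P ≤ N) :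
    2 * k * w * (T * (A + (2 * k * w - k) + 2 * k * w * k)) < (2 * k * w - k) * (N * A) := by
  obtain ⟨M, hM⟩ : ∃ M, 2 * k * w = M + k := ⟨2 * k * w - k, by
    have h : k * 1 ≤ k * (2 * w) := Nat.mul_le_mul_left _ (by omega)
    have h' : k * (2 * w) = 2 * k * w := by ring
    omega⟩
  rw [hM, Nat.add_sub_cancel]
  zify at *
  have h0 : (0 : ℤ) < k := by linarith
  -- multiplication by `k + 2` expresses `N` and `P` through `R₀` and `w`
  have key : (N : ℤ) * A + 2 * w * N * (2 * k * w) * (k + 1) < 2 * w * P * A := by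
    have h1 : ((k : ℤ) + 2) * (N * A + 2 * w * N * (2 * k * w) * (k + 1))
        < (k + 2) * (2 * w * P * A) := by
      have e1 : ((k : ℤ) + 2) * (N * A + 2 * w * N * (2 * k * w) * (k + 1))
          = R₀ * A + w ^ 2 * (4 * k * (k + 1) * R₀) := by rw [← hN]; ring
      have e2 : ((k : ℤ) + 2) * (2 * w * P * A) = w ^ 2 * A + w ^ 2 * A := by rw [← hP]; ring
      rw [e1, e2]
      have hA0 : (0 : ℤ) ≤ A := by positivity
      have hw2 : (0 : ℤ) < w ^ 2 := by positivity
      nlinarith [mul_le_mul_of_nonneg_right hw hA0, mul_lt_mul_of_pos_left hA hw2]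
    exact lt_of_mul_lt_mul_left h1 (by positivity)
  have hB : (0 : ℤ) ≤ A + M + (M + k) * k := by positivity
  have h2 : ((M : ℤ) + k) * (T * (A + M + (M + k) * k))
      ≤ (M + k) * ((N - P) * (A + M + (M + k) * k)) := by
    apply mul_le_mul_of_nonneg_left _ (by positivity)
    exact mul_le_mul_of_nonneg_right (by linarith) hB
  have hP0 : (0 : ℤ) ≤ P := by positivity
  have h3 : ((N : ℤ) - P) * (A + M + (M + k) * k) ≤ N * (A + 2 * k * w * (k + 1)) - P * A := by
    have : (A : ℤ) + M + (M + k) * k = A + 2 * k * w * (k + 1) - k := by rw [hM]; ring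
    have h5 : (0 : ℤ) ≤ M + (M + k) * k := by positivity
    have h6 : ((N : ℤ) - P) * (A + M + (M + k) * k)
      = N * (A + 2 * k * w * (k + 1)) - P * A - N * k - P * (M + (M + k) * k) := by
      linear_combination (N : ℤ) * this
    have h7 : (0 : ℤ) ≤ N * k := by positivity
    have h8 : (0 : ℤ) ≤ P * (M + (M + k) * k) := by positivity
    linarith
  have h4 : ((M : ℤ) + k) * (N * (A + 2 * k * w * (k + 1)) - P * A) < M * (N * A) := by
    have : (M : ℤ) = 2 * k * w - k := by linarith
    have h5 : ((M : ℤ) + k) * (N * (A + 2 * k * w * (k + 1)) - P * A) - M * (N * A)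
        = k * (N * A + 2 * w * N * (2 * k * w) * (k + 1) - 2 * w * P * A) := by
      rw [this]; ring
    nlinarith
  calc _ ≤ _ := h2
    _ ≤ _ := mul_le_mul_of_nonneg_left h3 (by positivity)
    _ < _ := h4

open Nat in
/-- The parameters are those of `stepanov_count` with `A = r ^ (r + 3) - (r - 1)`, essentially
the largest `A` for which `q > r ^ (2 r + 2)` gives the degree condition of `zero_estimate`. If every point
were bad, `R` would have zeros of order `M` at all but `r + 1` points, hence degree roughly `M q`. Its
degree is at most about `q * (J - 1) + (r - 1) ^ 2 * s`, which is smaller since `(r - 1) ^ 2 * s` is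
less than `(r - 1) * q`. -/
theorem exists_avoiding_large {F : Type*} [Field F] [Fintype F] {ι : Type*} [Fintype ι] {r s : ℕ}
    (hrs : r * s = Fintype.card F - 1) (hr : 3 ≤ r) (hι : Fintype.card ι + 1 = r)
    (hbig : r ^ (2 * r + 2) < Fintype.card F) {d : ι → F} (hd : ∀ i, d i ≠ 0)
    (hinj : Function.Injective d) (T : Finset (ι → F)) (hT : T.card + (r - 1)! ≤ r ^ (r - 1)) :
    ∃ b : F, b ≠ 0 ∧ b ≠ 1 ∧ (∀ i, 1 + d i * b ≠ 0) ∧ (fun i => (1 + d i * b) ^ s) ∉ T := by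
  classical
  by_contra! hcon
  obtain ⟨k, rfl⟩ : ∃ k, r = k + 2 := ⟨r - 2, by omega⟩
  have hk : 1 ≤ k := by omega
  have hm : Fintype.card ι = k + 1 := by omega
  have : Nonempty ι := Fintype.card_pos_iff.mp (by omega)
  set q := Fintype.card F with hq
  set w := (k + 2)! with hw
  have hw0 : 0 < w := Nat.factorial_pos _
  have hwR : w ≤ (k + 2) ^ (k + 2) := Nat.factorial_le_pow _
  have hR0 : k + 2 ≤ (k + 2) ^ (k + 2) := Nat.le_self_pow (by omega) _
  set R₀ := (k + 2) ^ (k + 2) with hR₀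
  obtain ⟨A, hA⟩ : ∃ A, (k + 2) ^ 3 * R₀ = A + (k + 1) :=
    ⟨(k + 2) ^ 3 * R₀ - (k + 1), by
      have : 1 * R₀ ≤ (k + 2) ^ 3 * R₀ := Nat.mul_le_mul_right _ (Nat.pos_of_ne_zero (by positivity))
      omega⟩
  have hAbig : 4 * k * (k + 1) * R₀ < A := by
    have : (4 * k * (k + 1) + 1) * R₀ ≤ (k + 2) ^ 3 * R₀ := by
      apply Nat.mul_le_mul_right; nlinarith [sq_nonneg k, Nat.zero_le (k ^ 3)]
    nlinarith
  have hcount := stepanov_count (N := (k + 2) ^ (k + 1)) (P := (k + 1)!) (T := T.card) hk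
    (pow_succ' (k + 2) (k + 1)).symm (by positivity) (w := w) (Nat.factorial_succ (k + 1)).symm
    (pow_self_le_factorial_sq _) hw0 hAbig (by simpa using hT)
  have hqbig : (k + 2) ^ (k + 1) * ((k + 2) ^ 3 * R₀) < q := by
    refine lt_of_eq_of_lt ?_ hbig
    rw [hR₀]; ring
  have hA1 : 1 ≤ A := by omega
  have hMle : 2 * k * w * (k + 3) ≤ (k + 2) ^ 3 * R₀ := by
    calc 2 * k * w * (k + 3) ≤ 2 * k * R₀ * (k + 3) := by gcongr
      _ = (2 * k * (k + 3)) * R₀ := by ring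
      _ ≤ _ := by
        apply Nat.mul_le_mul_right; nlinarith [sq_nonneg k, Nat.zero_le (k ^ 3)]
  have hqs : q = (k + 2) * s + 1 := by
    have : 0 < q := Fintype.card_pos
    omega
  -- `s` is much larger than `(k + 2) ^ 3 * R₀`
  have hsbig : (k + 2) ^ 3 * R₀ ≤ s := by
    have h1 : (k + 2) * ((k + 2) ^ k * ((k + 2) ^ 3 * R₀)) ≤ (k + 2) * s := by
      have : (k + 2) ^ (k + 1) * ((k + 2) ^ 3 * R₀)
        = (k + 2) * ((k + 2) ^ k * ((k + 2) ^ 3 * R₀)) := by ring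
      omega
    have h2 := Nat.le_of_mul_le_mul_left h1 (by omega)
    refine le_trans (Nat.le_mul_of_pos_left _ (by positivity)) h2
  have hbound := stepanov_bound hrs hd hinj T (A := A) (J := 2 * k * w - k) (M := 2 * k * w)
    (by
      rw [hm, show A - 1 + (k + 1) = (k + 2) ^ 3 * R₀ - 1 by omega]
      exact lt_of_le_of_lt (Nat.mul_le_mul_left _ (Nat.sub_le _ _)) hqbig)
    (by nlinarith) (by rw [hm]; simpa using hcount)
    (Finset.univ.filter fun a =>
      (∀ i, 1 + d i * a ≠ 0) ∧ (fun i => (1 + d i * a) ^ s) ∈ T)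
    (fun a ha => by simpa using ha)
  set S := (Finset.univ.filter fun a : F =>
      (∀ i, 1 + d i * a ≠ 0) ∧ (fun i => (1 + d i * a) ^ s) ∈ T) with hS
  have hSq : q ≤ S.card + (k + 3) := by
    have hsub : (Finset.univ : Finset F) ⊆
        S ∪ (({0, 1} : Finset F) ∪ Finset.univ.image fun i => -(d i)⁻¹) := by
      intro b _
      by_cases h0 : b = 0
      · simp [h0]
      by_cases h1 : b = 1
      · simp [h1]
      by_cases h2 : ∀ i, 1 + d i * b ≠ 0
      · exact Finset.mem_union_left _ (by simpa [hS] using ⟨h2, hcon b h0 h1 h2⟩)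
      · push Not at h2
        obtain ⟨i, hi⟩ := h2
        refine Finset.mem_union_right _ (Finset.mem_union_right _ ?_)
        refine Finset.mem_image.mpr ⟨i, Finset.mem_univ _, ?_⟩
        have := hd i
        field_simp
        linear_combination -hi
    have h1 := Finset.card_le_card hsub
    have h2 := Finset.card_union_le S (({0, 1} : Finset F) ∪ Finset.univ.image fun i => -(d i)⁻¹)
    have h3 := Finset.card_union_le ({0, 1} : Finset F) (Finset.univ.image fun i => -(d i)⁻¹)
    have h4 : (Finset.univ.image fun i => -(d i)⁻¹).card ≤ k + 1 := by
      rw [← hm]; exact Finset.card_image_le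
    have h5 := Finset.card_le_two (a := (0 : F)) (b := 1)
    rw [Finset.card_univ] at h1
    omega
  rw [hm, ← hq] at hbound
  obtain ⟨M, hM⟩ : ∃ M, 2 * k * w = M + k + 1 := ⟨2 * k * w - k - 1, by
    have : 2 * k * 1 ≤ 2 * k * w := Nat.mul_le_mul_left _ hw0
    omega⟩
  rw [show 2 * k * w - k - 1 = M by omega, show k + 2 - 1 = k + 1 by omega] at hbound
  -- the gain `(k + 1) * (s + 1)` in the degree comparison beats `A + M * (k + 3)`
  have hAM : A + 2 * k * w * (k + 3) < s + s := by omega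
  rw [hM] at hbound hAM
  have h1 : (M + k + 1) * q ≤ (M + k + 1) * S.card + (M + k + 1) * (k + 3) := by
    rw [← mul_add]; exact Nat.mul_le_mul_left _ hSq
  have h2 : (M + k + 1) * q + 1 ≤ A + q * M + (k + 1) * (s * (k + 1)) + (M + k + 1) * (k + 3) := by
    omega
  rw [hqs] at h2
  have h3 : 1 * s ≤ k * s := Nat.mul_le_mul_right _ hk
  nlinarith

/-- For `r = 2` there is at most one bad value, and a degree count suffices. -/
theorem exists_avoiding_two {F : Type*} [Field F] [Fintype F] {ι : Type*} [Fintype ι] {s : ℕ}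
    (hrs : 2 * s = Fintype.card F - 1) (hι : Fintype.card ι = 1)
    (hbig : 64 < Fintype.card F) {d : ι → F} (hd : ∀ i, d i ≠ 0)
    (T : Finset (ι → F)) (hT : T.card ≤ 1) :
    ∃ b : F, b ≠ 0 ∧ b ≠ 1 ∧ (∀ i, 1 + d i * b ≠ 0) ∧ (fun i => (1 + d i * b) ^ s) ∉ T := by
  obtain ⟨i₀, hi₀⟩ := Fintype.card_eq_one_iff.mp hι
  obtain ⟨c, hc⟩ : ∃ c : F, ∀ t ∈ T, t i₀ = c := by
    rcases Finset.card_le_one_iff_subset_singleton.mp hT with ⟨t, ht⟩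
    exact ⟨t i₀, fun t' h => by rw [Finset.mem_singleton.mp (ht h)]⟩
  have hlin : (linPoly (d i₀)).natDegree = 1 := by
    have : linPoly (d i₀) = C (d i₀) * X + C 1 := by simp [linPoly, add_comm]
    rw [this, natDegree_linear (hd i₀)]
  have hdeg : (linPoly (d i₀) ^ s - C c).natDegree = s := by
    rw [natDegree_sub_C, natDegree_pow, hlin, mul_one]
  have hne : linPoly (d i₀) ^ s - C c ≠ 0 := by
    intro h
    rw [h, natDegree_zero] at hdeg
    omega
  have hne' : X * (X - C 1) * linPoly (d i₀) * (linPoly (d i₀) ^ s - C c) ≠ 0 :=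
    mul_ne_zero (mul_ne_zero (mul_ne_zero X_ne_zero (X_sub_C_ne_zero 1)) (linPoly_ne_zero _)) hne
  obtain ⟨b, hb⟩ := exists_eval_ne_zero_of_natDegree_lt_card _ hne' (by
    rw [Cardinal.mk_fintype, Nat.cast_lt]
    have h1 := natDegree_mul_le (p := X * (X - C 1) * linPoly (d i₀))
      (q := linPoly (d i₀) ^ s - C c)
    have h2 := natDegree_mul_le (p := X * (X - C (1 : F))) (q := linPoly (d i₀))
    have h3 := natDegree_mul_le (p := (X : F[X])) (q := X - C (1 : F))
    rw [natDegree_X, natDegree_X_sub_C] at h3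
    omega)
  simp only [eval_mul, eval_sub, eval_X, eval_C, eval_pow, mul_ne_zero_iff, sub_ne_zero] at hb
  obtain ⟨⟨⟨h0, h1⟩, h2⟩, h3⟩ := hb
  have hev : (linPoly (d i₀)).eval b = 1 + d i₀ * b := by simp [linPoly]
  rw [hev] at h2 h3
  exact ⟨b, h0, h1, fun i => by rw [hi₀ i]; exact h2, fun hmem => h3 (hc _ hmem)⟩

open Nat in
/-- If at most `r ^ (r - 1) - (r - 1)!` tuples are forbidden, some `b` other than `0` and `1` has all
`1 + d i * b` nonzero and a tuple `((1 + d i * b) ^ s)` which is allowed. -/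
theorem exists_avoiding {F : Type*} [Field F] [Fintype F] {ι : Type*} [Fintype ι] {r s : ℕ}
    (hq : 2 < Fintype.card F)
    (hrs : r * s = Fintype.card F - 1) (hι : Fintype.card ι + 1 = r)
    (hbig : r ^ (2 * r + 2) < Fintype.card F) {d : ι → F} (hd : ∀ i, d i ≠ 0)
    (hinj : Function.Injective d) (T : Finset (ι → F)) (hT : T.card + (r - 1)! ≤ r ^ (r - 1)) :
    ∃ b : F, b ≠ 0 ∧ b ≠ 1 ∧ (∀ i, 1 + d i * b ≠ 0) ∧ (fun i => (1 + d i * b) ^ s) ∉ T := by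
  classical
  rcases lt_or_ge r 3 with h | h
  · obtain rfl | rfl : r = 1 ∨ r = 2 := by omega
    · have hempty : IsEmpty ι := Fintype.card_eq_zero_iff.mp (by omega)
      have hT0 : T = ∅ := Finset.card_eq_zero.mp (by simpa using hT)
      obtain ⟨b, hb⟩ : ∃ b, b ∉ ({0, 1} : Finset F) := by
        by_contra! hcon
        have h1 := Finset.card_le_card (fun x _ => hcon x : Finset.univ ⊆ ({0, 1} : Finset F))
        have h2 := Finset.card_le_two (a := (0 : F)) (b := 1)
        rw [Finset.card_univ] at h1
        omega
      simp only [Finset.mem_insert, Finset.mem_singleton, not_or] at hb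
      exact ⟨b, hb.1, hb.2, fun i => hempty.elim i, by simp [hT0]⟩
    · exact exists_avoiding_two hrs (by omega) (by simpa using hbig) hd T (by simpa using hT)
  · exact exists_avoiding_large hrs h hι hbig hd hinj T hT

/-! ### Counting the bad tuples -/

/-- The map `z ↦ z ^ n * t z` on the group `G`, where the tuple `t`, indexed by the nontrivial
elements, is extended by the value `1` at `1`. -/
def extendByOne {G : Type*} [Group G] [DecidableEq G] (n : ℕ) (t : {z : G // z ≠ 1} → G)
    (z : G) : G :=
  z ^ n * if h : z = 1 then 1 else t ⟨z, h⟩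

open Nat in
/-- Every permutation `π` of the nontrivial elements comes from the tuple `z ↦ (z ^ n)⁻¹ * π z`,
which gives `(r - 1)!` tuples with `extendByOne n t` injective. -/
theorem card_not_injective_le {G : Type*} [Group G] [Fintype G] [DecidableEq G] (n : ℕ) :
    (Finset.univ.filter fun t : {z : G // z ≠ 1} → G =>
      ¬ Function.Injective (extendByOne n t)).card + (Fintype.card G - 1)! ≤
      Fintype.card G ^ (Fintype.card G - 1) := by
  have hcard : Fintype.card {z : G // z ≠ 1} = Fintype.card G - 1 := by
    rw [Fintype.card_subtype_compl, Fintype.card_subtype_eq]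
  have htot : Fintype.card ({z : G // z ≠ 1} → G) = Fintype.card G ^ (Fintype.card G - 1) := by
    rw [Fintype.card_fun, hcard]
  have hsplit := Finset.card_filter_add_card_filter_not (s := Finset.univ)
    (fun t : {z : G // z ≠ 1} → G => Function.Injective (extendByOne n t))
  rw [Finset.card_univ, htot] at hsplit
  have hperm : (Fintype.card G - 1)! ≤ (Finset.univ.filter fun t : {z : G // z ≠ 1} → G =>
      Function.Injective (extendByOne n t)).card := by
    rw [← hcard, ← Fintype.card_perm, ← Finset.card_univ]
    refine Finset.card_le_card_of_injOn (fun π z => ((z : G) ^ n)⁻¹ * (π z : G)) ?_ ?_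
    · intro π _
      have hval : ∀ z : G, extendByOne n (fun z => ((z : G) ^ n)⁻¹ * (π z : G)) z
          = if h : z = 1 then 1 else (π ⟨z, h⟩ : G) := by
        intro z
        unfold extendByOne
        split_ifs with h
        · simp [h]
        · simp
      simp only [Finset.coe_filter, Finset.mem_univ, true_and, Set.mem_ofPred_eq]
      intro z z' hz
      rw [hval, hval] at hz
      split_ifs at hz with h h' h'
      · rw [h, h']
      · exact absurd hz.symm (π _).2
      · exact absurd hz (π _).2
      · simpa using π.injective (Subtype.ext hz)
    · intro π _ π' _ h
      ext z
      simpa using congrFun h z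
  omega

end Existence

end PermutationBinomial

/-! ### Reduction of the binomial to a map on `s`-th powers -/

/-- Let `q > 2` be a prime power, `n, k > 0` with `gcd(n, k, q-1) = 1`, and
`r := (q-1)/gcd(k, q-1)`. If `q > r^{2r+2}`, then there exists `a ≠ 0` in `F_q` such that
`x^n (x^k + a)` permutes `F_q`. -/
theorem permutation_binomial_exists_of_large_q (F : Type) [Field F] [Fintype F]
    (hq : 2 < Fintype.card F) (n k : ℕ) (hn : 0 < n) (hk : 0 < k)
    (hgcd : Nat.gcd n (Nat.gcd k (Fintype.card F - 1)) = 1)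
    (hbig : ((Fintype.card F - 1) / Nat.gcd k (Fintype.card F - 1)) ^
        (2 * ((Fintype.card F - 1) / Nat.gcd k (Fintype.card F - 1)) + 2)
      < Fintype.card F) :
    ∃ a : F, a ≠ 0 ∧ Function.Bijective (fun x : F => x ^ n * (x ^ k + a)) := by
  classical
  have hs0 : 0 < Nat.gcd k (Fintype.card F - 1) := Nat.gcd_pos_of_pos_left _ hk
  have hcop : Nat.Coprime (k / Nat.gcd k (Fintype.card F - 1))
      ((Fintype.card F - 1) / Nat.gcd k (Fintype.card F - 1)) := Nat.coprime_div_gcd_div_gcd hs0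
  have hke : Nat.gcd k (Fintype.card F - 1) * (k / Nat.gcd k (Fintype.card F - 1)) = k :=
    Nat.mul_div_cancel' (Nat.gcd_dvd_left _ _)
  have hrs : (Fintype.card F - 1) / Nat.gcd k (Fintype.card F - 1) *
      Nat.gcd k (Fintype.card F - 1) = Fintype.card F - 1 :=
    Nat.div_mul_cancel (Nat.gcd_dvd_right _ _)
  have hHcard : Nat.card (powMonoidHom (Nat.gcd k (Fintype.card F - 1)) : Fˣ →* Fˣ).range =
      (Fintype.card F - 1) / Nat.gcd k (Fintype.card F - 1) := by
    rw [IsCyclic.card_powMonoidHom_range, Nat.card_eq_fintype_card, Fintype.card_units]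
    congr 1
    rw [Nat.gcd_comm, Nat.gcd_eq_left (Nat.gcd_dvd_right _ _)]
  set s := Nat.gcd k (Fintype.card F - 1)
  set r := (Fintype.card F - 1) / s
  set e := k / s
  set H := (powMonoidHom s : Fˣ →* Fˣ).range
  have hHpow : ∀ u : Fˣ, u ^ s ∈ H := fun u => ⟨u, rfl⟩
  have hHr : ∀ z ∈ H, z ^ r = 1 := by
    rintro _ ⟨u, rfl⟩
    rw [powMonoidHom_apply, ← pow_mul, mul_comm, hrs, ← Fintype.card_units, pow_card_eq_one]
  -- `z ↦ z ^ e` is injective on `H` because `e` is prime to `r`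
  have hHe : ∀ z ∈ H, z ^ e = 1 → z = 1 := fun z hz hze =>
    by simpa [hcop.gcd_eq_one] using pow_gcd_eq_one.mpr ⟨hze, hHr z hz⟩
  let d : {z : H // z ≠ 1} → F := fun z => (((z : H) : Fˣ) : F) ^ e - 1
  have hd : ∀ z, d z ≠ 0 := by
    intro z hz
    refine z.2 (Subtype.ext (hHe _ z.1.2 (Units.ext ?_)))
    simpa [d, sub_eq_zero] using hz
  have hinj : Function.Injective d := by
    intro z w hzw
    have h1 : ((z : H) : Fˣ) ^ e = ((w : H) : Fˣ) ^ e := by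
      apply Units.ext
      simpa [d] using hzw
    have h2 := hHe _ (H.div_mem z.1.2 w.1.2) (by rw [div_pow, h1, div_self'])
    exact Subtype.ext (Subtype.ext (div_eq_one.mp h2))
  have hHcard' : Fintype.card H = r := by rw [← Nat.card_eq_fintype_card, hHcard]
  have hι : Fintype.card {z : H // z ≠ 1} + 1 = r := by
    have : 0 < Fintype.card H := Fintype.card_pos
    rw [Fintype.card_subtype_compl, Fintype.card_subtype_eq, hHcard']
    omega
  let T : Finset ({z : H // z ≠ 1} → F) :=
    (Finset.univ.filter fun t : {z : H // z ≠ 1} → H =>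
      ¬ Function.Injective (PermutationBinomial.extendByOne n t)).image fun t z => ((t z : Fˣ) : F)
  have hT : T.card + Nat.factorial (r - 1) ≤ r ^ (r - 1) := by
    have h1 := PermutationBinomial.card_not_injective_le (G := H) n
    rw [hHcard'] at h1
    exact (Nat.add_le_add_right Finset.card_image_le _).trans h1
  obtain ⟨b, hb0, hb1, hb, hbT⟩ := PermutationBinomial.exists_avoiding hq hrs hι hbig hd hinj T hT
  let t : {z : H // z ≠ 1} → H := fun z => ⟨Units.mk0 (1 + d z * b) (hb z) ^ s, hHpow _⟩
  have ht : Function.Injective (PermutationBinomial.extendByOne n t) := by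
    by_contra hcon
    refine hbT (Finset.mem_image.mpr ⟨t, by simpa using hcon, ?_⟩)
    funext z
    simp [t]
  obtain ⟨a, ha⟩ : ∃ a, a = (1 - b) / b := ⟨_, rfl⟩
  have hab : a * b = 1 - b := by rw [ha, div_mul_cancel₀ _ hb0]
  have ha0 : a ≠ 0 := by
    rw [ha]; exact div_ne_zero (sub_ne_zero.mpr (Ne.symm hb1)) hb0
  -- the `s`-th power of the binomial at `u` depends only on `u ^ s`
  have hval : ∀ u : Fˣ, (((PermutationBinomial.extendByOne n t ⟨u ^ s, hHpow u⟩ : H) : Fˣ) : F) =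
      ((u : F) ^ n * ((u : F) ^ k + a)) ^ s * b ^ s := by
    intro u
    have h1 : ((u : F) ^ k + a) * b = 1 + (((u : F) ^ s) ^ e - 1) * b := by
      rw [← pow_mul, hke, add_mul, hab]; ring
    rw [mul_pow, mul_assoc, ← mul_pow _ b, h1]
    unfold PermutationBinomial.extendByOne
    split_ifs with h
    · have h2 : (u : F) ^ s = 1 := by
        simpa using congrArg (fun z : H => ((z : Fˣ) : F)) h
      rw [pow_right_comm, h2]
      simp [h]
    · simp [t, d, pow_right_comm]
  have hne : ∀ u : Fˣ, (u : F) ^ k + a ≠ 0 := by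
    intro u h
    have h1 := hval u
    rw [h, mul_zero, zero_pow hs0.ne', zero_mul] at h1
    exact Units.ne_zero _ h1
  refine ⟨a, ha0, Finite.injective_iff_bijective.mp ?_⟩
  intro x y hxy
  simp only at hxy
  by_cases hx : x = 0
  · by_contra hy
    subst hx
    rw [zero_pow hn.ne', zero_mul] at hxy
    have hy0 : y ≠ 0 := fun h => hy h.symm
    exact mul_ne_zero (pow_ne_zero n hy0) (hne (Units.mk0 y hy0)) hxy.symm
  by_cases hy : y = 0
  · subst hy
    rw [zero_pow hn.ne', zero_mul] at hxy
    exact absurd hxy (mul_ne_zero (pow_ne_zero n hx) (hne (Units.mk0 x hx)))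
  lift x to Fˣ using IsUnit.mk0 x hx with u
  lift y to Fˣ using IsUnit.mk0 y hy with v
  have hs : u ^ s = v ^ s := by
    have : PermutationBinomial.extendByOne n t ⟨u ^ s, hHpow u⟩ = PermutationBinomial.extendByOne n t ⟨v ^ s, hHpow v⟩ := by
      apply Subtype.ext
      apply Units.ext
      rw [hval, hval, hxy]
    exact congrArg Subtype.val (ht this)
  have hkk : (u : F) ^ k = (v : F) ^ k := by
    have := congrArg (fun z : Fˣ => (z : F)) hs
    simp only [Units.val_pow_eq_pow_val] at this
    rw [← hke, pow_mul, pow_mul, this]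
  have hnn : u ^ n = v ^ n := by
    apply Units.ext
    rw [hkk] at hxy
    simpa using mul_right_cancel₀ (hne v) hxy
  -- now `u / v` is both an `n`-th and an `s`-th root of unity
  have hone : (u / v) ^ Nat.gcd n s = 1 :=
    pow_gcd_eq_one.mpr ⟨by rw [div_pow, hnn, div_self'], by rw [div_pow, hs, div_self']⟩
  rw [hgcd, pow_one, div_eq_one] at hone
  rw [hone]
end

section
/- Let q be a prime power and let r ≥ 1 be an integer dividing q−1. Then the number of elements a ∈ F_q with the property that for every pair of integers n, k > 0 with gcd(n, q−1) = 1 and gcd(k, q−1) = (q−1)/r the polynomial x^n (x^k + a) permutes F_q, is at least (q − 2√q + 1)/r^{r−1} − √q·(r−3) − 2. -/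
/-!
Let `q = |F|`, let `χ` be a multiplicative character of `F` of order `r`, and let
`ζ₁, …, ζ_r` be the `r`-th roots of unity in `F`. If `gcd(k, q-1) = (q-1)/r`, then `x ^ k` is one
of the `ζ_i` for every `x ≠ 0`. Call `a` good if the values `χ (ζ_i + a)` are all equal and nonzero.
For a good `a`, applying `χ` to `x ^ n * (x ^ k + a) = y ^ n * (y ^ k + a)` gives
`χ x ^ n = χ y ^ n`, hence `χ x = χ y` since `n` is prime to `r`, hence `x ^ k = y ^ k`, hence
`x ^ n = y ^ n` and `x = y` (`bijective_binomial`). So it is enough to count the good `a`.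

The good `a` are detected by `T(a) = ∑ ∏ χ (ζ_i + a) ^ e_i`, the sum running over the `r ^ (r-1)`
exponent vectors `e` with entries in `[0, r)` and `r ∣ ∑ e_i`. It vanishes when the `χ (ζ_i + a)`
are nonzero and not all equal, `|T(a)| ≤ r ^ (r-1)` always, and `|T(a)| ≤ r ^ (r-2)` for the `r`
elements `a = -ζ_i`. Thus `|∑ T(a)| ≤ r ^ (r-1) * (N + 1)`, with `N` the number of good `a`
(`norm_sum_detect_le`). Interchanging the sums, `e = 0` contributes `q`, and a vector `e ≠ 0` with
`d` nonzero entries contributes at most `1 + (d - 2) √q` by Weil's bound, where the saving of one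
root comes from `r ∣ ∑ e_i` (`weil_bound_of_dvd_sum`). The sum of `d` over all `e` is
`(r-1) * r ^ (r-1)`, and the claim follows (`le_norm_sum_detect`).

Weil's bound `|∑_a ∏_{β ∈ s} χ (β - a) ^ e_β| ≤ (|s| - 1) √q` (`weil_bound`) is proved from scratch.
* The `L`-series of `g ↦ ∏_β χ (g(β)) ^ e_β` on monic polynomials is a polynomial of degree less
  than `|s|` (`lCoeff_charProd_eq_zero`). By its Euler product, the coefficients of its
  logarithmic derivative are the analogous character sums over the extensions of `F`
  (`natCast_mul_lCoeff`, `sum_minpoly_eq_logCoeff`, `norm_algebraMap_sub`), which are therefore,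
  up to sign, the power sums of at most `|s| - 1` complex numbers (`exists_powerSum`).
* Stepanov's method bounds the sums over the extensions of even degree `2m` by `O(q ^ m)`
  (`card_le_of_eval_pow_eq`, `norm_sum_mulChar_norm_le`). A nonzero auxiliary polynomial vanishing
  at all points where `χ` takes a given value is built by a pigeonhole argument, and its
  nonvanishing is shown with a resultant (`not_X_pow_dvd_sum`).
* Power sums of size `O(q ^ m)` force the numbers to have modulus at most `√q`
  (`norm_le_of_powerSum_le`).
-/

/-! ### Power sums of complex numbers -/

open Polynomial in
/-- If the power sums of a multiset are `O(R ^ m)`, all its elements have modulus at most `R`.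
A polynomial `p` vanishing at the elements other than `w` turns a fixed linear combination of the
power sums of order `m, m + 1, …` into a multiple of `w ^ m`. -/
lemma norm_le_of_powerSum_le (W : Multiset ℂ) (C R : ℝ) (hR : 0 < R) (m₀ : ℕ)
    (h : ∀ m ≥ m₀, ‖(W.map (· ^ m)).sum‖ ≤ C * R ^ m) : ∀ w ∈ W, ‖w‖ ≤ R := by
  classical
  intro w hw
  set p : ℂ[X] := ∏ v ∈ W.toFinset.erase w, (X - Polynomial.C v) with hp
  have hpw : p.eval w ≠ 0 := by
    rw [hp, eval_prod, Finset.prod_ne_zero_iff]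
    intro v hv
    simpa [sub_eq_zero] using (Finset.ne_of_mem_erase hv).symm
  have key : ∀ m, ∑ t ∈ Finset.range (p.natDegree + 1), p.coeff t * (W.map (· ^ (m + t))).sum
      = W.count w * (w ^ m * p.eval w) := by
    intro m
    have h1 : ∀ v ∈ W, v ^ m * p.eval v = if v = w then w ^ m * p.eval w else 0 := by
      intro v hv
      split_ifs with hvw
      · rw [hvw]
      · have : p.eval v = 0 := by
          rw [hp, eval_prod]
          exact Finset.prod_eq_zero (Finset.mem_erase.2 ⟨hvw, by simpa using hv⟩) (by simp)
        simp [this]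
    have h2 : (W.map fun v => v ^ m * p.eval v).sum = W.count w * (w ^ m * p.eval w) := by
      rw [Multiset.map_congr rfl h1, Finset.sum_multiset_map_count]
      rw [Finset.sum_eq_single w]
      · simp
      · intro b _ hb; simp [hb]
      · intro h; exact absurd (by simpa using hw) h
    rw [← h2]
    have h3 : ∀ v : ℂ, v ^ m * p.eval v
        = ∑ t ∈ Finset.range (p.natDegree + 1), p.coeff t * v ^ (m + t) := by
      intro v
      rw [eval_eq_sum_range, Finset.mul_sum]
      refine Finset.sum_congr rfl fun t _ => ?_
      ring
    simp_rw [h3, ← Multiset.sum_map_mul_left]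
    rw [Multiset.sum_map_sum]
  by_contra! hlt
  set B : ℝ := ∑ t ∈ Finset.range (p.natDegree + 1), ‖p.coeff t‖ * (C * R ^ t)
  have hc : (1 : ℝ) ≤ W.count w := by
    exact_mod_cast Multiset.one_le_count_iff_mem.2 hw
  have hbd : ∀ m ≥ m₀, ‖w‖ ^ m * ‖p.eval w‖ ≤ B * R ^ m := by
    intro m hm
    calc ‖w‖ ^ m * ‖p.eval w‖ ≤ W.count w * (‖w‖ ^ m * ‖p.eval w‖) :=
          le_mul_of_one_le_left (by positivity) hc
      _ = ‖(W.count w * (w ^ m * p.eval w) : ℂ)‖ := by simp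
      _ ≤ _ := by
        rw [← key, Finset.sum_mul]
        refine (norm_sum_le _ _).trans (Finset.sum_le_sum fun t _ => ?_)
        rw [norm_mul, mul_assoc]
        refine mul_le_mul_of_nonneg_left ?_ (norm_nonneg _)
        refine (h _ (by omega)).trans (le_of_eq ?_)
        ring
  have hgt : 1 < ‖w‖ / R := by rwa [one_lt_div hR]
  obtain ⟨m, hm⟩ := ((tendsto_pow_atTop_atTop_of_one_lt hgt).eventually_gt_atTop
    (B / ‖p.eval w‖)).and (Filter.eventually_ge_atTop m₀) |>.exists
  have := hbd m hm.2
  have hpos : 0 < ‖p.eval w‖ := norm_pos_iff.2 hpw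
  have h4 := hm.1
  rw [div_pow, div_lt_div_iff₀ hpos (by positivity)] at h4
  linarith

open PowerSeries in
/-- The logarithmic derivative of `∏ (1 - w X)` is given by the power sums of the `w`. -/
lemma X_mul_derivative_prod (W : Multiset ℂ) :
    (X : PowerSeries ℂ) * derivative ℂ (W.map fun w => (1 - C w * X : PowerSeries ℂ)).prod
      = (W.map fun w => (1 - C w * X : PowerSeries ℂ)).prod *
        mk fun n => if n = 0 then 0 else -(W.map (· ^ n)).sum := by
  induction W using Multiset.induction with
  | empty =>
    have : (mk fun n => if n = 0 then 0 else -((0 : Multiset ℂ).map (· ^ n)).sum) = 0 := by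
      ext n; simp
    rw [this]; simp
  | cons w W ih =>
    rw [Multiset.map_cons, Multiset.prod_cons, Derivation.leibniz, mul_add, smul_eq_mul,
      smul_eq_mul, mul_left_comm, ih]
    have h1 : (mk fun n => if n = 0 then 0 else -((w ::ₘ W).map (· ^ n)).sum)
      = (mk fun n => if n = 0 then 0 else -(w ^ n)) +
        (mk fun n => if n = 0 then 0 else -(W.map (· ^ n)).sum) := by
      ext n
      by_cases hn : n = 0 <;> simp [hn]; ring
    have h2 : (X : PowerSeries ℂ) * derivative ℂ (1 - C w * X : PowerSeries ℂ)
        = (1 - C w * X) * mk fun n => if n = 0 then 0 else -(w ^ n) := by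
      have : derivative ℂ (1 - C w * X : PowerSeries ℂ) = - C w := by
        simp [Derivation.leibniz]
      rw [this, sub_mul, one_mul, mul_assoc]
      ext n
      rcases n with _ | _ | n
      · simp
      · simp [coeff_succ_X_mul, coeff_X]
      · simp [coeff_succ_X_mul, coeff_X, pow_succ, mul_comm]
    rw [h1]
    linear_combination (Multiset.map (fun w => (1 - C w * X : PowerSeries ℂ)) W).prod * h2

/-- If `∑ a n * T ^ n` is a polynomial of degree less than `D` with constant term `1`, whose
logarithmic derivative is `∑ S n * T ^ (n - 1)`, then the `S n` are, up to sign, the power sums of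
its at most `D - 1` inverse roots. -/
lemma exists_powerSum (a S : ℕ → ℂ) (D : ℕ) (hD : 0 < D) (ha0 : a 0 = 1)
    (ha : ∀ n, D ≤ n → a n = 0)
    (h : ∀ n : ℕ, (n : ℂ) * a n = ∑ p ∈ Finset.HasAntidiagonal.antidiagonal n, S p.1 * a p.2) :
    ∃ W : Multiset ℂ, W.card ≤ D - 1 ∧ ∀ n, n ≠ 0 → S n = -(W.map (· ^ n)).sum := by
  classical
  set A : Polynomial ℂ := ∑ i ∈ Finset.range D, Polynomial.monomial i (a i) with hA
  have hcoeff : ∀ n, A.coeff n = a n := by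
    intro n
    simp only [hA, Polynomial.finsetSum_coeff, Polynomial.coeff_monomial]
    simp
    intro hn; exact (ha n hn).symm
  have hA0 : A ≠ 0 := by
    intro h0
    have := hcoeff 0
    simp [h0, ha0] at this
  have heval : A.eval 0 = 1 := by rw [← Polynomial.coeff_zero_eq_eval_zero, hcoeff, ha0]
  have hdeg : A.natDegree ≤ D - 1 := by
    rw [Polynomial.natDegree_le_iff_coeff_eq_zero]
    intro n hn; rw [hcoeff]; exact ha n (by omega)
  have hne : ∀ ρ ∈ A.roots, ρ ≠ 0 := by
    rintro ρ hρ rfl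
    rw [Polynomial.mem_roots hA0, Polynomial.IsRoot.def, heval] at hρ
    exact one_ne_zero hρ
  have hspl := (IsAlgClosed.splits A).eq_prod_roots
  refine ⟨A.roots.map (·⁻¹), by
    rw [Multiset.card_map]; exact (Polynomial.card_roots' A).trans hdeg, ?_⟩
  have hfac : A = ((A.roots.map (·⁻¹)).map
      fun w => (1 - Polynomial.C w * Polynomial.X : Polynomial ℂ)).prod := by
    have h1 : (A.roots.map fun ρ => (Polynomial.X - Polynomial.C ρ)).prod
        = (A.roots.map fun ρ => Polynomial.C (-ρ)).prod *
          ((A.roots.map (·⁻¹)).map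
            fun w => (1 - Polynomial.C w * Polynomial.X : Polynomial ℂ)).prod := by
      rw [Multiset.map_map, ← Multiset.prod_map_mul]
      congr 1
      refine Multiset.map_congr rfl fun ρ hρ => ?_
      have : Polynomial.C (-ρ) * Polynomial.C ρ⁻¹ = (-1 : Polynomial ℂ) := by
        rw [← Polynomial.C_mul, neg_mul, mul_inv_cancel₀ (hne ρ hρ)]; simp
      simp only [Function.comp]
      rw [mul_sub, ← mul_assoc, this]; simp
      ring
    have h2 : A.leadingCoeff * (A.roots.map fun ρ => -ρ).prod = 1 := by
      rw [hspl] at heval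
      simpa [Polynomial.eval_multiset_prod, Multiset.map_map, Function.comp_def] using heval
    conv_lhs => rw [hspl, h1, ← mul_assoc]
    have h3 : (A.roots.map fun ρ => Polynomial.C (-ρ)).prod
        = Polynomial.C (A.roots.map fun ρ => -ρ).prod := by
      rw [map_multiset_prod, Multiset.map_map]; rfl
    rw [h3, ← Polynomial.C_mul, h2]; simp
  set W := A.roots.map (·⁻¹)
  have hps : (A : PowerSeries ℂ) = (W.map fun w => (1 - PowerSeries.C w * PowerSeries.X :
      PowerSeries ℂ)).prod := by
    conv_lhs => rw [hfac]
    rw [← Polynomial.coeToPowerSeries.ringHom_apply, map_multiset_prod, Multiset.map_map]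
    congr 1
    refine Multiset.map_congr rfl fun w _ => ?_
    simp
  have hder := X_mul_derivative_prod W
  rw [← hps] at hder
  have hder2 : (PowerSeries.X : PowerSeries ℂ) * PowerSeries.derivative ℂ (A : PowerSeries ℂ)
      = A * PowerSeries.mk S := by
    ext n
    rw [mul_comm (A : PowerSeries ℂ), PowerSeries.coeff_mul n (PowerSeries.mk S)]
    simp only [PowerSeries.coeff_mk, Polynomial.coeff_coe, hcoeff]
    rw [← h n]
    rcases n with _ | n
    · simp
    · rw [PowerSeries.coeff_succ_X_mul, PowerSeries.coeff_derivative]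
      simp [hcoeff]; ring
  rw [hder2] at hder
  have hA' : (A : PowerSeries ℂ) ≠ 0 := by simpa using hA0
  have := mul_left_cancel₀ hA' hder
  intro n hn
  have := congrArg (PowerSeries.coeff n) this
  simpa [hn] using this

/-! ### The L-series of a character on monic polynomials -/

section LFunction
open Polynomial Finset

lemma finite_monic_natDegree (F : Type) [Field F] [Finite F] (n : ℕ) :
    {g : F[X] | g.Monic ∧ g.natDegree = n}.Finite := by
  have : Function.Injective (fun g : {g : F[X] | g.Monic ∧ g.natDegree = n} =>
      fun i : Fin (n + 1) => (g : F[X]).coeff i) := by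
    rintro ⟨g, hg, hgn⟩ ⟨h, hh, hhn⟩ e
    ext i
    by_cases hi : i < n + 1
    · exact congrFun e ⟨i, hi⟩
    · simp only
      rw [coeff_eq_zero_of_natDegree_lt (by omega), coeff_eq_zero_of_natDegree_lt (by omega)]
  have := Finite.of_injective _ this
  exact Set.toFinite _

/-- The finite set of monic polynomials of degree `n` over a finite field. -/
noncomputable def monics (F : Type) [Field F] [Finite F] (n : ℕ) : Finset F[X] :=
  (finite_monic_natDegree F n).toFinset

variable {F : Type} [Field F] [Finite F]

lemma mem_monics {n : ℕ} {g : F[X]} : g ∈ monics F n ↔ g.Monic ∧ g.natDegree = n := by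
  simp [monics]

open Classical in
/-- The finite set of monic irreducible polynomials of degree `n` over a finite field. -/
noncomputable def monicIrreds (F : Type) [Field F] [Finite F] (n : ℕ) : Finset F[X] :=
  (monics F n).filter Irreducible

lemma mem_monicIrreds {n : ℕ} {g : F[X]} :
    g ∈ monicIrreds F n ↔ (g.Monic ∧ g.natDegree = n) ∧ Irreducible g := by
  simp [monicIrreds, mem_monics]

open Classical in
/-- The degree of a monic `g` is the sum of `deg P` over all prime powers `P ^ j` dividing `g`: the
analogue for polynomials of `log n = ∑ Λ(d)` over the divisors `d` of `n`. -/
lemma sum_natDegree_dvd {n : ℕ} {g : F[X]} (hg : g ∈ monics F n) :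
    ∑ d ∈ Icc 1 n, ∑ P ∈ monicIrreds F d, ∑ j ∈ Icc 1 n, (if P ^ j ∣ g then d else 0) = n := by
  rw [mem_monics] at hg
  have hg0 : g ≠ 0 := hg.1.ne_zero
  set N := UniqueFactorizationMonoid.normalizedFactors g with hN
  have hprod : N.prod = g := by
    rw [hN, UniqueFactorizationMonoid.prod_normalizedFactors_eq hg0, hg.1.normalize_eq_self]
  have hmon : ∀ P ∈ N, P.Monic ∧ Irreducible P := fun P hP => by
    have hi := UniqueFactorizationMonoid.irreducible_of_normalized_factor P hP
    refine ⟨?_, hi⟩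
    rw [← UniqueFactorizationMonoid.normalize_normalized_factor P hP]
    exact monic_normalize hi.ne_zero
  have hdeg : n = ∑ P ∈ N.toFinset, N.count P * P.natDegree := by
    rw [← hg.2, ← hprod, natDegree_multiset_prod_of_monic _ fun P hP => (hmon P hP).1,
      Finset.sum_multiset_map_count]
    simp only [smul_eq_mul]
  have hdvd : ∀ P : F[X], P.Monic → Irreducible P → ∀ j, P ^ j ∣ g ↔ j ≤ N.count P := by
    intro P hP hPi j
    rw [pow_dvd_iff_le_emultiplicity,
      UniqueFactorizationMonoid.emultiplicity_eq_count_normalizedFactors hPi hg0,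
      hP.normalize_eq_self]
    simp [hN]
  have hle : ∀ P ∈ N, N.count P * P.natDegree ≤ n := by
    intro P hP
    conv_rhs => rw [hdeg]
    exact Finset.single_le_sum (f := fun P => N.count P * P.natDegree) (fun _ _ => Nat.zero_le _)
      (Multiset.mem_toFinset.2 hP)
  have hinner : ∀ d ∈ Icc 1 n, ∀ P ∈ monicIrreds F d,
      ∑ j ∈ Icc 1 n, (if P ^ j ∣ g then d else 0) = N.count P * P.natDegree := by
    intro d hd P hP
    rw [mem_monicIrreds] at hP
    rw [← Finset.sum_filter, Finset.sum_const, smul_eq_mul, hP.1.2]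
    congr 1
    have : (Icc 1 n).filter (fun j => P ^ j ∣ g) = Icc 1 (N.count P) := by
      ext j
      simp only [mem_filter, mem_Icc, hdvd P hP.1.1 hP.2]
      have : N.count P ≤ n := by
        by_cases hPN : P ∈ N
        · refine le_trans ?_ (hle P hPN)
          exact Nat.le_mul_of_pos_right _ (hP.2.natDegree_pos)
        · simp [Multiset.count_eq_zero_of_notMem hPN]
      omega
    rw [this]; simp
  rw [Finset.sum_congr rfl fun d hd => Finset.sum_congr rfl (hinner d hd)]
  conv_rhs => rw [hdeg]
  rw [← Finset.sum_biUnion]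
  · symm
    apply Finset.sum_subset
    · intro P hP
      rw [Multiset.mem_toFinset] at hP
      rw [mem_biUnion]
      refine ⟨P.natDegree, ?_, mem_monicIrreds.2 ⟨⟨(hmon P hP).1, rfl⟩, (hmon P hP).2⟩⟩
      rw [mem_Icc]
      refine ⟨(hmon P hP).2.natDegree_pos, le_trans ?_ (hle P hP)⟩
      exact Nat.le_mul_of_pos_left _ (Multiset.count_pos.2 hP)
    · intro P _ hP
      rw [Multiset.mem_toFinset] at hP
      simp [Multiset.count_eq_zero_of_notMem hP]
  · intro d _ d' _ hdd'
    refine Finset.disjoint_left.2 fun P hP hP' => hdd' ?_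
    rw [mem_monicIrreds] at hP hP'
    rw [← hP.1.2, ← hP'.1.2]

/-- The coefficients of the `L`-series of a completely multiplicative function. -/
noncomputable def lCoeff (ψ : F[X] →* ℂ) (n : ℕ) : ℂ := ∑ g ∈ monics F n, ψ g

/-- The coefficients of the logarithmic derivative of the `L`-series of `ψ`: the sum of
`deg P * ψ P ^ j` over monic irreducible `P` and `j` with `j * deg P = n`. -/
noncomputable def logCoeff (ψ : F[X] →* ℂ) (n : ℕ) : ℂ :=
  ∑ x ∈ n.divisorsAntidiagonal, ∑ P ∈ monicIrreds F x.1, (x.1 : ℂ) * ψ P ^ x.2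

open Classical in
/-- The multiples of `P ^ j` among the monic polynomials of degree `n`, parametrised by the
cofactor. -/
lemma sum_multiples (ψ : F[X] →* ℂ) {n d j : ℕ} {P : F[X]} (hP : P ∈ monicIrreds F d) :
    ∑ g ∈ monics F n, (if P ^ j ∣ g then ψ g else 0)
      = if d * j ≤ n then ψ P ^ j * lCoeff ψ (n - d * j) else 0 := by
  rw [mem_monicIrreds] at hP
  have hPj : (P ^ j).Monic := hP.1.1.pow j
  have hPd : (P ^ j).natDegree = d * j := by rw [hP.1.1.natDegree_pow, hP.1.2, mul_comm]
  rw [← Finset.sum_filter]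
  split_ifs with h
  · rw [lCoeff, Finset.mul_sum]
    symm
    refine Finset.sum_bij (fun g _ => P ^ j * g) ?_ ?_ ?_ ?_
    · intro g hg
      rw [mem_monics] at hg
      rw [mem_filter, mem_monics]
      refine ⟨⟨hPj.mul hg.1, ?_⟩, dvd_mul_right _ _⟩
      rw [hPj.natDegree_mul hg.1, hPd, hg.2]; omega
    · intro g _ g' _ e
      exact mul_left_cancel₀ hPj.ne_zero e
    · intro g hg
      rw [mem_filter, mem_monics] at hg
      obtain ⟨⟨hm, hn⟩, u, rfl⟩ := hg
      have hu : u.Monic := hPj.of_mul_monic_left hm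
      refine ⟨u, mem_monics.2 ⟨hu, ?_⟩, rfl⟩
      rw [hPj.natDegree_mul hu, hPd] at hn
      omega
    · intro g _
      simp
  · apply Finset.sum_eq_zero
    intro g hg
    rw [mem_filter, mem_monics] at hg
    have := natDegree_le_of_dvd hg.2 hg.1.1.ne_zero
    rw [hPd, hg.1.2] at this
    exact absurd this h

/-- The Euler product of the `L`-series, in logarithmic form: `T L' = L * ∑ logCoeff T ^ n`. -/
lemma natCast_mul_lCoeff (ψ : F[X] →* ℂ) (n : ℕ) :
    (n : ℂ) * lCoeff ψ n = ∑ p ∈ antidiagonal n, logCoeff ψ p.1 * lCoeff ψ p.2 := by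
  classical
  have h1 : (n : ℂ) * lCoeff ψ n = ∑ d ∈ Icc 1 n, ∑ P ∈ monicIrreds F d, ∑ j ∈ Icc 1 n,
      (if d * j ≤ n then (d : ℂ) * ψ P ^ j * lCoeff ψ (n - d * j) else 0) := by
    have h2 : (n : ℂ) * lCoeff ψ n = ∑ g ∈ monics F n, ∑ d ∈ Icc 1 n, ∑ P ∈ monicIrreds F d,
        ∑ j ∈ Icc 1 n, (d : ℂ) * (if P ^ j ∣ g then ψ g else 0) := by
      rw [lCoeff, Finset.mul_sum]
      refine Finset.sum_congr rfl fun g hg => ?_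
      conv_lhs => rw [← sum_natDegree_dvd hg]
      push_cast
      simp only [Finset.sum_mul]
      refine Finset.sum_congr rfl fun d _ => Finset.sum_congr rfl fun P _ =>
        Finset.sum_congr rfl fun j _ => ?_
      split_ifs <;> simp
    rw [h2, Finset.sum_comm]
    refine Finset.sum_congr rfl fun d _ => ?_
    rw [Finset.sum_comm]
    refine Finset.sum_congr rfl fun P hP => ?_
    rw [Finset.sum_comm]
    refine Finset.sum_congr rfl fun j _ => ?_
    rw [← Finset.mul_sum, sum_multiples ψ hP]
    split_ifs <;> ring
  have h3 : ∑ p ∈ antidiagonal n, logCoeff ψ p.1 * lCoeff ψ p.2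
      = ∑ p ∈ antidiagonal n, ∑ x ∈ p.1.divisorsAntidiagonal,
        ∑ P ∈ monicIrreds F x.1, (x.1 : ℂ) * ψ P ^ x.2 * lCoeff ψ p.2 := by
    refine Finset.sum_congr rfl fun p _ => ?_
    simp only [logCoeff, Finset.sum_mul]
  rw [h1, h3]
  have h4 : ∀ d, ∑ P ∈ monicIrreds F d, ∑ j ∈ Icc 1 n,
      (if d * j ≤ n then (d : ℂ) * ψ P ^ j * lCoeff ψ (n - d * j) else 0)
      = ∑ j ∈ Icc 1 n, if d * j ≤ n then
        ∑ P ∈ monicIrreds F d, (d : ℂ) * ψ P ^ j * lCoeff ψ (n - d * j) else 0 := by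
    intro d
    rw [Finset.sum_comm]
    refine Finset.sum_congr rfl fun j _ => ?_
    split_ifs <;> simp
  simp only [h4]
  rw [← Finset.sum_product', ← Finset.sum_filter, Finset.sum_sigma' (antidiagonal n)]
  refine Finset.sum_bij (fun x _ => ⟨(x.1 * x.2, n - x.1 * x.2), x⟩) ?_ ?_ ?_ ?_
  · rintro ⟨d, j⟩ h
    simp only [mem_filter, mem_product, mem_Icc] at h
    simp only [mem_sigma, HasAntidiagonal.mem_antidiagonal, Nat.mem_divisorsAntidiagonal]
    refine ⟨by omega, trivial, ?_⟩
    exact Nat.mul_ne_zero (by omega) (by omega)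
  · rintro x _ y _ e
    simpa using (Sigma.mk.inj e).2
  · rintro ⟨⟨k, l⟩, ⟨d, j⟩⟩ h
    simp only [mem_sigma, HasAntidiagonal.mem_antidiagonal, Nat.mem_divisorsAntidiagonal] at h
    obtain ⟨h1, rfl, h2⟩ := h
    have hd : d ≠ 0 := fun h => h2 (by simp [h])
    have hj : j ≠ 0 := fun h => h2 (by simp [h])
    have hd' : d ≤ d * j := Nat.le_mul_of_pos_right _ (by omega)
    have hj' : j ≤ d * j := Nat.le_mul_of_pos_left _ (by omega)
    refine ⟨(d, j), ?_, ?_⟩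
    · simp only [mem_filter, mem_product, mem_Icc]
      omega
    · have : l = n - d * j := by omega
      simp [this]
  · intro x _
    rfl

/-- A monic irreducible polynomial whose degree divides `[K : F]` splits in `K`, with distinct
roots, so it is the minimal polynomial of exactly `deg P` elements. -/
lemma card_filter_minpoly (K : Type) [Field K] [Fintype K] [Algebra F K] [DecidableEq F[X]]
    {d : ℕ} {P : F[X]}
    (hP : P ∈ monicIrreds F d) (hd : d ∣ Module.finrank F K) :
    #{x : K | minpoly F x = P} = d := by
  classical
  rw [mem_monicIrreds] at hP
  obtain ⟨⟨hm, rfl⟩, hi⟩ := hP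
  have hsep : P.Separable := PerfectField.separable_of_irreducible hi
  have hspl : (P.map (algebraMap F K)).Splits := by
    have h1 := (hi.natDegree_dvd_iff_dvd_X_pow_card_pow_sub_X).1 hd
    have hc : Nat.card F ^ Module.finrank F K = Fintype.card K := by
      rw [← Nat.card_eq_fintype_card, ← Module.natCard_eq_pow_finrank (K := F) (V := K)]
    rw [hc] at h1
    have := (FiniteField.isSplittingField_sub K F).splits
    refine Splits.of_dvd this ?_ (Polynomial.map_dvd _ h1)
    exact map_ne_zero (FiniteField.X_pow_card_sub_X_ne_zero _ Fintype.one_lt_card)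
  rw [← card_rootSet_eq_natDegree hsep hspl, ← Set.toFinset_card]
  congr 1
  ext x
  simp only [mem_filter, mem_univ, true_and, Set.mem_toFinset, mem_rootSet]
  constructor
  · rintro rfl
    exact ⟨hi.ne_zero, minpoly.aeval _ _⟩
  · rintro ⟨_, h⟩
    exact (minpoly.eq_of_irreducible_of_monic hi h hm).symm

/-- The coefficient `logCoeff ψ n` is a complete sum over the extension of degree `n`. -/
lemma sum_minpoly_eq_logCoeff (ψ : F[X] →* ℂ) (K : Type) [Field K] [Fintype K] [Algebra F K] :
    ∑ x : K, ψ (minpoly F x) ^ (Module.finrank F K / (minpoly F x).natDegree)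
      = logCoeff ψ (Module.finrank F K) := by
  classical
  rw [logCoeff, Nat.sum_divisorsAntidiagonal
    (fun d j => ∑ P ∈ monicIrreds F d, (d : ℂ) * ψ P ^ j)]
  have hfin : Module.finrank F K ≠ 0 := Module.finrank_pos.ne'
  have hint : ∀ x : K, IsIntegral F x := fun x => Algebra.IsIntegral.isIntegral x
  rw [← Finset.sum_fiberwise_of_maps_to (s := univ) (t := (Module.finrank F K).divisors)
    (g := fun x : K => (minpoly F x).natDegree)
    (fun x _ => Nat.mem_divisors.2 ⟨minpoly.degree_dvd (hint x), hfin⟩)]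
  refine Finset.sum_congr rfl fun d hd => ?_
  rw [← Finset.sum_fiberwise_of_maps_to (s := {x : K | (minpoly F x).natDegree = d})
    (t := monicIrreds F d) (g := fun x : K => minpoly F x)
    (fun x hx => mem_monicIrreds.2 ⟨⟨minpoly.monic (hint x), by simpa using hx⟩,
      minpoly.irreducible (hint x)⟩)]
  refine Finset.sum_congr rfl fun P hP => ?_
  have : (univ.filter fun x : K => (minpoly F x).natDegree = d).filter (fun x => minpoly F x = P)
      = univ.filter fun x : K => minpoly F x = P := by
    ext x
    simp only [mem_filter, mem_univ, true_and, and_iff_right_iff_imp]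
    rintro rfl
    exact (mem_monicIrreds.1 hP).1.2
  rw [this]
  rw [Finset.sum_congr rfl (g := fun _ => ψ P ^ (Module.finrank F K / d)), Finset.sum_const,
    nsmul_eq_mul, card_filter_minpoly K hP (Nat.dvd_of_mem_divisors hd)]
  intro x hx
  rw [mem_filter] at hx
  rw [hx.2, (mem_monicIrreds.1 hP).1.2]

/-- The norm of `β - x` in terms of the minimal polynomial of `x`; it turns `χ ∘ N` into a
character on monic polynomials. -/
lemma norm_algebraMap_sub (K : Type) [Field K] [Algebra F K] [FiniteDimensional F K] (β : F)
    (x : K) : Algebra.norm F (algebraMap F K β - x)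
      = ((minpoly F x).eval β) ^ (Module.finrank F K / (minpoly F x).natDegree) := by
  have hx : IsIntegral F x := Algebra.IsIntegral.isIntegral x
  let L := IntermediateField.adjoin F {x}
  have h1 : algebraMap F K β - x
      = algebraMap L K (algebraMap F L β - IntermediateField.AdjoinSimple.gen F x) := by
    simp [L]
  have hfr : Module.finrank F L = (minpoly F x).natDegree :=
    IntermediateField.adjoin.finrank hx
  have hmul := Module.finrank_mul_finrank F L K
  rw [h1, ← Algebra.norm_norm (S := L), Algebra.norm_algebraMap, map_pow]
  congr 1
  · let pb := IntermediateField.adjoin.powerBasis hx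
    have hgen : pb.gen = IntermediateField.AdjoinSimple.gen F x := rfl
    rw [Algebra.norm_eq_matrix_det pb.basis, map_sub, ← hgen, AlgHom.commutes]
    have h2 := charpoly_leftMulMatrix pb
    have h3 : minpoly F pb.gen = minpoly F x := by
      rw [hgen]; exact IntermediateField.minpoly_gen F x
    rw [← h3, ← h2, Matrix.eval_charpoly]
    rfl
  · rw [← hmul, hfr]
    rw [Nat.mul_div_cancel_left _ (minpoly.natDegree_pos hx)]

end LFunction

/-! ### The L-series is a polynomial -/

section Vanishing
open Polynomial Finset

variable {F : Type} [Field F]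

/-- The completely multiplicative function `g ↦ ∏ χ (g(β)) ^ e β` on polynomials. Where `e β = 0`
the factor is `1`, even if `g(β) = 0`. -/
noncomputable def charProd (χ : MulChar F ℂ) (s : Finset F) (e : F → ℕ) : F[X] →* ℂ where
  toFun g := ∏ β ∈ s, χ (g.eval β) ^ e β
  map_one' := by simp
  map_mul' f g := by simp [mul_pow, prod_mul_distrib]

lemma charProd_apply (χ : MulChar F ℂ) (s : Finset F) (e : F → ℕ) (g : F[X]) :
    charProd χ s e g = ∏ β ∈ s, χ (g.eval β) ^ e β := rfl

variable [Finite F]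

lemma lCoeff_zero (ψ : F[X] →* ℂ) : lCoeff ψ 0 = 1 := by
  have : monics F 0 = {1} := by
    ext g
    rw [mem_monics, mem_singleton]
    constructor
    · rintro ⟨h, h'⟩
      exact h.natDegree_eq_zero.mp h'
    · rintro rfl; simp
  simp [lCoeff, this]

/-- In degree `n ≥ |s|`, adding multiples of the Lagrange polynomial of `β₀` changes the value at
`β₀` freely while fixing the other values on `s`. Scaling the value at `β₀` by `c` permutes the
monic polynomials of degree `n` and multiplies the coefficient by `χ c ^ e β₀`, so it is zero. -/
lemma lCoeff_charProd_eq_zero (χ : MulChar F ℂ) (s : Finset F) (e : F → ℕ) {β₀ : F}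
    (hβ : β₀ ∈ s) (hχ : χ ^ e β₀ ≠ 1) {n : ℕ} (hn : s.card ≤ n) :
    lCoeff (charProd χ s e) n = 0 := by
  classical
  have hs : 0 < s.card := card_pos.mpr ⟨_, hβ⟩
  obtain ⟨c, hc⟩ : ∃ c : Fˣ, χ c ^ e β₀ ≠ 1 := by
    by_contra! H
    apply hχ
    ext a
    simp [MulChar.pow_apply_coe, H a]
  have hinj : Set.InjOn (id : F → F) s := Function.injective_id.injOn
  set L := Lagrange.basis s id β₀ with hL
  have hL1 : L.eval β₀ = 1 := Lagrange.eval_basis_self hinj hβ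
  have hL0 : ∀ β ∈ s, β ≠ β₀ → L.eval β = 0 := fun β hb hne =>
    Lagrange.eval_basis_of_ne (v := id) hne.symm hb
  have hLd : L.natDegree < n := by
    rw [hL, Lagrange.natDegree_basis hinj hβ]
    omega
  -- scaling the value at `β₀` by `c`
  set φ : F → F[X] → F[X] := fun c g => g + C ((c - 1) * g.eval β₀) * L with hφ
  have hφm : ∀ c, ∀ g ∈ monics F n, φ c g ∈ monics F n := by
    intro c g hg
    rw [mem_monics] at hg ⊢
    have hlt : (C ((c - 1) * g.eval β₀) * L).degree < g.degree := by
      refine degree_lt_degree (lt_of_le_of_lt (natDegree_C_mul_le _ _) ?_)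
      rwa [hg.2]
    exact ⟨hg.1.add_of_left hlt, by rw [hφ, natDegree_add_eq_left_of_degree_lt hlt, hg.2]⟩
  have hφ1 : ∀ c g, (φ c g).eval β₀ = c * g.eval β₀ := by
    intro c g; simp [hφ, hL1]; ring
  have hφ0 : ∀ c g, ∀ β ∈ s, β ≠ β₀ → (φ c g).eval β = g.eval β := by
    intro c g β hb hne; simp [hφ, hL0 β hb hne]
  have hφφ : ∀ c c' : F, c * c' = 1 → ∀ g, φ c (φ c' g) = g := by
    intro c c' h g
    have : (c - 1) * (c' * g.eval β₀) = - ((c' - 1) * g.eval β₀) := by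
      linear_combination h * g.eval β₀
    calc φ c (φ c' g) = φ c' g + C ((c - 1) * (φ c' g).eval β₀) * L := rfl
      _ = g := by rw [hφ1, this]; simp [hφ]
  have key : lCoeff (charProd χ s e) n = χ c ^ e β₀ * lCoeff (charProd χ s e) n := by
    conv_lhs => rw [lCoeff]
    rw [lCoeff, mul_sum]
    refine sum_nbij' (φ (c⁻¹ : Fˣ)) (φ c) (fun g hg => hφm _ _ hg) (fun g hg => hφm _ _ hg)
      (fun g _ => hφφ _ _ (by simp) g) (fun g _ => hφφ _ _ (by simp) g) ?_
    intro g _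
    rw [charProd_apply, charProd_apply, ← mul_prod_erase _ _ hβ, ← mul_prod_erase _ _ hβ, hφ1,
      ← mul_assoc, ← mul_pow, ← map_mul, ← mul_assoc]
    congr 1
    · simp
    · refine prod_congr rfl fun β hb => ?_
      rw [hφ0 _ _ β (mem_of_mem_erase hb) (ne_of_mem_erase hb)]
  have : (χ c ^ e β₀ - 1) * lCoeff (charProd χ s e) n = 0 := by rw [sub_mul, ← key]; ring
  exact (mul_eq_zero.mp this).resolve_left (sub_ne_zero.mpr hc)

end Vanishing

/-! ### Nonvanishing of the auxiliary polynomial -/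

section Nonvanishing
open Polynomial

lemma rootMultiplicity_pow' {K : Type} [Field K] (p : K[X]) (n : ℕ) (β : K) :
    (p ^ n).rootMultiplicity β = n * p.rootMultiplicity β := by
  classical
  rw [← count_roots, roots_pow, Multiset.count_nsmul, count_roots]

/-- If `r` and the multiplicities of the roots of `f` have no common factor, every irreducible
factor of `f * Y ^ r - c` over `K(X)` has degree divisible by `r`. Taking norms of `f * y ^ r = c`
from the field generated by a root `y`, and comparing the multiplicities at each `β`, shows that `r`
divides `deg m` times every multiplicity. -/
lemma dvd_of_irreducible_dvd {K : Type} [Field K] {f : K[X]} {r : ℕ} 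
    (hf0 : f ≠ 0) (hf : ∀ k, (∀ β, r ∣ k * f.rootMultiplicity β) → r ∣ k) {c : K} (hc : c ≠ 0)
    {m : (FractionRing K[X])[X]} (hm : Irreducible m)
    (hdvd : m ∣ C (algebraMap K[X] _ f) * X ^ r - C (algebraMap K[X] _ (C c))) :
    r ∣ m.natDegree := by
  set L := FractionRing K[X] with hL
  have : Fact (Irreducible m) := ⟨hm⟩
  have hfL : algebraMap K[X] L f ≠ 0 := by simpa using hf0
  have hroot : algebraMap L (AdjoinRoot m) (algebraMap K[X] L f) * AdjoinRoot.root m ^ r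
      = algebraMap L (AdjoinRoot m) (algebraMap K[X] L (C c)) := by
    have h := AdjoinRoot.mk_eq_zero.mpr hdvd
    rw [map_sub, map_mul, map_pow, AdjoinRoot.mk_X, AdjoinRoot.mk_C, AdjoinRoot.mk_C,
      sub_eq_zero] at h
    exact h
  have hfin : Module.finrank L (AdjoinRoot m) = m.natDegree := by
    rw [(AdjoinRoot.powerBasis hm.ne_zero).finrank, AdjoinRoot.powerBasis_dim]
  have hN := congrArg (Algebra.norm L) hroot
  rw [map_mul, map_pow, Algebra.norm_algebraMap, Algebra.norm_algebraMap, hfin] at hN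
  obtain ⟨u, v, hv, huv⟩ := IsFractionRing.div_surjective (A := K[X])
    (Algebra.norm L (AdjoinRoot.root m))
  have hv0 : v ≠ 0 := nonZeroDivisors.ne_zero hv
  have hvL : algebraMap K[X] L v ≠ 0 := by simpa using hv0
  rw [← huv, div_pow, mul_div_assoc', div_eq_iff (pow_ne_zero _ hvL)] at hN
  have hN' : f ^ m.natDegree * u ^ r = C c ^ m.natDegree * v ^ r := by
    apply IsFractionRing.injective K[X] L
    simpa using hN
  have hne : C c ^ m.natDegree * v ^ r ≠ 0 :=
    mul_ne_zero (pow_ne_zero _ (C_ne_zero.mpr hc)) (pow_ne_zero _ hv0)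
  have hu0 : u ^ r ≠ 0 := by
    intro h; rw [h, mul_zero] at hN'; exact hne hN'.symm
  refine hf _ fun β => ?_
  have := congrArg (rootMultiplicity β) hN'
  rw [rootMultiplicity_mul hne, rootMultiplicity_mul (hN' ▸ hne), ← C_pow, rootMultiplicity_C,
    rootMultiplicity_pow', rootMultiplicity_pow', rootMultiplicity_pow'] at this
  refine (Nat.dvd_add_left (Dvd.intro (rootMultiplicity β u) rfl)).mp ?_
  rw [this]
  simp

lemma natDegree_det_le_mul {K : Type} [Field K] {n : ℕ} (M : Matrix (Fin n) (Fin n) K[X]) (h : ℕ)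
    (hM : ∀ i j, (M i j).natDegree ≤ h) : M.det.natDegree ≤ n * h := by
  rw [Matrix.det_apply]
  refine natDegree_sum_le_of_forall_le _ _ fun σ _ => ?_
  refine (natDegree_smul_le _ _).trans ((natDegree_prod_le _ _).trans ?_)
  refine (Finset.sum_le_sum fun i _ => hM (σ i) i).trans ?_
  simp

/-- Let `g` be an approximate root of `f * Y ^ r = c`, modulo `X ^ P`. A nonzero polynomial
`∑ b i * Y ^ i` of degree less than `r` in `Y`, with coefficients of small degree, does not vanish
at `g` modulo `X ^ P`. Otherwise its resultant with `f * Y ^ r - c` is divisible by `X ^ P`, hence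
is zero by its degree, and both have a common factor over `K(X)`, which contradicts
`dvd_of_irreducible_dvd`. -/
lemma not_X_pow_dvd_sum {K : Type} [Field K] {f : K[X]} {r : ℕ} (hr : 0 < r)
    (hf0 : f ≠ 0) (hf : ∀ k, (∀ β, r ∣ k * f.rootMultiplicity β) → r ∣ k) {c : K} (hc : c ≠ 0)
    {g : K[X]} {P H : ℕ} (hg : X ^ P ∣ f * g ^ r - C c) {b : Fin r → K[X]} (hb : b ≠ 0)
    (hH : ∀ i, (b i).natDegree < H) (hd : f.natDegree < H) (hP : 2 * r * H ≤ P) :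
    ¬ X ^ P ∣ ∑ i, b i * g ^ (i : ℕ) := by
  classical
  intro hdiv
  set L := FractionRing K[X] with hL
  have hinj : Function.Injective (algebraMap K[X] L) := IsFractionRing.injective K[X] L
  set A : K[X][X] := ∑ i : Fin r, C (b i) * X ^ (i : ℕ) with hA
  set B : K[X][X] := C f * X ^ r - C (C c) with hB
  have hAc : ∀ n, A.coeff n = if h : n < r then b ⟨n, h⟩ else 0 := by
    intro n
    simp only [hA, finsetSum_coeff, coeff_C_mul, coeff_X_pow]
    split_ifs with h
    · rw [Finset.sum_eq_single ⟨n, h⟩]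
      · simp
      · intro i _ hi
        have : n ≠ i := fun e => hi (Fin.ext e.symm)
        simp [this]
      · simp
    · refine Finset.sum_eq_zero fun i _ => ?_
      have : n ≠ i := by have := i.2; omega
      simp [this]
  have hA0 : A ≠ 0 := by
    intro h
    apply hb
    ext1 i
    have := hAc i
    simpa [h] using this.symm
  have hAd : A.natDegree < r := by
    rw [natDegree_lt_iff_degree_lt hA0, degree_lt_iff_coeff_zero]
    intro n hn
    rw [hAc, dif_neg (by omega)]
  have hBd : B.natDegree = r := by
    rw [hB, natDegree_sub_C, natDegree_C_mul_X_pow _ _ hf0]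
  have hBc : ∀ n, (B.coeff n).natDegree ≤ H - 1 := by
    intro n
    simp only [hB, coeff_sub, coeff_C_mul, coeff_X_pow, coeff_C]
    refine (natDegree_sub_le _ _).trans (max_le ?_ ?_)
    · split_ifs
      · simp; omega
      · simp
    · split_ifs <;> simp
  have hAc' : ∀ n, (A.coeff n).natDegree ≤ H - 1 := by
    intro n
    rw [hAc]
    split_ifs with h
    · have := hH ⟨n, h⟩; omega
    · simp
  have hres : (resultant A B).natDegree < P := by
    have h1 : (resultant A B).natDegree ≤ (A.natDegree + B.natDegree) * (H - 1) := by
      refine natDegree_det_le_mul _ _ fun i j => ?_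
      rw [sylvester, Matrix.of_apply]
      refine j.addCases (fun j => ?_) (fun j => ?_)
      · rw [Fin.addCases_left]; split_ifs
        · exact hBc _
        · simp
      · rw [Fin.addCases_right]; split_ifs
        · exact hAc' _
        · simp
    have h2 : (A.natDegree + B.natDegree) * (H - 1) ≤ 2 * r * (H - 1) :=
      Nat.mul_le_mul_right _ (by omega)
    have h3 : 2 * r * (H - 1) < 2 * r * H := Nat.mul_lt_mul_of_pos_left (by omega) (by omega)
    omega
  have hres0 : resultant A B = 0 := by
    obtain ⟨p, q, -, -, hpq⟩ := exists_mul_add_mul_eq_C_resultant A B le_rfl le_rfl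
      (Or.inr (by omega))
    have := congrArg (eval g) hpq
    rw [eval_C, eval_add, eval_mul, eval_mul] at this
    have hAe : A.eval g = ∑ i, b i * g ^ (i : ℕ) := by simp [hA, eval_finsetSum]
    have hBe : B.eval g = f * g ^ r - C c := by simp [hB]
    refine eq_zero_of_dvd_of_natDegree_lt (p := X ^ P) ?_ (by simpa using hres)
    rw [← this, hAe, hBe]
    exact dvd_add (Dvd.dvd.mul_right hdiv _) (Dvd.dvd.mul_right hg _)
  have hresL : resultant (A.map (algebraMap K[X] L)) (B.map (algebraMap K[X] L)) = 0 := by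
    have := resultant_map_map A B A.natDegree B.natDegree (algebraMap K[X] L)
    rw [natDegree_map_eq_of_injective hinj, natDegree_map_eq_of_injective hinj, this, hres0,
      map_zero]
  have hAL : A.map (algebraMap K[X] L) ≠ 0 := (Polynomial.map_ne_zero_iff hinj).mpr hA0
  have hncop := (resultant_eq_zero_iff.mp hresL).2
  rw [← EuclideanDomain.gcd_isUnit_iff] at hncop
  obtain ⟨m, hm, hmd⟩ := WfDvdMonoid.exists_irreducible_factor hncop
    (fun h => hAL (EuclideanDomain.gcd_eq_zero_iff.mp h).1)
  have hmA := hmd.trans (EuclideanDomain.gcd_dvd_left _ _)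
  have hmB := hmd.trans (EuclideanDomain.gcd_dvd_right _ _)
  have h1 : r ∣ m.natDegree := dvd_of_irreducible_dvd hf0 hf hc hm (by simpa [hB] using hmB)
  have h2 := Nat.le_of_dvd hm.natDegree_pos h1
  have h3 := natDegree_le_of_dvd hmA hAL
  rw [natDegree_map_eq_of_injective hinj] at h3
  omega

end Nonvanishing

/-! ### Stepanov's method -/

section Stepanov
open Polynomial

/-- Stepanov's bound over a field `K` with `P ^ 2` elements. Here `w * (P + 1) = (|K| - 1) / r`,
so `Z` consists of points where `f` lies in a fixed coset of the `r`-th powers, and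
the bound is `|K| / r + O(P)`. -/
lemma card_le_of_eval_pow_eq {K : Type} [Field K] [Fintype K] {p : ℕ} [Fact p.Prime] [CharP K p]
    {P l r w : ℕ} (hP : P = p ^ l) (hK : Fintype.card K = P ^ 2) (hr : 0 < r) (hw : P = r * w + 1)
    {f : K[X]} (hf0 : f.eval 0 ≠ 0) (hf : ∀ k, (∀ β, r ∣ k * f.rootMultiplicity β) → r ∣ k)
    (hlarge : 2 * r * (3 * f.natDegree + 2) ≤ P) {c : K} (hc : c ≠ 0)
    (Z : Finset K) (hZ : ∀ a ∈ Z, f.eval a ^ (w * (P + 1)) = c) :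
    Z.card ≤ w * P + (3 * f.natDegree + 2) * P := by
  classical
  set d := f.natDegree with hd
  obtain ⟨H, hHdef⟩ : ∃ H, H = P / (2 * r) := ⟨_, rfl⟩
  obtain ⟨J, hJ⟩ : ∃ J, J = w + (2 * d + 2) := ⟨_, rfl⟩
  have hH1 : 2 * r * H ≤ P := by rw [hHdef]; exact Nat.mul_div_le _ _
  have hH2 : P < 2 * r * H + 2 * r := by
    have := Nat.lt_mul_div_succ P (show 0 < 2 * r by omega)
    rw [← hHdef] at this
    linarith
  have hH3 : 3 * d + 2 ≤ H := by
    rw [hHdef, Nat.le_div_iff_mul_le (by omega)]; linarith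
  obtain ⟨H', rfl⟩ : ∃ H', H = H' + 1 := ⟨H - 1, by omega⟩
  obtain ⟨r', rfl⟩ : ∃ r', r = r' + 1 := ⟨r - 1, by omega⟩
  obtain ⟨M, hM⟩ : ∃ M, M = H' * P + r' * w * d + J := ⟨_, rfl⟩
  have hPd : (r' + 1) * w * d + 2 * d ≤ 2 * ((r' + 1) * (H' + 1)) * d + 2 * (r' + 1) * d := by
    rw [← add_mul, ← add_mul]
    exact Nat.mul_le_mul_right _ (by linarith)
  have hw0 : 0 < w := by
    rcases Nat.eq_zero_or_pos w with rfl | h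
    · nlinarith
    · exact h
  have hwP : w ≤ (r' + 1) * w := Nat.le_mul_of_pos_left _ (by omega)
  have hcount : M < (r' + 1) * (J * (H' + 1)) := by
    have h1 : (r' + 1) * (3 * d + 2) ≤ (r' + 1) * (H' + 1) := Nat.mul_le_mul_left _ hH3
    have h2 : H' + 1 ≤ (r' + 1) * (H' + 1) := Nat.le_mul_of_pos_left _ (by omega)
    subst hM hJ
    rw [hw]
    nlinarith
  have hP0 : P ≠ 0 := by omega
  have hf0' : f ≠ 0 := by rintro rfl; simp at hf0
  let h : (Fin (r' + 1) × Fin J × Fin (H' + 1) → K) → Fin (r' + 1) → Fin J → K[X] := 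
    fun v i j => ∑ k : Fin (H' + 1), C (v (i, j, k)) * X ^ (k : ℕ)
  have hh : ∀ v i j, (h v i j).natDegree ≤ H' := by
    intro v i j
    refine natDegree_sum_le_of_forall_le _ _ fun k _ => (natDegree_C_mul_X_pow_le _ _).trans ?_
    omega
  have hhc : ∀ v i j k, (h v i j).coeff (k : Fin (H' + 1)) = v (i, j, k) := by
    intro v i j k
    simp only [h, finsetSum_coeff, coeff_C_mul, coeff_X_pow]
    rw [Finset.sum_eq_single k]
    · simp
    · intro b _ hb
      have : (k : ℕ) ≠ b := fun e => hb (Fin.ext e.symm)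
      simp [this]
    · simp
  -- For `a ∈ Z`, the relations `c = f(a) ^ (w * (P + 1))` and `a ^ (P ^ 2) = a` give
  -- `Φ v (a) = G(a) ^ P * f(a) ^ ((r - 1) * w)` for the polynomial `G` below. The degree of `Φ v`
  -- is small enough for `Φ v = 0` to have a solution `v ≠ 0`, and then `G` vanishes on `Z`.
  let Φ : (Fin (r' + 1) × Fin J × Fin (H' + 1) → K) → K[X] := fun v =>
    ∑ i : Fin (r' + 1), ∑ j : Fin J,
      C (c ^ (i : ℕ)) * h v i j ^ P * f ^ ((r' - i) * w) * X ^ (j : ℕ)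
  have hfp : ∀ i : ℕ, i ≤ r' → (f ^ (i * w)).natDegree ≤ r' * w * d := by
    intro i hi
    rw [natDegree_pow]
    gcongr
  have hΦd : ∀ v, (Φ v).natDegree < M := by
    intro v
    have : (Φ v).natDegree ≤ M - 1 := by
      refine natDegree_sum_le_of_forall_le _ _ fun i _ => natDegree_sum_le_of_forall_le _ _ 
        fun j _ => ?_
      have h1 : (h v i j ^ P).natDegree ≤ H' * P := by
        rw [natDegree_pow, mul_comm]
        exact Nat.mul_le_mul_right _ (hh v i j)
      have h2 := hfp (r' - i) (by omega)
      have h3 := j.2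
      refine natDegree_mul_le.trans ?_
      rw [natDegree_X_pow]
      have h4 := natDegree_mul_le (p := C (c ^ (i : ℕ)) * h v i j ^ P) (q := f ^ ((r' - i) * w))
      have h5 := natDegree_C_mul_le (c ^ (i : ℕ)) (h v i j ^ P)
      omega
    omega
  have hΦsub : ∀ v v', Φ (v - v') = Φ v - Φ v' := by
    intro v v'
    simp only [Φ, ← Finset.sum_sub_distrib]
    refine Finset.sum_congr rfl fun i _ => Finset.sum_congr rfl fun j _ => ?_
    have : h (v - v') i j = h v i j - h v' i j := by
      simp only [h, ← Finset.sum_sub_distrib, Pi.sub_apply, C_sub, sub_mul]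
    rw [this, hP, sub_pow_char_pow]
    ring
  obtain ⟨v, hv, hΦv⟩ : ∃ v, v ≠ 0 ∧ Φ v = 0 := by
    obtain ⟨v, v', hne, he⟩ := Fintype.exists_ne_map_eq_of_card_lt
      (fun v : Fin (r' + 1) × Fin J × Fin (H' + 1) → K => fun n : Fin M => (Φ v).coeff n) (by
        simp only [Fintype.card_fun, Fintype.card_prod, Fintype.card_fin]
        exact Nat.pow_lt_pow_right Fintype.one_lt_card hcount)
    refine ⟨v - v', sub_ne_zero.mpr hne, ?_⟩
    rw [hΦsub, sub_eq_zero]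
    ext n
    by_cases hn : n < M
    · exact congrFun he ⟨n, hn⟩
    · have h1 := hΦd v
      have h2 := hΦd v'
      rw [coeff_eq_zero_of_natDegree_lt (by omega), coeff_eq_zero_of_natDegree_lt (by omega)]
  let G : K[X] := ∑ j : Fin J, (∑ i : Fin (r' + 1), h v i j * (f ^ w) ^ (i : ℕ)) * (X ^ P) ^ (j : ℕ)
  have hG0 : G ≠ 0 := by
    intro hG
    obtain ⟨⟨i₀, j₁, k₀⟩, hne⟩ := Function.ne_iff.mp hv
    -- If `G = 0`, the lowest nonzero term, at `j₀`, is divisible by one more factor `X ^ P`.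
    have hex : ∃ j : ℕ, ∃ hj : j < J, ∃ i, h v i ⟨j, hj⟩ ≠ 0 := by
      refine ⟨j₁, j₁.2, i₀, fun h0 => hne ?_⟩
      rw [← hhc v i₀ j₁ k₀]
      simp only [Fin.eta] at h0
      rw [h0]; simp
    obtain ⟨hj, i, hi⟩ := Nat.find_spec hex
    have hmin := fun m => Nat.find_min hex (m := m)
    set j₀ := Nat.find hex with hj₀
    have hndvd := not_X_pow_dvd_sum (K := K) (f := f) (r := r' + 1) (by omega) hf0' hf
      (c := f.eval 0 ^ P) (pow_ne_zero _ hf0) (g := f ^ w) (P := P) (H := H' + 1) (by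
        have h1 : f * (f ^ w) ^ (r' + 1) = f ^ P := by
          rw [← pow_mul, hw, ← pow_succ', mul_comm w]
        rw [h1, C_pow, hP, ← sub_pow_char_pow]
        refine pow_dvd_pow_of_dvd ?_ _
        rw [X_dvd_iff]
        simp [coeff_zero_eq_eval_zero]) (b := fun i => h v i ⟨j₀, hj⟩) 
        (fun e => hi (congrFun e i)) (fun i => by have := hh v i ⟨j₀, hj⟩; omega)
        (by omega) (by omega)
    apply hndvd
    have hGs : (∑ i : Fin (r' + 1), h v i ⟨j₀, hj⟩ * (f ^ w) ^ (i : ℕ)) * (X ^ P) ^ j₀ 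
        = - ∑ j ∈ Finset.univ.erase (⟨j₀, hj⟩ : Fin J),
          (∑ i : Fin (r' + 1), h v i j * (f ^ w) ^ (i : ℕ)) * (X ^ P) ^ (j : ℕ) := by
      rw [eq_neg_iff_add_eq_zero, ← hG]
      exact Finset.add_sum_erase _ (fun j : Fin J => 
        (∑ i : Fin (r' + 1), h v i j * (f ^ w) ^ (i : ℕ)) * (X ^ P) ^ (j : ℕ)) (Finset.mem_univ _)
    have hdv : X ^ P * (X ^ P) ^ j₀ ∣ 
        (∑ i : Fin (r' + 1), h v i ⟨j₀, hj⟩ * (f ^ w) ^ (i : ℕ)) * (X ^ P) ^ j₀ := by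
      rw [hGs, dvd_neg, ← pow_succ']
      refine Finset.dvd_sum fun j hjm => ?_
      rcases lt_trichotomy (j : ℕ) j₀ with hlt | heq | hgt
      · have := hmin j hlt
        push Not at this
        rw [Finset.sum_eq_zero fun i _ => by rw [this j.2 i, zero_mul]]
        simp
      · exact absurd (Fin.ext heq) (Finset.ne_of_mem_erase hjm)
      · exact Dvd.dvd.mul_left (pow_dvd_pow _ hgt) _
    exact (mul_dvd_mul_iff_right (pow_ne_zero _ (pow_ne_zero _ X_ne_zero))).mp hdv
  have hGd : G.natDegree ≤ H' + r' * w * d + (J - 1) * P := by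
    refine natDegree_sum_le_of_forall_le _ _ fun j _ => ?_
    refine natDegree_mul_le.trans (add_le_add ?_ ?_)
    · refine natDegree_sum_le_of_forall_le _ _ fun i _ => ?_
      refine natDegree_mul_le.trans (add_le_add (hh v i j) ?_)
      rw [← pow_mul, mul_comm]
      exact hfp i (by omega)
    · rw [← pow_mul, natDegree_X_pow, mul_comm]
      exact Nat.mul_le_mul_right _ (by have := j.2; omega)
  have hroot : ∀ a ∈ Z, G.eval a = 0 := by
    intro a ha
    have hfa : f.eval a ≠ 0 := by
      intro h0
      have := hZ a ha
      rw [h0, zero_pow (by positivity)] at this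
      exact hc this.symm
    have hE : (Φ v).eval a = 0 := by rw [hΦv]; simp
    have key : (Φ v).eval a = G.eval a ^ P * f.eval a ^ (r' * w) := by
      simp only [Φ, G, eval_finsetSum, eval_mul, eval_pow, eval_C, eval_X]
      rw [Finset.sum_comm, hP, sum_pow_char_pow, Finset.sum_mul]
      refine Finset.sum_congr rfl fun j _ => ?_
      rw [mul_pow, sum_pow_char_pow, Finset.sum_mul, Finset.sum_mul, ← hP]
      refine Finset.sum_congr rfl fun i _ => ?_
      have haP : ((a ^ P) ^ (j : ℕ)) ^ P = a ^ (j : ℕ) := by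
        rw [← pow_mul, ← pow_mul, show P * (j * P) = P ^ 2 * j by ring, pow_mul, ← hK,
          FiniteField.pow_card]
      rw [haP, mul_pow, ← hZ a ha]
      have : ((f.eval a ^ w) ^ (i : ℕ)) ^ P * f.eval a ^ (r' * w) 
          = (f.eval a ^ (w * (P + 1))) ^ (i : ℕ) * f.eval a ^ ((r' - i) * w) := by
        simp only [← pow_mul, ← pow_add]
        congr 1
        have : (r' - i) * w + i * w = r' * w := by
          rw [← add_mul]; congr 1; omega
        rw [← this]
        ring
      linear_combination (- eval a (h v i j) ^ P * a ^ (j : ℕ)) * this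
    rw [key] at hE
    exact (pow_eq_zero_iff hP0).mp ((mul_eq_zero.mp hE).resolve_right (pow_ne_zero _ hfa))
  have hcard : Z.card ≤ G.natDegree := by
    refine card_le_degree_of_subset_roots ?_
    intro a ha
    rw [mem_roots hG0]
    exact hroot a ha
  have h1 : (J - 1) * P = w * P + (2 * d + 1) * P := by
    rw [← add_mul, hJ]; rfl
  have h2 : r' * w * d ≤ P * d := Nat.mul_le_mul_right _ (by nlinarith)
  have h3 : H' ≤ P := by nlinarith
  rw [h1] at hGd
  nlinarith

end Stepanov

/-! ### Character sums over extensions of even degree -/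

section CharSumExt
open Polynomial

/-- A character of order `r` on the cyclic group of order `q - 1 = r * u` is trivial only on the
`u`-torsion, that is, on the `r`-th powers. -/
lemma pow_eq_one_of_mulChar_eq_one {F : Type} [Field F] [Fintype F] {χ : MulChar F ℂ} {r u : ℕ}
    (hr : orderOf χ = r) (hu : r * u = Fintype.card F - 1) {z : Fˣ} (hz : χ z = 1) :
    z ^ u = 1 := by
  classical
  obtain ⟨γ, hγ⟩ := IsCyclic.exists_generator (α := Fˣ)
  obtain ⟨k, rfl⟩ := (mem_powers_iff_mem_zpowers (x := γ)).mpr (hγ z)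
  have hχ : χ ^ k = 1 := by
    ext y
    obtain ⟨j, rfl⟩ := (mem_powers_iff_mem_zpowers (x := γ)).mpr (hγ y)
    simp only [Units.val_pow_eq_pow_val, map_pow] at hz
    simp only [MulChar.pow_apply_coe, Units.val_pow_eq_pow_val, map_pow, MulChar.one_apply_coe]
    rw [one_pow, ← pow_mul, pow_mul, hz, one_pow]
  obtain ⟨m, rfl⟩ := hr ▸ orderOf_dvd_of_pow_eq_one hχ
  simp only
  rw [← pow_mul, show r * m * u = (r * u) * m by ring, hu, pow_mul, ← Fintype.card_units,
    pow_card_eq_one, one_pow]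

lemma pow_eq_pow_of_mulChar_eq {F : Type} [Field F] [Fintype F] {χ : MulChar F ℂ} {r u : ℕ}
    (hr : orderOf χ = r) (hu : r * u = Fintype.card F - 1) {y z : F} (hy : y ≠ 0)
    (hz : z ≠ 0) (h : χ y = χ z) : y ^ u = z ^ u := by
  have h1 : χ ((Units.mk0 y hy / Units.mk0 z hz : Fˣ) : F) = 1 := by
    have hz' : χ z ≠ 0 := by
      have := (Units.mk0 z hz).isUnit.map χ
      simpa using this.ne_zero
    rw [Units.val_div_eq_div_val]
    simp only [Units.val_mk0]
    rw [← mul_left_inj' hz', ← map_mul, div_mul_cancel₀ _ hz, h, one_mul]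
  have := congrArg (Units.val) (pow_eq_one_of_mulChar_eq_one hr hu h1)
  simp only [Units.val_pow_eq_pow_val, Units.val_div_eq_div_val, Units.val_mk0, div_pow,
    Units.val_one] at this
  rwa [div_eq_one_iff_eq (pow_ne_zero _ hz)] at this

lemma rootMultiplicity_prod_C_sub_X {K : Type} [Field K] {s : Finset K} (e : K → ℕ) {β : K}
    (hβ : β ∈ s) : (∏ b ∈ s, (C b - X) ^ e b).rootMultiplicity β = e β := by
  classical
  have hne : ∀ b : K, (C b - X : K[X]) ≠ 0 := fun b => by
    rw [← neg_sub, neg_ne_zero]; exact X_sub_C_ne_zero b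
  have h1 : (C β - X : K[X]).rootMultiplicity β = 1 := by
    have : (C β - X : K[X]) = C (-1) * (X - C β) := by simp
    rw [this, rootMultiplicity_mul (mul_ne_zero (by simp) (X_sub_C_ne_zero β)),
      rootMultiplicity_C, rootMultiplicity_X_sub_C_self]
  have hp : ∏ b ∈ s.erase β, (C b - X : K[X]) ^ e b ≠ 0 :=
    Finset.prod_ne_zero_iff.mpr fun b _ => pow_ne_zero _ (hne b)
  rw [← Finset.mul_prod_erase _ _ hβ, rootMultiplicity_mul (mul_ne_zero (pow_ne_zero _ (hne β)) hp),
    rootMultiplicity_pow', h1, mul_one, rootMultiplicity_eq_zero, add_zero]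
  rw [IsRoot.def, eval_prod, Finset.prod_eq_zero_iff]
  rintro ⟨b, hb, hb0⟩
  simp only [eval_pow, eval_sub, eval_C, eval_X] at hb0
  exact Finset.ne_of_mem_erase hb (sub_eq_zero.mp (eq_zero_of_pow_eq_zero hb0))

/-- The character sum `∑ χ (N (f x))` over `K`, with `|K| = P ^ 2`, is `O(P)`. Each of the `r`
nonzero values of the character is taken at most `|K| / r + O(P)` times, all values together are
taken `|K|` times, and the `r`-th roots of unity sum to zero, so these upper bounds suffice. -/
lemma norm_sum_mulChar_norm_le {F : Type} [Field F] [Fintype F] {χ : MulChar F ℂ} {r : ℕ}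
    (hr2 : 2 ≤ r) (hr : orderOf χ = r) {K : Type} [Field K] [Fintype K] [Algebra F K]
    {p : ℕ} [Fact p.Prime] [CharP K p]
    {P l w : ℕ} (hP : P = p ^ l) (hK : Fintype.card K = P ^ 2) (hw : P = r * w + 1)
    {f : K[X]} (hf0 : f.eval 0 ≠ 0) (hf : ∀ k, (∀ β, r ∣ k * f.rootMultiplicity β) → r ∣ k)
    (hlarge : 2 * r * (3 * f.natDegree + 2) ≤ P) :
    ‖∑ x : K, χ (Algebra.norm F (f.eval x))‖ ≤ (r * (3 * f.natDegree + 2) + f.natDegree : ℕ) * P := by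
  classical
  set d := f.natDegree with hd
  have hf0' : f ≠ 0 := by rintro rfl; simp at hf0
  set V : Finset ℂ := Polynomial.nthRootsFinset r (1 : ℂ) with hV
  have hVcard : V.card = r := (Complex.isPrimitiveRoot_exp r (by omega)).card_nthRootsFinset
  have hVsum : ∑ v ∈ V, v = 0 := by
    have hζ := Complex.isPrimitiveRoot_exp r (by omega)
    set ζ := Complex.exp (2 * Real.pi * Complex.I / r)
    have hζ0 : ζ ≠ 0 := hζ.ne_zero (by omega)
    have hmem : ∀ v, v ∈ V ↔ v ^ r = 1 := fun v => mem_nthRootsFinset (by omega) _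
    have : ∑ v ∈ V, v = ζ * ∑ v ∈ V, v := by
      rw [Finset.mul_sum]
      refine Finset.sum_nbij' (fun v => ζ⁻¹ * v) (fun v => ζ * v) ?_ ?_ ?_ ?_ ?_
      · intro v hv
        rw [hmem] at hv ⊢
        rw [mul_pow, inv_pow, hζ.pow_eq_one, hv]; simp
      · intro v hv
        rw [hmem] at hv ⊢
        rw [mul_pow, hζ.pow_eq_one, hv]; simp
      · intro v _; simp [hζ0]
      · intro v _; simp [hζ0]
      · intro v _; simp [hζ0]
    have h1 : (1 - ζ) * ∑ v ∈ V, v = 0 := by rw [sub_mul, one_mul, ← this, sub_self]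
    exact (mul_eq_zero.mp h1).resolve_left (sub_ne_zero.mpr (hζ.ne_one (by omega)).symm)
  have hV0 : (0 : ℂ) ∉ V := by
    rw [hV, mem_nthRootsFinset (by omega), zero_pow (by omega)]; simp
  have hrdvd : r ∣ Fintype.card F - 1 := by
    rw [← hr, ← Fintype.card_units]
    apply orderOf_dvd_of_pow_eq_one
    exact MulChar.pow_card_eq_one χ
  obtain ⟨u, hu⟩ := hrdvd
  have hpow : ∀ y : K, algebraMap F K (Algebra.norm F y ^ u) = y ^ (w * (P + 1)) := by
    intro y
    rw [map_pow, FiniteField.algebraMap_norm_eq_pow, ← pow_mul]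
    congr 1
    have hdvd : Fintype.card F - 1 ∣ Fintype.card K - 1 := by
      rw [Module.card_eq_pow_finrank (K := F) (V := K)]
      simpa using Nat.sub_dvd_pow_sub_pow (Fintype.card F) 1 (Module.finrank F K)
    have hF : 0 < Fintype.card F - 1 := by
      have := Fintype.one_lt_card (α := F); omega
    rw [Nat.card_eq_fintype_card, Nat.card_eq_fintype_card]
    obtain ⟨M, hM⟩ := hdvd
    rw [hM, Nat.mul_div_cancel_left _ hF]
    have h1 : r * (M * u) = r * (w * (P + 1)) := by
      have h2 : P ^ 2 - 1 = r * (w * (P + 1)) := by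
        rw [Nat.sub_eq_iff_eq_add (by rw [hw]; exact Nat.one_le_pow _ _ (by omega))]
        rw [hw]; ring
      rw [← h2, ← hK, hM, hu]; ring
    exact Nat.eq_of_mul_eq_mul_left (by omega) h1
  set φ : K → ℂ := fun x => χ (Algebra.norm F (f.eval x)) with hφ
  set N : ℂ → ℕ := fun v => (Finset.univ.filter fun x => φ x = v).card with hN
  have hφ0 : ∀ x, φ x = 0 ↔ f.eval x = 0 := by
    intro x
    have hz := Algebra.norm_eq_zero_iff (R := F) (x := f.eval x)
    rw [← hz]
    constructor
    · intro h
      by_contra hne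
      exact (IsUnit.map χ (Ne.isUnit hne)).ne_zero h
    · intro h
      simp only [hφ, h]
      exact χ.map_zero
  have hφV : ∀ x, φ x ∈ insert 0 V := by
    intro x
    rw [Finset.mem_insert]
    by_cases h : φ x = 0
    · exact Or.inl h
    · right
      rw [hV, mem_nthRootsFinset (by omega)]
      have h1 : IsUnit (Algebra.norm F (f.eval x)) := by
        rw [isUnit_iff_ne_zero]
        intro h0
        apply h
        simp only [hφ, h0]
        exact χ.map_zero
      simp only [hφ]
      rw [← MulChar.pow_apply' _ (by omega), ← hr, pow_orderOf_eq_one, MulChar.one_apply h1]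
  have hB : ∀ v ∈ V, N v ≤ w * P + (3 * d + 2) * P := by
    intro v hv
    rcases (Finset.univ.filter fun x => φ x = v).eq_empty_or_nonempty with he | ⟨x₀, hx₀⟩
    · simp [hN, he]
    have hx₀' : φ x₀ = v := by simpa using hx₀
    have hv0 : v ≠ 0 := fun h => hV0 (h ▸ hv)
    have hfx : ∀ x, φ x = v → f.eval x ≠ 0 := fun x hx h => hv0 (hx ▸ (hφ0 x).mpr h)
    refine card_le_of_eval_pow_eq hP hK (by omega) hw hf0 hf hlarge
      (c := f.eval x₀ ^ (w * (P + 1))) (pow_ne_zero _ (hfx x₀ hx₀')) _ ?_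
    intro a ha
    have ha' : φ a = v := by simpa using ha
    rw [← hpow, ← hpow]
    congr 1
    refine pow_eq_pow_of_mulChar_eq hr hu.symm ?_ ?_ (ha'.trans hx₀'.symm)
    · exact fun h => hfx a ha' (Algebra.norm_eq_zero_iff.mp h)
    · exact fun h => hfx x₀ hx₀' (Algebra.norm_eq_zero_iff.mp h)
  have hN0 : N 0 ≤ d := by
    refine le_trans ?_ (card_le_degree_of_subset_roots (p := f) 
      (Z := Finset.univ.filter fun x => φ x = 0) ?_)
    · exact le_rfl
    · intro a ha
      rw [mem_roots hf0']
      simpa [hφ0] using ha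
  have hNsum : N 0 + ∑ v ∈ V, N v = P ^ 2 := by
    rw [← hK, ← Finset.sum_insert hV0, ← Finset.card_univ]
    exact (Finset.card_eq_sum_card_fiberwise fun x _ => hφV x).symm
  have hS : ∑ x, φ x = ∑ v ∈ V, v * ((N v : ℂ) - (w * P + (3 * d + 2) * P : ℕ)) := by
    simp only [mul_sub]
    rw [Finset.sum_sub_distrib, ← Finset.sum_mul, hVsum, zero_mul, sub_zero,
      ← Finset.sum_fiberwise_of_maps_to (t := insert 0 V) (g := φ) (fun x _ => hφV x),
      Finset.sum_insert hV0]
    have : ∀ v, ∑ x with φ x = v, φ x = v * N v := by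
      intro v
      rw [Finset.sum_congr rfl (g := fun _ => v) (by simp)]
      simp [hN, mul_comm]
    simp [this]
  rw [hS]
  have hnorm : ∀ v ∈ V, ‖v‖ = 1 := by
    intro v hv
    rw [hV, mem_nthRootsFinset (by omega)] at hv
    exact Complex.norm_eq_one_of_pow_eq_one hv (by omega)
  have hterm : ∀ v ∈ V, ‖v * ((N v : ℂ) - (w * P + (3 * d + 2) * P : ℕ))‖ 
      = (w * P + (3 * d + 2) * P : ℕ) - (N v : ℝ) := by
    intro v hv
    rw [norm_mul, hnorm v hv, one_mul, norm_sub_rev, ← Nat.cast_sub (hB v hv), 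
      Complex.norm_natCast, Nat.cast_sub (hB v hv)]
  refine (norm_sum_le _ _).trans ?_
  rw [Finset.sum_congr rfl hterm, Finset.sum_sub_distrib, Finset.sum_const, hVcard]
  have h1 : (N 0 : ℝ) + ∑ v ∈ V, (N v : ℝ) = P ^ 2 := by exact_mod_cast hNsum
  have h2 : (N 0 : ℝ) ≤ d := by exact_mod_cast hN0
  have h3 : (P : ℝ) = r * w + 1 := by exact_mod_cast hw
  have h4 : (0 : ℝ) ≤ w := by positivity
  have h5 : (1 : ℝ) ≤ P := by rw [h3]; nlinarith [show (0:ℝ) ≤ r by positivity]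
  have h6 : (d : ℝ) ≤ d * P := by nlinarith [show (0 : ℝ) ≤ d by positivity]
  push_cast
  rw [nsmul_eq_mul]
  have h7 : (r : ℝ) * w * P = (P - 1) * P := by rw [h3]; ring
  nlinarith

end CharSumExt

/-! ### Weil's bound -/

section Weil
open Polynomial

/-- The character sum over an extension `K`, formed with `χ` composed with the norm, is a
coefficient of the logarithmic derivative of the `L`-series. -/
lemma sum_mulChar_norm_eq_logCoeff {F : Type} [Field F] [Fintype F] (χ : MulChar F ℂ)
    (s : Finset F) (e : F → ℕ) (K : Type) [Field K] [Fintype K] [Algebra F K] :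
    ∑ x : K, χ (Algebra.norm F
      (((∏ β ∈ s, (C β - X) ^ e β : F[X]).map (algebraMap F K)).eval x))
      = logCoeff (charProd χ s e) (Module.finrank F K) := by
  rw [← sum_minpoly_eq_logCoeff]
  refine Finset.sum_congr rfl fun x _ => ?_
  rw [charProd_apply, ← Finset.prod_pow, Polynomial.map_prod, eval_prod, map_prod, map_prod]
  refine Finset.prod_congr rfl fun β _ => ?_
  simp only [Polynomial.map_pow, Polynomial.map_sub, map_C, map_X, eval_pow, eval_sub, eval_C,
    eval_X, map_pow, norm_algebraMap_sub]
  ring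

/-- Weil's bound when `0` is not among the roots and the exponents have no common factor with the
order `r` of the character, the conditions under which Stepanov's method was carried out. -/
lemma weil_bound_aux {F : Type} [Field F] [Fintype F] {χ : MulChar F ℂ} {r : ℕ}
    (hr2 : 2 ≤ r) (hr : orderOf χ = r) {s : Finset F} (hs0 : 0 ∉ s) (e : F → ℕ)
    (he : ∀ k, (∀ β ∈ s, r ∣ k * e β) → r ∣ k) :
    ‖∑ a : F, ∏ β ∈ s, χ (β - a) ^ e β‖ ≤ (s.card - 1) * √(Fintype.card F) := by
  classical
  obtain ⟨β₀, hβ₀, hndvd⟩ : ∃ β ∈ s, ¬ r ∣ e β := by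
    by_contra! H
    have := Nat.le_of_dvd one_pos (he 1 (by simpa using H))
    omega
  have hs : 0 < s.card := Finset.card_pos.mpr ⟨_, hβ₀⟩
  obtain ⟨W, hWcard, hW⟩ := exists_powerSum (lCoeff (charProd χ s e)) (logCoeff (charProd χ s e))
    s.card hs (lCoeff_zero _) (fun n hn => lCoeff_charProd_eq_zero χ s e hβ₀ (by
      rw [Ne, ← orderOf_dvd_iff_pow_eq_one, hr]; exact hndvd) hn) (natCast_mul_lCoeff _)
  obtain ⟨p, hp⟩ := CharP.exists F
  have hprime : Fact p.Prime := ⟨CharP.char_is_prime F p⟩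
  obtain ⟨l, -, hq⟩ := FiniteField.card F p
  set q := Fintype.card F with hqdef
  have hq2 : 2 ≤ q := Fintype.one_lt_card
  set f₀ : F[X] := ∏ β ∈ s, (C β - X) ^ e β with hf₀
  have hf₀0 : f₀.eval 0 ≠ 0 := by
    rw [hf₀, eval_prod]
    refine Finset.prod_ne_zero_iff.mpr fun β hβ => ?_
    simp only [eval_pow, eval_sub, eval_C, eval_X, sub_zero]
    exact pow_ne_zero _ fun h => hs0 (h ▸ hβ)
  have hrdvd : r ∣ q - 1 := by
    rw [← hr, hqdef, ← Fintype.card_units]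
    exact orderOf_dvd_of_pow_eq_one (MulChar.pow_card_eq_one χ)
  set T : ℕ := 2 * r * (3 * f₀.natDegree + 2) with hT
  have hbound : ∀ m ≥ T, ‖((W.map (· ^ 2)).map (· ^ m)).sum‖
      ≤ (r * (3 * f₀.natDegree + 2) + f₀.natDegree : ℕ) * (q : ℝ) ^ m := by
    intro m hm
    -- In the extension of degree `2 * m`, with `(q ^ m) ^ 2` elements, Stepanov's bound applies.
    have hm0 : m ≠ 0 := by rintro rfl; have : 0 < T := by positivity
                           omega
    have : NeZero (2 * m) := ⟨by omega⟩
    let K := FiniteField.Extension F p (2 * m)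
    have : Fintype K := Fintype.ofFinite K
    have hK : Fintype.card K = (q ^ m) ^ 2 := by
      rw [← Nat.card_eq_fintype_card, FiniteField.natCard_extension, Nat.card_eq_fintype_card]
      ring
    have hfr : Module.finrank F K = 2 * m := FiniteField.finrank_extension F p _
    have : CharP K p := charP_of_injective_algebraMap (algebraMap F K).injective p
    obtain ⟨w, hw⟩ : r ∣ q ^ m - 1 := hrdvd.trans (by simpa using Nat.sub_dvd_pow_sub_pow q 1 m)
    have hqm : 0 < q ^ m := by positivity
    have key := norm_sum_mulChar_norm_le hr2 hr (K := K) (p := p) (P := q ^ m) (l := l * m)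
      (w := w) (by rw [hq, pow_mul]) hK (by omega) (f := f₀.map (algebraMap F K)) (by
        rw [← map_zero (algebraMap F K), eval_map, eval₂_at_apply]
        simpa using hf₀0) (by
        intro k hk
        refine he k fun β hβ => ?_
        have h1 := hk (algebraMap F K β)
        rwa [← eq_rootMultiplicity_map (algebraMap F K).injective, hf₀,
          rootMultiplicity_prod_C_sub_X e hβ] at h1) (by
        rw [natDegree_map]
        exact hm.le.trans (Nat.lt_pow_self (by omega)).le)
    rw [sum_mulChar_norm_eq_logCoeff, hfr, hW _ (by omega), norm_neg, natDegree_map] at key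
    simp only [Multiset.map_map, Function.comp_def, ← pow_mul]
    exact_mod_cast key
  have hω : ∀ ω ∈ W, ‖ω‖ ≤ √q := by
    intro ω hω
    have := norm_le_of_powerSum_le _ _ (q : ℝ) (by positivity) T hbound (ω ^ 2)
      (Multiset.mem_map_of_mem _ hω)
    rw [norm_pow] at this
    exact Real.le_sqrt_of_sq_le this
  have h1 : ∑ a : F, ∏ β ∈ s, χ (β - a) ^ e β = - W.sum := by
    have h := sum_mulChar_norm_eq_logCoeff χ s e F
    rw [Module.finrank_self, hW 1 one_ne_zero] at h
    simp only [pow_one, Multiset.map_id'] at h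
    rw [← h]
    refine Finset.sum_congr rfl fun a _ => ?_
    simp [Algebra.norm_self, eval_prod]
  rw [h1, norm_neg]
  refine (norm_multiset_sum_le _).trans ?_
  refine (Multiset.sum_le_card_nsmul _ √q (by simpa using hω)).trans ?_
  rw [Multiset.card_map, nsmul_eq_mul]
  have h2 : (W.card : ℝ) ≤ s.card - 1 := by
    rw [← Nat.cast_one, ← Nat.cast_sub hs]; exact_mod_cast hWcard
  gcongr

/-- Weil's bound for multiplicative character sums of completely split polynomials. The common
factor `g` of the exponents and the order is absorbed into `χ ^ g`, and a translation by some
`c ∉ s` moves the roots away from `0`. -/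
theorem weil_bound {F : Type} [Field F] [Fintype F] {χ : MulChar F ℂ} {s : Finset F}
    (hs : s.Nonempty) (e : F → ℕ) (he : ∀ β ∈ s, ¬ orderOf χ ∣ e β) :
    ‖∑ a : F, ∏ β ∈ s, χ (β - a) ^ e β‖ ≤ (s.card - 1) * √(Fintype.card F) := by
  classical
  by_cases hc : ∃ c, c ∉ s
  -- If `s` is all of `F`, every summand is zero.
  swap
  · push Not at hc
    have : ∑ a : F, ∏ β ∈ s, χ (β - a) ^ e β = 0 := by
      refine Finset.sum_eq_zero fun a _ => Finset.prod_eq_zero (hc a) ?_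
      rw [sub_self, MulChar.map_zero, zero_pow]
      intro h
      exact he a (hc a) (by rw [h]; exact dvd_zero _)
    rw [this, norm_zero]
    have : (1 : ℝ) ≤ s.card := by exact_mod_cast hs.card_pos
    exact mul_nonneg (by linarith) (Real.sqrt_nonneg _)
  obtain ⟨c, hc⟩ := hc
  obtain ⟨r, hr⟩ : ∃ r, r = orderOf χ := ⟨_, rfl⟩
  have hr0 : 0 < r := hr ▸ orderOf_pos χ
  obtain ⟨g, hg⟩ : ∃ g, g = Nat.gcd r (s.gcd e) := ⟨_, rfl⟩
  have hg0 : 0 < g := hg ▸ Nat.gcd_pos_of_pos_left _ hr0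
  obtain ⟨r', hr'⟩ : g ∣ r := hg ▸ Nat.gcd_dvd_left _ _
  have hge : ∀ β ∈ s, g * (e β / g) = e β := fun β hβ =>
    Nat.mul_div_cancel' ((hg ▸ Nat.gcd_dvd_right _ _ : g ∣ s.gcd e).trans (Finset.gcd_dvd hβ))
  obtain ⟨β₀, hβ₀⟩ := hs
  have hr'2 : 2 ≤ r' := by
    have h0 : r' ≠ 0 := by rintro rfl; omega
    have h1 : r' ≠ 1 := by
      rintro rfl
      apply he β₀ hβ₀
      rw [← hr, hr', mul_one, ← hge β₀ hβ₀]
      exact Dvd.intro _ rfl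
    omega
  have key := weil_bound_aux (χ := χ ^ g) hr'2 (by
      rw [orderOf_pow_of_dvd (by omega) (by rw [← hr, hr']; exact Dvd.intro _ rfl), ← hr, hr',
        Nat.mul_div_cancel_left _ hg0]) (s := s.image (· - c)) (by
      simp only [Finset.mem_image, not_exists, not_and]
      intro x hx h
      exact hc (sub_eq_zero.mp h ▸ hx)) (fun b => e (b + c) / g) (by
      intro k hk
      have h1 : r ∣ k * s.gcd e := by
        have : r ∣ s.gcd (fun β => k * e β) := by
          refine Finset.dvd_gcd fun β hβ => ?_
          have := hk (β - c) (Finset.mem_image_of_mem _ hβ)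
          rw [sub_add_cancel] at this
          rw [← hge β hβ, hr', mul_left_comm]
          exact Nat.mul_dvd_mul_left _ this
        rwa [Finset.gcd_mul_left, normalize_eq] at this
      have h2 : r ∣ k * g := by
        rw [hg, ← Nat.gcd_mul_left]
        exact Nat.dvd_gcd (Dvd.intro_left _ rfl) h1
      rw [hr', mul_comm k] at h2
      exact Nat.dvd_of_mul_dvd_mul_left hg0 h2)
  have hinj : Function.Injective (fun x : F => x - c) := sub_left_injective
  rw [Finset.card_image_of_injective _ hinj] at key
  convert key using 2
  rw [← Equiv.sum_comp (Equiv.addRight c)]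
  refine Finset.sum_congr rfl fun a _ => ?_
  rw [Finset.prod_image hinj.injOn]
  refine Finset.prod_congr rfl fun β hβ => ?_
  simp only [Equiv.coe_addRight, sub_add_cancel]
  rw [show β - c - a = β - (a + c) by ring, MulChar.pow_apply' _ (by omega), ← pow_mul, hge β hβ]

end Weil

/-! ### The case of trivial total exponent -/

section Moebius
open Polynomial

lemma mulChar_norm_le_one {F : Type} [Field F] [Fintype F] (χ : MulChar F ℂ) (x : F) :
    ‖χ x‖ ≤ 1 := by
  by_cases h : IsUnit x
  · have : χ x ^ orderOf χ = 1 := by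
      rw [← MulChar.pow_apply' _ (orderOf_pos χ).ne', pow_orderOf_eq_one, MulChar.one_apply h]
    exact (Complex.norm_eq_one_of_pow_eq_one this (orderOf_pos χ).ne').le
  · rw [MulChar.map_nonunit χ h]; simp

/-- When the order of `χ` divides the sum of the exponents, the point at infinity is not ramified.
Moving one root `b` to infinity, by `a = b - u⁻¹`, leaves a sum with one root less, and the term
`u = 0` of that sum accounts for the summand `1`. -/
theorem weil_bound_of_dvd_sum {F : Type} [Field F] [Fintype F] {χ : MulChar F ℂ} {s : Finset F}
    (hs : s.Nonempty) (e : F → ℕ) (he : ∀ β ∈ s, ¬ orderOf χ ∣ e β)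
    (hsum : orderOf χ ∣ ∑ β ∈ s, e β) :
    ‖1 + ∑ a : F, ∏ β ∈ s, χ (β - a) ^ e β‖ ≤ (s.card - 2) * √(Fintype.card F) := by
  classical
  obtain ⟨b, hb⟩ := hs
  have heb : e b ≠ 0 := fun h => he b hb (by rw [h]; exact dvd_zero _)
  have hne : (s.erase b).Nonempty := by
    rw [Finset.nonempty_iff_ne_empty]
    intro h
    rw [← Finset.add_sum_erase _ _ hb, h, Finset.sum_empty, add_zero] at hsum
    exact he b hb hsum
  set γ : F → F := fun β => (b - β)⁻¹ with hγ
  have hinj : Function.Injective γ := inv_injective.comp sub_right_injective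
  have key := weil_bound (χ := χ) (s := (s.erase b).image γ) (hne.image _)
    (fun c => e (b - c⁻¹)) (by
      intro c hc
      obtain ⟨β, hβ, rfl⟩ := Finset.mem_image.mp hc
      simpa [hγ] using he β (Finset.mem_of_mem_erase hβ))
  rw [Finset.card_image_of_injective _ hinj, Finset.card_erase_of_mem hb,
    Nat.cast_sub (Finset.card_pos.mpr ⟨b, hb⟩), Nat.cast_one, sub_sub, one_add_one_eq_two] at key
  refine le_trans ?_ key
  set κ : ℂ := ∏ β ∈ s.erase b, χ (b - β) ^ e β with hκ
  have hκ1 : ‖κ‖ ≤ 1 := by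
    rw [hκ, norm_prod]
    refine Finset.prod_le_one (fun _ _ => norm_nonneg _) fun β _ => ?_
    rw [norm_pow]
    exact pow_le_one₀ (norm_nonneg _) (mulChar_norm_le_one χ _)
  have hmain : 1 + ∑ a : F, ∏ β ∈ s, χ (β - a) ^ e β
      = κ * ∑ a : F, ∏ c ∈ (s.erase b).image γ, χ (c - a) ^ e (b - c⁻¹) := by
    have hu : ∀ u : F, κ * ∏ c ∈ (s.erase b).image γ, χ (c - u) ^ e (b - c⁻¹)
        = (if u = 0 then 1 else 0) + ∏ β ∈ s, χ (β - (b - u⁻¹)) ^ e β := by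
      intro u
      have h1 : κ * ∏ c ∈ (s.erase b).image γ, χ (c - u) ^ e (b - c⁻¹)
          = ∏ β ∈ s.erase b, χ ((β - b) * u + 1) ^ e β := by
        rw [Finset.prod_image hinj.injOn, hκ, ← Finset.prod_mul_distrib]
        refine Finset.prod_congr rfl fun β hβ => ?_
        have hne : b - β ≠ 0 := sub_ne_zero.mpr (Finset.ne_of_mem_erase hβ).symm
        simp only [hγ, inv_inv, sub_sub_cancel]
        rw [← mul_pow, ← map_mul]
        congr 2
        field_simp
        ring
      rw [h1]
      split_ifs with hu0
      · subst hu0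
        rw [← Finset.mul_prod_erase _ _ hb]
        rw [inv_zero, sub_zero, sub_self, MulChar.map_zero, zero_pow heb]
        simp
      · rw [zero_add, ← Finset.mul_prod_erase _ _ hb]
        obtain ⟨m, hm⟩ := hsum
        have hχ : χ u⁻¹ ^ (∑ β ∈ s, e β) = 1 := by
          rw [hm, pow_mul, ← MulChar.pow_apply' _ (orderOf_pos χ).ne', pow_orderOf_eq_one,
            MulChar.one_apply (isUnit_iff_ne_zero.mpr (inv_ne_zero hu0)), one_pow]
        have h2 : ∀ β, χ (β - (b - u⁻¹)) ^ e β = χ ((β - b) * u + 1) ^ e β * χ u⁻¹ ^ e β := by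
          intro β
          rw [← mul_pow, ← map_mul]
          congr 2
          field_simp
          ring
        simp only [h2]
        rw [Finset.prod_mul_distrib, sub_self, zero_mul, zero_add, map_one, one_pow, one_mul,
          mul_left_comm, Finset.mul_prod_erase s (fun β => χ u⁻¹ ^ e β) hb,
          Finset.prod_pow_eq_pow_sum, hχ, mul_one]
    rw [Finset.mul_sum, Finset.sum_congr rfl fun u _ => hu u, Finset.sum_add_distrib,
      Finset.sum_ite_eq' Finset.univ (0 : F) (fun _ => (1 : ℂ)), if_pos (Finset.mem_univ _)]
    congr 1
    exact (Equiv.sum_comp ((Equiv.inv F).trans (Equiv.subLeft b))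
      (fun a => ∏ β ∈ s, χ (β - a) ^ e β)).symm
  rw [hmain, norm_mul]
  exact mul_le_of_le_one_left (norm_nonneg _) hκ1

end Moebius

/-! ### Detecting equal roots of unity -/

section Detection
open Finset

/-- The exponent vectors, with `r` entries in `[0, r)`, whose sum is divisible by `r`. -/
def admissible (r : ℕ) : Finset (Fin r → Fin r) := univ.filter fun e => r ∣ ∑ i, (e i : ℕ)

/-- The sum of the monomials `∏ v i ^ e i` over the admissible exponent vectors. For `r`-th roots
of unity `v i` it is nonzero only if all `v i` are equal, and then it is `r ^ (r - 1)`. -/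
noncomputable def detect {r : ℕ} (v : Fin r → ℂ) : ℂ := ∑ e ∈ admissible r, ∏ i, v i ^ (e i : ℕ)

lemma sum_nthRoots_pow {r : ℕ} (hr : 0 < r) (n : ℕ) :
    ∑ w ∈ Polynomial.nthRootsFinset r (1 : ℂ), w ^ n = if r ∣ n then (r : ℂ) else 0 := by
  have hζ := Complex.isPrimitiveRoot_exp r (by omega)
  have hmem : ∀ v, v ∈ Polynomial.nthRootsFinset r (1 : ℂ) ↔ v ^ r = 1 :=
    fun v => Polynomial.mem_nthRootsFinset hr _
  split_ifs with h
  · obtain ⟨m, rfl⟩ := h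
    rw [sum_congr rfl (g := fun _ => (1 : ℂ)) (fun w hw => by
      rw [pow_mul, (hmem w).mp hw, one_pow])]
    simp [hζ.card_nthRootsFinset]
  · set ζ := Complex.exp (2 * Real.pi * Complex.I / r)
    have hζ0 : ζ ≠ 0 := hζ.ne_zero (by omega)
    have : ∑ w ∈ Polynomial.nthRootsFinset r (1 : ℂ), w ^ n
        = ζ ^ n * ∑ w ∈ Polynomial.nthRootsFinset r (1 : ℂ), w ^ n := by
      rw [mul_sum]
      refine sum_nbij' (fun v => ζ⁻¹ * v) (fun v => ζ * v) ?_ ?_ ?_ ?_ ?_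
      · intro v hv
        rw [hmem] at hv ⊢
        rw [mul_pow, inv_pow, hζ.pow_eq_one, hv]; simp
      · intro v hv
        rw [hmem] at hv ⊢
        rw [mul_pow, hζ.pow_eq_one, hv]; simp
      · intro v _; simp [hζ0]
      · intro v _; simp [hζ0]
      · intro v _; simp [hζ0, ← mul_pow]
    have h1 : (1 - ζ ^ n) * ∑ w ∈ Polynomial.nthRootsFinset r (1 : ℂ), w ^ n = 0 := by
      rw [sub_mul, one_mul, ← this, sub_self]
    refine (mul_eq_zero.mp h1).resolve_left (sub_ne_zero.mpr fun h' => h ?_)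
    exact hζ.dvd_of_pow_eq_one n h'.symm

/-- Detecting `r ∣ ∑ e i` by a sum over the `r`-th roots of unity turns `detect` into a sum of
products of geometric sums. -/
lemma mul_detect {r : ℕ} (hr : 0 < r) (v : Fin r → ℂ) :
    r * detect v = ∑ w ∈ Polynomial.nthRootsFinset r (1 : ℂ),
      ∏ i, ∑ j ∈ range r, (w * v i) ^ j := by
  have h1 : ∀ w : ℂ, ∏ i, ∑ j ∈ range r, (w * v i) ^ j
      = ∑ e : Fin r → Fin r, w ^ (∑ i, (e i : ℕ)) * ∏ i, v i ^ (e i : ℕ) := by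
    intro w
    simp_rw [← Fin.sum_univ_eq_sum_range (fun j => (w * v _) ^ j)]
    rw [prod_univ_sum, Fintype.piFinset_univ]
    refine sum_congr rfl fun e _ => ?_
    rw [← prod_pow_eq_pow_sum, ← prod_mul_distrib]
    exact prod_congr rfl fun i _ => mul_pow _ _ _
  simp_rw [h1]
  rw [sum_comm]
  simp_rw [← sum_mul, sum_nthRoots_pow hr]
  rw [detect, admissible, sum_filter, mul_sum]
  refine sum_congr rfl fun e _ => ?_
  split_ifs <;> simp

lemma geom_sum_root {r : ℕ} {z : ℂ} (hz : z ^ r = 1) (hz1 : z ≠ 1) :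
    ∑ j ∈ range r, z ^ j = 0 := by
  have := geom_sum_mul z r
  rw [hz, sub_self] at this
  exact (mul_eq_zero.mp this).resolve_right (sub_ne_zero.mpr hz1)

lemma card_admissible {r : ℕ} (hr : 0 < r) : (admissible r).card = r ^ (r - 1) := by
  have h := mul_detect hr (fun _ => 1)
  have hL : detect (fun _ : Fin r => (1 : ℂ)) = (admissible r).card := by simp [detect]
  rw [hL, sum_eq_single 1] at h
  · simp only [mul_one, one_pow, sum_const, card_range, prod_const, card_univ,
      Fintype.card_fin, nsmul_eq_mul] at h
    have h' : r * (admissible r).card = r ^ r := by exact_mod_cast h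
    refine Nat.eq_of_mul_eq_mul_left hr ?_
    rw [h', ← pow_succ', Nat.sub_add_cancel hr]
  · intro w hw hw1
    rw [Polynomial.mem_nthRootsFinset hr] at hw
    refine prod_eq_zero (mem_univ ⟨0, hr⟩) ?_
    simp only [mul_one]
    exact geom_sum_root hw hw1
  · intro h
    rw [Polynomial.mem_nthRootsFinset hr] at h
    simp at h

/-- The number of admissible vectors `e` with `e i = 0`, multiplied by `r`. It is the value of
`detect` at the vector with entry `0` at `i` and `1` elsewhere. -/
lemma mul_card_admissible_zero {r : ℕ} (hr : 0 < r) (i : Fin r) :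
    r * ((admissible r).filter fun e => (e i : ℕ) = 0).card = r ^ (r - 1) := by
  have h := mul_detect hr (fun j => if j = i then 0 else 1)
  have hL : detect (fun j : Fin r => if j = i then (0 : ℂ) else 1)
      = ((admissible r).filter fun e => (e i : ℕ) = 0).card := by
    rw [detect, card_filter, Nat.cast_sum]
    refine sum_congr rfl fun e _ => ?_
    rw [← mul_prod_erase _ _ (mem_univ i), prod_eq_one]
    · by_cases h0 : (e i : ℕ) = 0 <;> simp [h0]
    · intro j hj
      simp [ne_of_mem_erase hj]
  rw [hL, sum_eq_single 1] at h
  · have h2 : ∏ j : Fin r, ∑ k ∈ range r, (1 * if j = i then (0 : ℂ) else 1) ^ k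
        = (r : ℂ) ^ (r - 1) := by
      rw [← mul_prod_erase _ _ (mem_univ i), prod_congr rfl (g := fun _ => (r : ℂ))]
      · simp [hr, zero_pow_eq]
      · intro j hj
        simp [ne_of_mem_erase hj]
    rw [h2] at h
    exact_mod_cast h
  · intro w hw hw1
    rw [Polynomial.mem_nthRootsFinset hr] at hw
    have : ∃ j : Fin r, j ≠ i := by
      have : Nontrivial (Fin r) := by
        rw [Fin.nontrivial_iff_two_le]
        by_contra hlt
        obtain rfl : r = 1 := by omega
        exact hw1 (by simpa using hw)
      exact exists_ne i
    obtain ⟨j, hj⟩ := this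
    refine prod_eq_zero (mem_univ j) ?_
    rw [if_neg hj, mul_one]
    exact geom_sum_root hw hw1
  · intro h
    rw [Polynomial.mem_nthRootsFinset hr] at h
    simp at h

lemma sum_card_support {r : ℕ} (hr : 0 < r) :
    ∑ e ∈ admissible r, (univ.filter fun i => (e i : ℕ) ≠ 0).card = (r - 1) * r ^ (r - 1) := by
  have h1 : ∀ i : Fin r, r * ((admissible r).filter fun e => (e i : ℕ) ≠ 0).card + r ^ (r - 1)
      = r * r ^ (r - 1) := by
    intro i
    rw [← mul_card_admissible_zero hr i, ← mul_add, add_comm, card_filter_add_card_filter_not,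
      card_admissible hr, mul_card_admissible_zero hr i]
  have h2 : ∑ e ∈ admissible r, (univ.filter fun i => (e i : ℕ) ≠ 0).card
      = ∑ i : Fin r, ((admissible r).filter fun e => (e i : ℕ) ≠ 0).card := by
    simp_rw [card_filter]
    rw [sum_comm]
  have h3 := sum_congr (s₁ := (univ : Finset (Fin r))) rfl fun i _ => h1 i
  rw [sum_add_distrib, ← mul_sum, ← h2] at h3
  simp only [sum_const, card_univ, Fintype.card_fin, smul_eq_mul] at h3
  rw [← mul_add] at h3
  have h4 := Nat.eq_of_mul_eq_mul_left hr h3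
  rw [Nat.sub_mul, one_mul]
  omega

lemma norm_detect_le {r : ℕ} (hr : 0 < r) {v : Fin r → ℂ} (hv : ∀ i, ‖v i‖ ≤ 1) :
    ‖detect v‖ ≤ (r : ℝ) ^ (r - 1) := by
  rw [detect]
  refine (norm_sum_le _ _).trans ?_
  have : ((r : ℝ) ^ (r - 1)) = ∑ e ∈ admissible r, (1 : ℝ) := by
    simp [card_admissible hr]
  rw [this]
  refine sum_le_sum fun e _ => ?_
  rw [norm_prod]
  refine prod_le_one (fun _ _ => norm_nonneg _) fun i _ => ?_
  rw [norm_pow]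
  exact pow_le_one₀ (norm_nonneg _) (hv i)

lemma detect_eq_zero {r : ℕ} (hr : 0 < r) {v : Fin r → ℂ} (hv : ∀ i, v i ^ r = 1)
    {i j : Fin r} (hij : v i ≠ v j) : detect v = 0 := by
  have h := mul_detect hr v
  rw [sum_eq_zero] at h
  · exact (mul_eq_zero.mp h).resolve_left (by exact_mod_cast hr.ne')
  · intro w hw
    rw [Polynomial.mem_nthRootsFinset hr] at hw
    have hw0 : w ≠ 0 := by rintro rfl; simp [hr.ne'] at hw
    have : ∃ k, w * v k ≠ 1 := by
      by_contra! H
      exact hij (mul_left_cancel₀ hw0 ((H i).trans (H j).symm))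
    obtain ⟨k, hk⟩ := this
    exact prod_eq_zero (mem_univ k) (geom_sum_root (by rw [mul_pow, hw, hv, one_mul]) hk)

/-- If `v i = 0`, the geometric sum at `i` is `1`, and at most one root of unity `w` contributes to
`mul_detect`, so the bound of `norm_detect_le` improves by a factor `r`. -/
lemma mul_norm_detect_le {r : ℕ} (hr : 0 < r) {v : Fin r → ℂ} {i : Fin r} (hi : v i = 0)
    (hv : ∀ j, j ≠ i → v j ^ r = 1) : r * ‖detect v‖ ≤ (r : ℝ) ^ (r - 1) := by
  have h := congrArg norm (mul_detect hr v)
  rw [norm_mul, Complex.norm_natCast] at h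
  rw [h]
  obtain ⟨w₀, hw₀⟩ : ∃ w₀ : ℂ, ∀ w : ℂ, w ^ r = 1 → w ≠ w₀ →
      ∏ i, ∑ j ∈ range r, (w * v i) ^ j = 0 := by
    by_cases hr1 : r = 1
    · subst hr1
      exact ⟨1, fun w hw hw' => absurd (by simpa using hw) hw'⟩
    have : Nontrivial (Fin r) := by
      rw [Fin.nontrivial_iff_two_le]; omega
    obtain ⟨j, hj⟩ := exists_ne i
    have hvj : v j ≠ 0 := by
      intro h0
      have := hv j hj
      simp [h0, hr.ne'] at this
    refine ⟨(v j)⁻¹, fun w hw hw' => prod_eq_zero (mem_univ j) (geom_sum_root ?_ ?_)⟩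
    · rw [mul_pow, hw, hv j hj, one_mul]
    · intro h1
      exact hw' (eq_inv_of_mul_eq_one_left h1)
  have hle : ∀ w : ℂ, w ^ r = 1 →
      ‖∏ i, ∑ j ∈ range r, (w * v i) ^ j‖ ≤ (r : ℝ) ^ (r - 1) := by
    intro w hw
    rw [← mul_prod_erase _ _ (mem_univ i), hi, norm_mul, norm_prod]
    have h0 : ‖∑ j ∈ range r, (w * 0) ^ j‖ = 1 := by
      simp [hr, zero_pow_eq]
    rw [h0, one_mul]
    have hb : ∀ j ∈ univ.erase i, ‖∑ k ∈ range r, (w * v j) ^ k‖ ≤ r := by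
      intro j hj
      refine (norm_sum_le _ _).trans ?_
      have hn : ‖w * v j‖ = 1 := by
        refine Complex.norm_eq_one_of_pow_eq_one (n := r) ?_ hr.ne'
        rw [mul_pow, hw, hv j (ne_of_mem_erase hj), one_mul]
      rw [sum_congr rfl (g := fun _ => (1 : ℝ)) (fun k _ => by rw [norm_pow, hn, one_pow])]
      simp
    refine (prod_le_prod (fun _ _ => norm_nonneg _) hb).trans ?_
    simp
  by_cases hmem : w₀ ∈ Polynomial.nthRootsFinset r (1 : ℂ)
  · rw [sum_eq_single w₀]
    · exact hle w₀ ((Polynomial.mem_nthRootsFinset hr _).mp hmem)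
    · exact fun w hw hne => hw₀ w ((Polynomial.mem_nthRootsFinset hr _).mp hw) hne
    · exact fun h => absurd hmem h
  · rw [sum_eq_zero, norm_zero]
    · positivity
    · intro w hw
      exact hw₀ w ((Polynomial.mem_nthRootsFinset hr _).mp hw) fun h => hmem (h ▸ hw)

end Detection

/-! ### Counting the good elements -/

section Assembly
open Finset

variable {F : Type} [Field F] [Fintype F]

/-- The permutation criterion: if the `χ (z + a)`, for `z` an `r`-th root of unity in `F`, are
nonzero and all equal, the binomial permutes `F`. Here `u = (q - 1) / r`. -/
lemma bijective_binomial {χ : MulChar F ℂ} {r u : ℕ} (hr : orderOf χ = r)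
    (hu : r * u = Fintype.card F - 1) {a : F}
    (hne : ∀ z : F, z ^ r = 1 → z + a ≠ 0)
    (heq : ∀ z w : F, z ^ r = 1 → w ^ r = 1 → χ (z + a) = χ (w + a))
    {n k : ℕ} (hn : 0 < n) (hnq : Nat.gcd n (Fintype.card F - 1) = 1)
    (hkq : Nat.gcd k (Fintype.card F - 1) = u) :
    Function.Bijective (fun x : F => x ^ n * (x ^ k + a)) := by
  have hq : 0 < Fintype.card F - 1 := by have := Fintype.one_lt_card (α := F); omega
  have huk : u ∣ k := hkq ▸ Nat.gcd_dvd_left _ _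
  have hroot : ∀ x : F, x ≠ 0 → (x ^ k) ^ r = 1 := by
    intro x hx
    obtain ⟨m, rfl⟩ := huk
    rw [← pow_mul, show u * m * r = (Fintype.card F - 1) * m by rw [← hu]; ring, pow_mul,
      FiniteField.pow_card_sub_one_eq_one x hx, one_pow]
  have hzero : ∀ x : F, x ≠ 0 → x ^ n * (x ^ k + a) ≠ 0 := fun x hx =>
    mul_ne_zero (pow_ne_zero _ hx) (hne _ (hroot x hx))
  refine (Finite.injective_iff_bijective).mp fun x y hxy => ?_
  replace hxy : x ^ n * (x ^ k + a) = y ^ n * (y ^ k + a) := hxy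
  by_cases hx : x = 0
  · by_contra hne'
    refine hzero y (fun h => hne' (hx.trans h.symm)) ?_
    rw [← hxy, hx, zero_pow hn.ne', zero_mul]
  by_cases hy : y = 0
  · refine absurd ?_ (hzero x hx)
    rw [hxy, hy, zero_pow hn.ne', zero_mul]
  have hχ := congrArg χ hxy
  rw [map_mul, map_mul, heq _ _ (hroot x hx) (hroot y hy), map_pow, map_pow] at hχ
  have hχ0 : χ (y ^ k + a) ≠ 0 := by
    exact ((Ne.isUnit (hne _ (hroot y hy))).map χ).ne_zero
  have hχ' : χ x ^ n = χ y ^ n := mul_right_cancel₀ hχ0 hχ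
  have hr0 : 0 < r := hr ▸ orderOf_pos χ
  have hpr : ∀ z : F, z ≠ 0 → χ z ^ r = 1 := by
    intro z hz
    rw [← MulChar.pow_apply' _ hr0.ne', ← hr, pow_orderOf_eq_one, MulChar.one_apply (Ne.isUnit hz)]
  have hχy : χ y ≠ 0 := ((Ne.isUnit hy).map χ).ne_zero
  have hcop : Nat.gcd n r = 1 := by
    refine Nat.Coprime.coprime_dvd_right ⟨u, hu.symm⟩ hnq
  have hχe : χ x = χ y := by
    rw [← div_eq_one_iff_eq hχy]
    have h1 : (χ x / χ y) ^ n = 1 := by rw [div_pow, hχ', div_self (pow_ne_zero _ hχy)]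
    have h2 : (χ x / χ y) ^ r = 1 := by rw [div_pow, hpr x hx, hpr y hy, div_one]
    have := pow_gcd_eq_one.mpr ⟨h1, h2⟩
    rwa [hcop, pow_one] at this
  have hpu := pow_eq_pow_of_mulChar_eq hr hu hx hy hχe
  have hpk : x ^ k = y ^ k := by
    obtain ⟨m, rfl⟩ := huk
    rw [pow_mul, pow_mul, hpu]
  rw [hpk] at hxy
  have hxn : x ^ n = y ^ n := mul_right_cancel₀ (hne _ (hroot y hy)) hxy
  rw [← div_eq_one_iff_eq hy]
  have h1 : (x / y) ^ n = 1 := by rw [div_pow, hxn, div_self (pow_ne_zero _ hy)]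
  have h2 : (x / y) ^ (Fintype.card F - 1) = 1 :=
    FiniteField.pow_card_sub_one_eq_one _ (div_ne_zero hx hy)
  have := pow_gcd_eq_one.mpr ⟨h1, h2⟩
  rwa [hnq, pow_one] at this

/-- The contribution of a nonzero admissible vector. The factors with `e i = 0` are trivial, so only
the roots in the support of `e` count in Weil's bound. -/
lemma norm_one_add_sum_prod_le {χ : MulChar F ℂ} {r : ℕ} (hr : orderOf χ = r)
    {ζ : Fin r → F} (hζ : Function.Injective ζ) {e : Fin r → Fin r} (he : e ∈ admissible r)
    (h0 : ∃ i, (e i : ℕ) ≠ 0) :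
    ‖1 + ∑ a : F, ∏ i, χ (ζ i + a) ^ (e i : ℕ)‖
      ≤ (((univ.filter fun i => (e i : ℕ) ≠ 0).card : ℝ) - 2) * √(Fintype.card F) := by
  classical
  have hsum : r ∣ ∑ i, (e i : ℕ) := (mem_filter.mp he).2
  set t := univ.filter fun i => (e i : ℕ) ≠ 0 with ht
  have hext : ∀ i, Function.extend ζ (fun i => (e i : ℕ)) 0 (ζ i) = e i := fun i =>
    hζ.extend_apply _ _ i
  have key := weil_bound_of_dvd_sum (χ := χ) (s := t.image ζ) ?_
    (Function.extend ζ (fun i => (e i : ℕ)) 0) ?_ ?_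
  · rw [card_image_of_injective _ hζ] at key
    convert key using 3
    rw [← Equiv.sum_comp (Equiv.neg F)]
    refine sum_congr rfl fun a _ => ?_
    rw [prod_image (fun i _ j _ h => hζ h), ht, prod_filter]
    refine prod_congr rfl fun i _ => ?_
    rw [hext, Equiv.neg_apply, ← sub_eq_add_neg]
    split_ifs with h
    · rfl
    · rw [not_not.mp h, pow_zero]
  · obtain ⟨i, hi⟩ := h0
    exact ⟨ζ i, mem_image_of_mem _ (by simpa [ht] using hi)⟩
  · intro β hβ
    obtain ⟨i, hi, rfl⟩ := mem_image.mp hβ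
    rw [hext, hr]
    exact Nat.not_dvd_of_pos_of_lt (Nat.pos_of_ne_zero (mem_filter.mp hi).2) (e i).2
  · rw [sum_image (fun i _ j _ h => hζ h), hr]
    simp_rw [hext]
    rwa [ht, sum_filter_ne_zero]

/-- Lower bound: the zero vector contributes `q`, and the other vectors contribute at most
`∑ (1 + (d - 2) √q)`, where `d` is the size of the support. -/
lemma le_norm_sum_detect {χ : MulChar F ℂ} {r : ℕ} (hr : orderOf χ = r)
    {ζ : Fin r → F} (hζ : Function.Injective ζ) :
    (Fintype.card F : ℝ) - ((r : ℝ) ^ (r - 1) - 1)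
        - (((r : ℝ) - 3) * (r : ℝ) ^ (r - 1) + 2) * √(Fintype.card F)
      ≤ ‖∑ a : F, detect fun i => χ (ζ i + a)‖ := by
  classical
  have hr0 : 0 < r := hr ▸ orderOf_pos χ
  set e₀ : Fin r → Fin r := fun _ => ⟨0, hr0⟩
  have he₀ : e₀ ∈ admissible r := by simp [admissible, e₀]
  have hnz : ∀ e ∈ (admissible r).erase e₀, ∃ i, (e i : ℕ) ≠ 0 := by
    intro e he
    by_contra! H
    exact ne_of_mem_erase he (funext fun i => Fin.ext (H i))
  have hS : ∑ a : F, detect (fun i => χ (ζ i + a))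
      = Fintype.card F + ∑ e ∈ (admissible r).erase e₀,
          ∑ a : F, ∏ i, χ (ζ i + a) ^ (e i : ℕ) := by
    simp only [detect]
    rw [sum_comm, ← add_sum_erase _ _ he₀]
    simp [e₀]
  have hb : ∀ e ∈ (admissible r).erase e₀, ‖∑ a : F, ∏ i, χ (ζ i + a) ^ (e i : ℕ)‖
      ≤ 1 + (((univ.filter fun i => (e i : ℕ) ≠ 0).card : ℝ) - 2) * √(Fintype.card F) := by
    intro e he
    have h1 := norm_one_add_sum_prod_le hr hζ (mem_of_mem_erase he) (hnz e he)
    have h2 := norm_sub_le (1 + ∑ a : F, ∏ i, χ (ζ i + a) ^ (e i : ℕ)) 1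
    rw [add_sub_cancel_left, norm_one] at h2
    linarith
  have hsum : ∑ e ∈ (admissible r).erase e₀,
      (1 + (((univ.filter fun i => (e i : ℕ) ≠ 0).card : ℝ) - 2) * √(Fintype.card F))
      = ((r : ℝ) ^ (r - 1) - 1)
        + (((r : ℝ) - 3) * (r : ℝ) ^ (r - 1) + 2) * √(Fintype.card F) := by
    have hc := sum_card_support hr0
    have hc' : ∑ e ∈ admissible r, ((univ.filter fun i => (e i : ℕ) ≠ 0).card : ℝ)
        = ((r : ℝ) - 1) * (r : ℝ) ^ (r - 1) := by
      have := congrArg (Nat.cast (R := ℝ)) hc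
      push_cast [Nat.cast_sub (show 1 ≤ r from hr0)] at this
      exact this
    have ha : ((admissible r).card : ℝ) = (r : ℝ) ^ (r - 1) := by
      exact_mod_cast card_admissible hr0
    have hE : ((univ.filter fun i => (e₀ i : ℕ) ≠ 0).card : ℝ) = 0 := by simp [e₀]
    have hall := add_sum_erase _
      (fun e : Fin r → Fin r => 1 + (((univ.filter fun i => (e i : ℕ) ≠ 0).card : ℝ) - 2)
        * √(Fintype.card F)) he₀
    simp only [hE] at hall
    have hA : ∑ e ∈ admissible r,
        (1 + (((univ.filter fun i => (e i : ℕ) ≠ 0).card : ℝ) - 2) * √(Fintype.card F))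
        = (r : ℝ) ^ (r - 1)
          + (((r : ℝ) - 1) * (r : ℝ) ^ (r - 1) - (r : ℝ) ^ (r - 1) * 2) * √(Fintype.card F) := by
      rw [sum_add_distrib, ← sum_mul, sum_sub_distrib, hc']
      simp only [sum_const, nsmul_eq_mul, ha, mul_one]
    rw [hA] at hall
    linarith
  have h3 : ‖∑ e ∈ (admissible r).erase e₀, ∑ a : F, ∏ i, χ (ζ i + a) ^ (e i : ℕ)‖ ≤ _ :=
    (norm_sum_le _ _).trans (sum_le_sum hb)
  rw [hsum] at h3
  rw [hS]
  have h4 := norm_sub_le ((Fintype.card F : ℂ) + ∑ e ∈ (admissible r).erase e₀,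
    ∑ a : F, ∏ i, χ (ζ i + a) ^ (e i : ℕ)) (∑ e ∈ (admissible r).erase e₀,
    ∑ a : F, ∏ i, χ (ζ i + a) ^ (e i : ℕ))
  rw [add_sub_cancel_right, Complex.norm_natCast] at h4
  linarith

open Classical in
/-- Upper bound: only the good `a`, and the `r` elements `-ζ i`, contribute, each of the latter at
most `r ^ (r - 1) / r`. -/
lemma norm_sum_detect_le {χ : MulChar F ℂ} {r : ℕ} (hr : orderOf χ = r)
    {ζ : Fin r → F} (hζ : Function.Injective ζ) :
    ‖∑ a : F, detect fun i => χ (ζ i + a)‖ ≤ (r : ℝ) ^ (r - 1) *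
      ((univ.filter fun a : F => (∀ i, ζ i + a ≠ 0) ∧
        ∀ i j, χ (ζ i + a) = χ (ζ j + a)).card + 1) := by
  have hr0 : 0 < r := hr ▸ orderOf_pos χ
  have hrR : (0 : ℝ) < r := by exact_mod_cast hr0
  have hpr : ∀ z : F, z ≠ 0 → χ z ^ r = 1 := by
    intro z hz
    rw [← MulChar.pow_apply' _ hr0.ne', ← hr, pow_orderOf_eq_one, MulChar.one_apply (Ne.isUnit hz)]
  set M : ℝ := (r : ℝ) ^ (r - 1) with hM
  have hM0 : 0 ≤ M := by positivity
  have hpt : ∀ a : F, ‖detect fun i => χ (ζ i + a)‖ ≤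
      (if (∀ i, ζ i + a ≠ 0) ∧ ∀ i j, χ (ζ i + a) = χ (ζ j + a) then M else 0)
        + (if a ∈ univ.image (fun i => -ζ i) then M / r else 0) := by
    intro a
    by_cases h0 : ∀ i, ζ i + a ≠ 0
    · have hB : a ∉ univ.image (fun i => -ζ i) := by
        intro h
        obtain ⟨i, -, hi⟩ := mem_image.mp h
        exact h0 i (by rw [← hi, add_neg_cancel])
      rw [if_neg hB, add_zero]
      split_ifs with h
      · exact norm_detect_le hr0 fun i => mulChar_norm_le_one χ _
      · have : ∃ i j, χ (ζ i + a) ≠ χ (ζ j + a) := by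
          by_contra! H
          exact h ⟨h0, H⟩
        obtain ⟨i, j, hij⟩ := this
        rw [detect_eq_zero hr0 (fun i => hpr _ (h0 i)) hij, norm_zero]
    · rw [if_neg (fun h => h0 h.1), zero_add]
      push Not at h0
      obtain ⟨i, hi⟩ := h0
      rw [if_pos (mem_image.mpr ⟨i, mem_univ _, (eq_neg_of_add_eq_zero_right hi).symm⟩),
        le_div_iff₀ hrR, mul_comm]
      refine mul_norm_detect_le hr0 (i := i) (by rw [hi]; exact MulChar.map_zero χ) fun j hj => ?_
      refine hpr _ fun h => hj (hζ ?_)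
      exact add_right_cancel (h.trans hi.symm)
  refine (norm_sum_le _ _).trans ((sum_le_sum fun a _ => hpt a).trans ?_)
  rw [sum_add_distrib, ← sum_filter, ← sum_filter, sum_const, sum_const, nsmul_eq_mul,
    nsmul_eq_mul, mul_add, mul_one, mul_comm M]
  have hc : (univ.filter fun a => a ∈ univ.image (fun i => -ζ i)).card = r := by
    rw [filter_univ_mem, card_image_of_injective _ (fun i j h => hζ (neg_injective h)), card_univ,
      Fintype.card_fin]
  rw [hc, mul_div_cancel₀ _ hrR.ne']

end Assembly

/-- Let `r ≥ 1` divide `q-1`. The number of `a ∈ F_q` such that for every `n, k > 0` with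
`gcd(n, q-1) = 1` and `gcd(k, q-1) = (q-1)/r` the polynomial `x^n (x^k + a)` permutes `F_q`
is at least `(q - 2√q + 1)/r^{r-1} - √q(r-3) - 2`. -/
theorem permutation_binomial_uniform_a_count (F : Type) [Field F] [Fintype F]
    (r : ℕ) (hr : 1 ≤ r) (hrdvd : r ∣ Fintype.card F - 1) :
    ((Fintype.card F : ℝ) - 2 * Real.sqrt (Fintype.card F) + 1) / (r : ℝ) ^ (r - 1)
        - Real.sqrt (Fintype.card F) * ((r : ℝ) - 3) - 2
      ≤ (Nat.card {a : F // ∀ n k : ℕ, 0 < n → 0 < k →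
          Nat.gcd n (Fintype.card F - 1) = 1 →
          Nat.gcd k (Fintype.card F - 1) = (Fintype.card F - 1) / r →
          Function.Bijective (fun x : F => x ^ n * (x ^ k + a))} : ℝ) := by
  classical
  have : NeZero r := ⟨by omega⟩
  obtain ⟨u, hu⟩ := hrdvd
  have hq : 0 < Fintype.card F - 1 := by have := Fintype.one_lt_card (α := F); omega
  obtain ⟨χ, hχ⟩ := MulChar.exists_mulChar_orderOf F ⟨u, hu⟩
    (Complex.isPrimitiveRoot_exp r (by omega))
  obtain ⟨g, hg⟩ := IsCyclic.exists_generator (α := Fˣ)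
  have hgo : IsPrimitiveRoot (g : F) (Fintype.card F - 1) := by
    rw [IsPrimitiveRoot.coe_units_iff]
    have h := orderOf_eq_card_of_forall_mem_zpowers hg
    rw [Nat.card_eq_fintype_card, Fintype.card_units] at h
    exact h ▸ IsPrimitiveRoot.orderOf g
  -- `ζ` lists the `r`-th roots of unity of `F`, as powers of `g ^ u`.
  have hz : IsPrimitiveRoot ((g : F) ^ u) r := hgo.pow hq (by rw [hu, mul_comm])
  set ζ : Fin r → F := fun i => ((g : F) ^ u) ^ (i : ℕ) with hζdef
  have hζ : Function.Injective ζ := fun i j h => Fin.ext (hz.pow_inj i.2 j.2 h)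
  have hsurj : ∀ z : F, z ^ r = 1 → ∃ i, ζ i = z := by
    intro z hz1
    obtain ⟨i, hi, h⟩ := hz.eq_pow_of_pow_eq_one hz1
    exact ⟨⟨i, hi⟩, h⟩
  have h1 := (le_norm_sum_detect hχ hζ).trans (norm_sum_detect_le hχ hζ)
  set G := Finset.univ.filter fun a : F => (∀ i, ζ i + a ≠ 0) ∧ ∀ i j, χ (ζ i + a) = χ (ζ j + a) with hG
  have hcard : G.card ≤ Nat.card {a : F // ∀ n k : ℕ, 0 < n → 0 < k →
          Nat.gcd n (Fintype.card F - 1) = 1 →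
          Nat.gcd k (Fintype.card F - 1) = (Fintype.card F - 1) / r →
          Function.Bijective (fun x : F => x ^ n * (x ^ k + a))} := by
    rw [Nat.card_eq_fintype_card, Fintype.card_subtype]
    refine Finset.card_le_card fun a ha => ?_
    obtain ⟨ha0, haχ⟩ := (Finset.mem_filter.mp ha).2
    refine Finset.mem_filter.mpr ⟨Finset.mem_univ _, fun n k hn _ hnq hkq => ?_⟩
    refine bijective_binomial hχ hu.symm ?_ ?_ hn hnq ?_
    · intro z hz1
      obtain ⟨i, rfl⟩ := hsurj z hz1
      exact ha0 i
    · intro z w hz1 hw1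
      obtain ⟨i, rfl⟩ := hsurj z hz1
      obtain ⟨j, rfl⟩ := hsurj w hw1
      exact haχ i j
    · rw [hkq, hu, Nat.mul_div_cancel_left _ (by omega)]
  have hM : (0 : ℝ) < (r : ℝ) ^ (r - 1) := by positivity
  have hcard' : (G.card : ℝ) ≤ _ := Nat.cast_le.mpr hcard
  refine le_trans ?_ hcard'
  rw [sub_sub, sub_le_iff_le_add, div_le_iff₀ hM]
  linarith
end

section
/- Let p be a prime, let m > 1 be an integer, and let a be a nonzero element of the prime field F_p. If the polynomial x^m + a x permutes F_p, then p − 1 ≤ (m − 1) · gcd(m−1, p−1). -/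
/-!
Write `g = gcd (m - 1, p - 1)` and suppose `(m - 1) * g < p - 1`. Divide with remainder,
`p - 1 = m * j + c` with `c < m`, and put `N = j + c`. Then `0 < N < p - 1`, because `m ≤ p - 1`
(`p - 1` is a multiple of `g` exceeding `(m - 1) * g`) gives `j > 0`. As `f = x ^ m + a x`
permutes `F_p`, the power sum `∑ f(x) ^ N` equals `∑ x ^ N = 0`. Expanding by the binomial theorem,
`∑ f(x) ^ N = ∑_{k ≤ N} C(N, k) a ^ (N - k) ∑ x ^ (N + (m - 1) k)`, where the inner sum is `-1` if
`p - 1 ∣ N + (m - 1) k` and `0` otherwise (`sum_pow_eq_ite`). Since `N + (m - 1) j = p - 1`, the index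
`k = j` contributes, and by `eq_of_dvd` it is the only one that does. Hence
`C(N, j) a ^ (N - j) = 0` in `F_p`, which is absurd because `N < p` and `a ≠ 0`.
-/

/-- Power sums over `F_p`: the statement `FiniteField.sum_pow_units` with the zero element included,
which is harmless for a positive exponent. -/
lemma sum_pow_eq_ite (p : ℕ) [Fact p.Prime] (i : ℕ) (hi : 0 < i) :
    ∑ x : ZMod p, x ^ i = if p - 1 ∣ i then -1 else 0 := by
  have h := FiniteField.sum_pow_units (ZMod p) i
  rw [ZMod.card] at h
  rw [← h, ← Fintype.sum_subset (s := {x : ZMod p | x ≠ 0}.toFinset)]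
  · symm
    refine Finset.sum_bij (fun u _ => (u : ZMod p)) ?_ ?_ ?_ ?_
    · intro u _
      simp
    · intro u _ v _ huv
      exact Units.ext huv
    · intro x hx
      exact ⟨Units.mk0 x (by simpa using hx), Finset.mem_univ _, rfl⟩
    · intro u _
      rfl
  · intro x hx
    have hx0 : x ≠ 0 := by
      rintro rfl
      exact hx (zero_pow hi.ne')
    simpa using hx0

/-- Uniqueness of the contributing index: the hypothesis `hlt` forces `m ≤ n / g`, where
`g = gcd (m - 1, n)`, and `n / g` divides `k - j`, an integer of absolute value less than `n / g`. -/
lemma eq_of_dvd {n m j c k : ℕ} (hm : 1 < m) (hn : n = m * j + c) (hc : c < m)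
    (hlt : (m - 1) * Nat.gcd (m - 1) n < n) (hk : k ≤ j + c)
    (hd : n ∣ j + c + (m - 1) * k) : k = j := by
  obtain ⟨r, rfl⟩ : ∃ r, m = r + 1 := ⟨m - 1, by omega⟩
  rw [Nat.add_sub_cancel] at hlt hd
  have hr : 0 < r := by omega
  have hg : 0 < Nat.gcd r n := Nat.gcd_pos_of_pos_left _ hr
  obtain ⟨s, hs⟩ := Nat.gcd_dvd_right r n
  obtain ⟨t, ht⟩ := Nat.gcd_dvd_left r n
  have hgr : Nat.gcd r n ≤ r := Nat.gcd_le_left _ hr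
  have hco : Nat.Coprime s t := by
    have := Nat.coprime_div_gcd_div_gcd hg
    rw [Nat.div_eq_of_eq_mul_right hg ht, Nat.div_eq_of_eq_mul_right hg hs] at this
    exact this.symm
  generalize Nat.gcd r n = g at *
  have hsr : r < s := by
    by_contra! h
    have := Nat.mul_le_mul_left g h
    nlinarith
  have hjs : j < s := by
    by_contra! h
    have h1 := Nat.mul_le_mul hgr h
    nlinarith
  have hdvd : (s : ℤ) ∣ (k : ℤ) - j := by
    have h1 : (n : ℤ) ∣ r * ((k : ℤ) - j) := by
      have h2 : (n : ℤ) ∣ ((j + c + r * k : ℕ) : ℤ) := by exact_mod_cast hd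
      have h3 := dvd_sub h2 (dvd_refl (n : ℤ))
      have h4 : ((j + c + r * k : ℕ) : ℤ) - n = r * ((k : ℤ) - j) := by
        rw [hn]; push_cast; ring
      rwa [h4] at h3
    have h2 : (g : ℤ) * s ∣ g * (t * ((k : ℤ) - j)) := by
      rw [hs, ht] at h1
      push_cast at h1
      rwa [mul_assoc] at h1
    have h3 := (mul_dvd_mul_iff_left (by exact_mod_cast hg.ne' : (g : ℤ) ≠ 0)).1 h2
    exact (Nat.isCoprime_iff_coprime.2 hco).dvd_of_dvd_mul_left h3
  have := Int.eq_zero_of_abs_lt_dvd hdvd (abs_lt.2 ⟨by omega, by omega⟩)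
  omega

/-- Wan: if `x^m + a x` permutes the prime field `F_p` (with `m > 1`, `a ≠ 0`), then
`p - 1 ≤ (m - 1) · gcd(m-1, p-1)`. -/
theorem permutation_binomial_Wan (p : ℕ) (hp : p.Prime) (m : ℕ) (hm : 1 < m)
    (a : ZMod p) (ha : a ≠ 0)
    (hperm : Function.Bijective (fun x : ZMod p => x ^ m + a * x)) :
    p - 1 ≤ (m - 1) * Nat.gcd (m - 1) (p - 1) := by
  have : Fact p.Prime := ⟨hp⟩
  by_contra! hlt
  obtain ⟨j, c, hn, hc⟩ : ∃ j c, p - 1 = m * j + c ∧ c < m :=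
    ⟨(p - 1) / m, (p - 1) % m, (Nat.div_add_mod _ _).symm, Nat.mod_lt _ (by omega)⟩
  have hmp : m ≤ p - 1 := by
    have : 0 < Nat.gcd (m - 1) (p - 1) := Nat.gcd_pos_of_pos_left _ (by omega)
    have := Nat.le_mul_of_pos_right (m - 1) this
    omega
  have hj : 0 < j := by
    rcases Nat.eq_zero_or_pos j with rfl | h
    · omega
    · exact h
  have hNlt : j + c < p - 1 := by nlinarith
  have hsum : ∑ x : ZMod p, (x ^ m + a * x) ^ (j + c) = 0 := by
    rw [hperm.sum_comp (fun y : ZMod p => y ^ (j + c))]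
    exact FiniteField.sum_pow_lt_card_sub_one _ _ (by rwa [ZMod.card])
  have hterm : ∀ k ∈ Finset.range (j + c + 1),
      ∑ x : ZMod p, (x ^ m) ^ k * (a * x) ^ (j + c - k) * ((j + c).choose k : ZMod p)
        = if k = j then -(a ^ (j + c - k) * ((j + c).choose k : ZMod p)) else 0 := by
    intro k hk
    have hk' : k ≤ j + c := by simpa [Nat.lt_succ_iff] using hk
    have hexp : m * k + (j + c - k) = j + c + (m - 1) * k := by
      obtain ⟨r, rfl⟩ : ∃ r, m = r + 1 := ⟨m - 1, by omega⟩
      rw [Nat.add_sub_cancel, add_mul]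
      omega
    have hx : ∀ x : ZMod p, (x ^ m) ^ k * (a * x) ^ (j + c - k) * ((j + c).choose k : ZMod p)
        = a ^ (j + c - k) * ((j + c).choose k : ZMod p) * x ^ (j + c + (m - 1) * k) := by
      intro x
      rw [← hexp, pow_add, pow_mul, mul_pow]
      ring
    simp_rw [hx]
    rw [← Finset.mul_sum, sum_pow_eq_ite p _ (by omega)]
    have hiff : p - 1 ∣ j + c + (m - 1) * k ↔ k = j := by
      refine ⟨eq_of_dvd hm hn hc hlt hk', ?_⟩
      rintro rfl
      rw [← hexp, Nat.add_sub_cancel_left, ← hn]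
    simp only [hiff]
    split_ifs <;> simp
  simp_rw [add_pow] at hsum
  rw [Finset.sum_comm, Finset.sum_congr rfl hterm, Finset.sum_ite_eq',
    if_pos (Finset.mem_range.2 (by omega)), neg_eq_zero, mul_eq_zero] at hsum
  rcases hsum with h | h
  · exact pow_ne_zero _ ha h
  · rw [ZMod.natCast_eq_zero_iff] at h
    have hdf : p ∣ (j + c).factorial := by
      rw [← Nat.choose_mul_factorial_mul_factorial (Nat.le_add_right j c), mul_assoc]
      exact h.mul_right _
    have := (hp.dvd_factorial).1 hdf
    omega
end
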